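/- (Weyl's inequality for exponential sums over integers and primes.) Let α > 0, k ∈ ℕ, and let Γ ⊆ ℕ_0^k∖{0} be a nonempty finite set; let k', k'' ∈ {0,…,k} with k' + k'' = k. Let Ω' ⊆ Ω ⊆ B(0,N) ⊂ ℝ^k be convex sets and φ : Ω ∩ ℤ^k → ℂ. There exists β_α > 0 such that for every β > β_α the following holds: if there is a multi-index γ_0 ∈ Γ and coprime integers a, q with 1 ≤ a ≤ q, (log N)^β ≤ q ≤ N^{|γ_0|}(log N)^{−β}, and |ξ_{γ_0} − a/q| ≤ 1/q², then | Σ_{(n,p)∈ℤ^{k'}×(±ℙ)^{k''}} e(ξ·𝒬(n,p)) φ(n,p) 𝟙_{Ω∖Ω'}(n,p) | ≲ N^k (log N)^{−α} ‖φ‖_{L^∞(Ω∖Ω')} + N^k sup_{x,y∈Ω∖Ω', |x−y| ≤ N(log N)^{−α}} |φ(x) − φ(y)|, with implicit constant independent of φ, ξ, the sets Ω, Ω', and the numbers a, q, N. -/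

import Mathlib

open MeasureTheory
open scoped ENNReal NNReal

noncomputable section

/-- Embedding of `ℤ^k` into Euclidean space `ℝ^k`. -/
def zEmbed {k : ℕ} (v : Fin k → ℤ) : EuclideanSpace ℝ (Fin k) :=
  WithLp.toLp 2 (fun i => (v i : ℝ))

/-- The indicator that each of the last `k''` coordinates of `v ∈ ℤ^k` is a positive or a
negative prime number. -/
def primeInd {k : ℕ} (k' : ℕ) (v : Fin k → ℤ) : ℝ :=
  Set.indicator {w : Fin k → ℤ | ∀ i : Fin k, k' ≤ (i : ℕ) → Prime (w i)} (fun _ => 1) v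

/-- `e(x) = e^{2πix}`. -/
def eC (x : ℝ) : ℂ := Complex.exp (2 * Real.pi * Complex.I * x)

/-- The pairing `ξ · 𝒬(v) = ∑_{γ ∈ Γ} ξ_γ v^γ` of a frequency `ξ ∈ ℝ^Γ` with the canonical
polynomial mapping `𝒬(v) = (v^γ : γ ∈ Γ)`, for `v ∈ ℤ^k`. -/
def qPair {k : ℕ} (Γ : Finset (Fin k → ℕ)) (ξ : (Fin k → ℕ) → ℝ) (v : Fin k → ℤ) : ℝ :=
  ∑ γ ∈ Γ, ξ γ * ∏ i, ((v i : ℝ)) ^ (γ i)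

end


section

/-- Distance to the nearest integer. -/
noncomputable def nn (x : ℝ) : ℝ := |x - round x|

lemma nn_nonneg (x : ℝ) : 0 ≤ nn x := abs_nonneg _

lemma nn_le (x : ℝ) (b : ℤ) : nn x ≤ |x - b| := round_le x b

lemma nn_le_half (x : ℝ) : nn x ≤ 1 / 2 := abs_sub_round x

lemma nn_le_abs (x : ℝ) : nn x ≤ |x| := by simpa using nn_le x 0

lemma nn_zero : nn 0 = 0 := by simp [nn]

lemma nn_add (x y : ℝ) : nn (x + y) ≤ nn x + nn y := by
  refine (nn_le (x + y) (round x + round y)).trans ?_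
  push_cast
  have : x + y - (round x + round y : ℝ) = (x - round x) + (y - round y) := by ring
  rw [this]
  exact abs_add_le _ _

lemma nn_neg (x : ℝ) : nn (-x) ≤ nn x := by
  refine (nn_le (-x) (-round x)).trans ?_
  push_cast
  rw [← abs_neg]
  unfold nn
  apply le_of_eq
  congr 1
  ring

lemma nn_sub (x y : ℝ) : nn (x - y) ≤ nn x + nn y := by
  rw [sub_eq_add_neg]
  exact (nn_add x (-y)).trans (by linarith [nn_neg y])

lemma nn_int_mul (n : ℤ) (x : ℝ) : nn (n * x) ≤ |(n : ℝ)| * nn x := by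
  refine (nn_le _ (n * round x)).trans ?_
  push_cast
  rw [← mul_sub, abs_mul]
  rfl

lemma nn_nat_mul (n : ℕ) (x : ℝ) : nn (n * x) ≤ n * nn x := by
  have := nn_int_mul n x
  simpa using this

lemma nn_add_int (x : ℝ) (b : ℤ) : nn (x + b) = nn x := by
  unfold nn
  rw [round_add_intCast]
  push_cast
  congr 1
  ring

lemma nn_sum {ι : Type*} (s : Finset ι) (f : ι → ℝ) : nn (∑ i ∈ s, f i) ≤ ∑ i ∈ s, nn (f i) := by
  classical
  induction s using Finset.induction_on with
  | empty => simp [nn_zero]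
  | insert a s ha ih =>
    rw [Finset.sum_insert ha, Finset.sum_insert ha]
    exact (nn_add _ _).trans (by linarith)

lemma nn_eq_abs {x : ℝ} (hx : |x| ≤ 1 / 2) : nn x = |x| := by
  apply le_antisymm (nn_le_abs x)
  unfold nn
  by_cases h : round x = 0
  · simp [h]
  · have h1 : (1 : ℝ) ≤ |(round x : ℝ)| := by
      have := Int.one_le_abs h
      exact_mod_cast this
    have h2 := abs_sub_abs_le_abs_sub (round x : ℝ) x
    rw [abs_sub_comm x]
    linarith

lemma eC_add (x y : ℝ) : eC (x + y) = eC x * eC y := by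
  unfold eC
  rw [← Complex.exp_add]
  push_cast
  congr 1
  ring

lemma norm_eC (x : ℝ) : ‖eC x‖ = 1 := by
  unfold eC
  rw [show (2 * Real.pi * Complex.I * x : ℂ) = ((2 * Real.pi * x : ℝ) : ℂ) * Complex.I by
    push_cast; ring]
  exact Complex.norm_exp_ofReal_mul_I _

lemma eC_int (b : ℤ) : eC b = 1 := by
  unfold eC
  rw [show (2 * Real.pi * Complex.I * ((b : ℝ) : ℂ) : ℂ) = b * (2 * Real.pi * Complex.I) by
    push_cast; ring]
  exact Complex.exp_int_mul_two_pi_mul_I b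

lemma eC_zero : eC 0 = 1 := by simpa using eC_int 0

lemma eC_neg (x : ℝ) : eC (-x) = (starRingEnd ℂ) (eC x) := by
  have h1 : eC (-x) * eC x = 1 := by rw [← eC_add]; simp [eC_zero]
  have h2 : (starRingEnd ℂ) (eC x) * eC x = 1 := by
    rw [mul_comm, Complex.mul_conj, Complex.normSq_eq_norm_sq, norm_eC]; simp
  have h3 : eC x ≠ 0 := by
    intro h; simpa [h] using norm_eC x
  exact mul_right_cancel₀ h3 (h1.trans h2.symm)

lemma eC_nat_mul (n : ℕ) (x : ℝ) : eC (n * x) = eC x ^ n := by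
  unfold eC
  rw [← Complex.exp_nat_mul]
  push_cast
  congr 1
  ring

lemma eC_round (x : ℝ) : eC x = eC (x - round x) := by
  conv_lhs => rw [show x = (x - round x) + ((round x : ℤ) : ℝ) by ring]
  rw [eC_add, eC_int, mul_one]

lemma norm_eC_sub_one (x : ℝ) : ‖eC x - 1‖ = 2 * |Real.sin (Real.pi * x)| := by
  have := Complex.norm_exp_I_mul_ofReal_sub_one (2 * Real.pi * x)
  unfold eC
  rw [show (2 * Real.pi * Complex.I * x : ℂ) = Complex.I * ((2 * Real.pi * x : ℝ) : ℂ) by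
    push_cast; ring, this]
  rw [Real.norm_eq_abs, abs_mul]
  simp
  congr 2
  ring

lemma norm_eC_sub_one_le (x : ℝ) : ‖eC x - 1‖ ≤ 7 * nn x := by
  rw [eC_round, norm_eC_sub_one]
  have h1 := Real.abs_sin_le_abs (x := Real.pi * (x - round x))
  rw [abs_mul, abs_of_pos Real.pi_pos] at h1
  have h2 : Real.pi < 3.5 := by linarith [Real.pi_lt_d2]
  have h3 := nn_nonneg x
  unfold nn at *
  nlinarith

lemma norm_eC_sub_one_ge (x : ℝ) : 4 * nn x ≤ ‖eC x - 1‖ := by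
  rw [eC_round, norm_eC_sub_one]
  set y := x - round x with hy
  have hy2 : |y| ≤ 1 / 2 := abs_sub_round x
  have h1 := Real.mul_le_sin (x := Real.pi * |y|) (by positivity)
    (by nlinarith [Real.pi_pos])
  have h2 : |Real.sin (Real.pi * y)| = Real.sin (Real.pi * |y|) := by
    have h0 : 0 ≤ Real.sin (Real.pi * |y|) := by
      refine le_trans ?_ h1
      positivity
    rcases abs_cases y with ⟨h, _⟩ | ⟨h, _⟩
    · rw [h] at h0 ⊢; exact abs_of_nonneg h0
    · rw [h] at h0 ⊢
      rw [mul_neg, Real.sin_neg] at h0 ⊢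
      exact abs_of_nonpos (by linarith)
  rw [h2]
  have h3 : 2 / Real.pi * (Real.pi * |y|) = 2 * |y| := by
    field_simp
  have : nn x = |y| := rfl
  rw [this]; linarith

lemma geom_bound (θ : ℝ) (S : ℕ) : ‖∑ s ∈ Finset.range S, eC (θ * s)‖ * nn θ ≤ 1 := by
  have h1 : ∑ s ∈ Finset.range S, eC (θ * s) = ∑ s ∈ Finset.range S, eC θ ^ s := by
    apply Finset.sum_congr rfl
    intro s _
    rw [mul_comm, eC_nat_mul]
  have h2 := geom_sum_mul (eC θ) S
  have h3 : ‖(∑ s ∈ Finset.range S, eC θ ^ s)‖ * ‖eC θ - 1‖ ≤ 2 := by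
    rw [← norm_mul, h2]
    refine (norm_sub_le _ _).trans ?_
    rw [norm_pow, norm_eC]; norm_num
  rw [h1]
  have h4 := norm_eC_sub_one_ge θ
  have h5 := norm_nonneg (∑ s ∈ Finset.range S, eC θ ^ s)
  nlinarith

/-- Pigeonhole for bounded natural-valued functions. -/
lemma pigeon_nat {ι : Type*} (T : Finset ι) (hT : T.Nonempty) (f : ι → ℕ) (B : ℝ)
    (hf : ∀ t ∈ T, 1 ≤ f t ∧ (f t : ℝ) ≤ B) :
    ∃ q : ℕ, 1 ≤ q ∧ (q : ℝ) ≤ B ∧ (T.card : ℝ) ≤ B * (T.filter (fun t => f t = q)).card := by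
  classical
  obtain ⟨t0, ht0⟩ := hT
  have hB : 1 ≤ B := le_trans (by exact_mod_cast (hf t0 ht0).1) (hf t0 ht0).2
  have hmaps : ∀ t ∈ T, f t ∈ Finset.Icc 1 ⌊B⌋₊ := by
    intro t ht
    rw [Finset.mem_Icc]
    exact ⟨(hf t ht).1, Nat.le_floor (hf t ht).2⟩
  have hcard : ((Finset.Icc 1 ⌊B⌋₊).card : ℝ) ≤ B := by
    simp only [Nat.card_Icc, Nat.add_sub_cancel]
    exact Nat.floor_le (by linarith)
  obtain ⟨q, hq, hq2⟩ := Finset.exists_le_card_fiber_of_nsmul_le_card_of_maps_to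
    (b := (T.card : ℝ) / B) hmaps ⟨f t0, hmaps t0 ht0⟩ (by
      rw [nsmul_eq_mul, mul_div_assoc', div_le_iff₀ (by linarith)]
      nlinarith [(Nat.cast_nonneg T.card : (0:ℝ) ≤ T.card)])
  rw [Finset.mem_Icc] at hq
  refine ⟨q, hq.1, ?_, ?_⟩
  · exact le_trans (by exact_mod_cast hq.2) (Nat.floor_le (by linarith))
  · rw [div_le_iff₀ (by linarith)] at hq2
    linarith

/-- Popularity principle. -/
lemma popular {ι : Type*} (T : Finset ι) (f : ι → ℝ) (M K S : ℝ) (hK : (T.card : ℝ) ≤ K)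
    (hK0 : 0 < K) (hS0 : 0 ≤ S)
    (hM : ∀ t ∈ T, f t ≤ M) (hS : S ≤ ∑ t ∈ T, f t) :
    S ≤ 2 * M * (T.filter (fun t => S ≤ 2 * K * f t)).card := by
  classical
  rw [← Finset.sum_filter_add_sum_filter_not T (fun t => S ≤ 2 * K * f t)] at hS
  have h1 : ∑ t ∈ T.filter (fun t => S ≤ 2 * K * f t), f t
      ≤ (T.filter (fun t => S ≤ 2 * K * f t)).card * M := by
    rw [← nsmul_eq_mul]
    apply Finset.sum_le_card_nsmul
    intro t ht
    exact hM t (Finset.mem_filter.1 ht).1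
  have h2 : ∑ t ∈ T.filter (fun t => ¬ S ≤ 2 * K * f t), f t
      ≤ (T.filter (fun t => ¬ S ≤ 2 * K * f t)).card * (S / (2 * K)) := by
    rw [← nsmul_eq_mul]
    apply Finset.sum_le_card_nsmul
    intro t ht
    have := (Finset.mem_filter.1 ht).2
    rw [le_div_iff₀ (by positivity)]
    linarith
  have h3 : ((T.filter (fun t => ¬ S ≤ 2 * K * f t)).card : ℝ) ≤ K :=
    le_trans (by exact_mod_cast Finset.card_filter_le _ _) hK
  have h4 : ((T.filter (fun t => ¬ S ≤ 2 * K * f t)).card : ℝ) * (S / (2 * K)) ≤ S / 2 := by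
    calc _ ≤ K * (S / (2 * K)) := by gcongr
      _ = S / 2 := by field_simp
  linarith

end

section

open Polynomial in
/-- Polynomial Vinogradov lemma, as a predicate in the degree and the constant. -/
def VinoS (d C : ℕ) : Prop :=
  ∀ R : ℝ, 2 ≤ R → ∀ N : ℕ, R ^ C ≤ N → ∀ P : ℝ[X], P.natDegree ≤ d →
    ∀ ε : ℝ, 0 ≤ ε → ε * R ^ C ≤ 1 → ∀ H : Finset ℤ, (∀ h ∈ H, |h| ≤ (N : ℤ)) →
      (N : ℝ) ≤ R * H.card → (∀ h ∈ H, nn (P.eval (h : ℝ)) ≤ ε) →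
      ∃ q : ℕ, 1 ≤ q ∧ (q : ℝ) ≤ R ^ C ∧ ∀ i, nn (q * P.coeff i) ≤ ε * R ^ C / (N : ℝ) ^ i

lemma pow_chain {R : ℝ} (hR : 2 ≤ R) {a b : ℕ} (h : a ≤ b) : R ^ a ≤ R ^ b :=
  pow_le_pow_right₀ (by linarith) h

lemma const_le_pow {R : ℝ} (hR : 2 ≤ R) (a : ℕ) : (2 : ℝ) ^ a ≤ R ^ a :=
  pow_le_pow_left₀ (by norm_num) hR a

lemma const_mul_le {R : ℝ} (hR : 2 ≤ R) (c : ℝ) (a b e : ℕ) (hc : c ≤ 2 ^ e) (h : e + a ≤ b) :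
    c * R ^ a ≤ R ^ b := by
  have h1 : c ≤ R ^ e := hc.trans (const_le_pow hR e)
  have h0 : 0 ≤ R ^ a := by positivity
  calc c * R ^ a ≤ R ^ e * R ^ a := by gcongr
    _ = R ^ (e + a) := by rw [pow_add]
    _ ≤ R ^ b := pow_chain hR h

lemma affine_pair (R : ℝ) (hR : 2 ≤ R) (N : ℕ) (hN : 4 * R < N) (H : Finset ℤ)
    (hH : ∀ h ∈ H, |h| ≤ (N : ℤ)) (hc : (N : ℝ) ≤ R * H.card) :
    ∃ q : ℕ, 1 ≤ q ∧ (q : ℝ) ≤ 5 * R ∧ ∃ h ∈ H, ∃ h' ∈ H, h' = h + q := by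
  set B : ℕ := ⌈4 * R⌉₊ with hB
  have hB1 : 4 * R ≤ B := Nat.le_ceil _
  have hB2 : (B : ℝ) < 4 * R + 1 := Nat.ceil_lt_add_one (by linarith)
  have hBpos : 0 < B := by
    have : (0 : ℝ) < B := by linarith
    exact_mod_cast this
  set m : ℤ := (N : ℤ) / B with hm
  have hBz : (0 : ℤ) < B := by exact_mod_cast hBpos
  have hm1 : (N : ℤ) < (m + 1) * B := Int.lt_ediv_add_one_mul_self _ hBz
  have hm0 : 0 ≤ m := by positivity
  have hm2 : m * B ≤ N := Int.ediv_mul_le _ (by omega)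
  have hmaps : ∀ h ∈ H, h / (B : ℤ) ∈ Finset.Icc (-(m + 1)) m := by
    intro h hh
    have := abs_le.1 (hH h hh)
    rw [Finset.mem_Icc]
    constructor
    · rw [Int.le_ediv_iff_mul_le hBz]; linarith
    · rw [← Int.lt_add_one_iff, Int.ediv_lt_iff_lt_mul hBz]; linarith
  have hlt : (Finset.Icc (-(m + 1)) m).card < H.card := by
    rw [Int.card_Icc]
    have h1 : ((m + 1 - -(m + 1)).toNat : ℝ) = 2 * (m : ℝ) + 2 := by
      have : ((m + 1 - -(m + 1)).toNat : ℤ) = 2 * m + 2 := by omega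
      exact_mod_cast this
    have h2 : (m : ℝ) * B ≤ N := by exact_mod_cast hm2
    have h2' : (m : ℝ) * (4 * R) ≤ N := by
      refine le_trans ?_ h2
      have : (0 : ℝ) ≤ m := by exact_mod_cast hm0
      gcongr
    have : ((m + 1 - -(m + 1)).toNat : ℝ) < H.card := by
      rw [h1]
      by_contra hcon
      push Not at hcon
      nlinarith
    exact_mod_cast this
  obtain ⟨x, hx, y, hy, hxy, he⟩ := Finset.exists_ne_map_eq_of_card_lt_of_maps_to hlt hmaps
  have key : ∀ x ∈ H, ∀ y ∈ H, x < y → x / (B : ℤ) = y / (B : ℤ) →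
      ∃ q : ℕ, 1 ≤ q ∧ (q : ℝ) ≤ 5 * R ∧ ∃ h ∈ H, ∃ h' ∈ H, h' = h + q := by
    intro x hx y hy hlt he
    refine ⟨(y - x).toNat, by omega, ?_, x, hx, y, hy, by omega⟩
    have h1 := Int.ediv_mul_le x (show (B : ℤ) ≠ 0 by omega)
    have h2 := Int.lt_ediv_add_one_mul_self y hBz
    rw [← he] at h2
    have h3 : ((y - x).toNat : ℤ) ≤ B := by
      rw [Int.toNat_of_nonneg (by omega)]; linarith
    have h4 : ((y - x).toNat : ℝ) ≤ B := by exact_mod_cast h3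
    linarith
  rcases lt_or_gt_of_ne hxy with h | h
  · exact key x hx y hy h he
  · exact key y hy x hx h he.symm

lemma affine_class (R : ℝ) (hR : 2 ≤ R) (N : ℕ) (H : Finset ℤ)
    (hH : ∀ h ∈ H, |h| ≤ (N : ℤ)) (hc : (N : ℝ) ≤ R * H.card) (q l : ℕ) (hq : 1 ≤ q)
    (hl : 1 ≤ l) (hql : 2 * q * l ≤ N) :
    ∃ h ∈ H, ∃ u : ℕ, h + q * u ∈ H ∧ u < l ∧ (l : ℝ) ≤ 3 * R * (u + 1) := by
  classical
  have hqz : (0 : ℤ) < q := by exact_mod_cast hq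
  have hlz : (0 : ℤ) < l := by exact_mod_cast hl
  set m : ℤ := (N : ℤ) / (l * q) with hm
  have hlq : (0 : ℤ) < l * q := by positivity
  have hm1 : (N : ℤ) < (m + 1) * (l * q) := Int.lt_ediv_add_one_mul_self _ hlq
  have hm0 : 0 ≤ m := by positivity
  have hm2 : m * (l * q) ≤ N := Int.ediv_mul_le _ (by omega)
  have hmaps : ∀ h ∈ H, (h % (q : ℤ), h / (q : ℤ) / (l : ℤ)) ∈
      (Finset.Ico (0 : ℤ) q) ×ˢ (Finset.Icc (-(m + 1)) m) := by
    intro h hh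
    have := abs_le.1 (hH h hh)
    rw [Finset.mem_product, Finset.mem_Icc, Finset.mem_Ico]
    refine ⟨⟨Int.emod_nonneg _ (by omega), Int.emod_lt_of_pos _ hqz⟩, ?_, ?_⟩
    · rw [Int.le_ediv_iff_mul_le hlz, Int.le_ediv_iff_mul_le hqz]; linarith
    · rw [← Int.lt_add_one_iff, Int.ediv_lt_iff_lt_mul hlz, Int.ediv_lt_iff_lt_mul hqz]; linarith
  have hNpos : (0 : ℝ) < N := by
    have : 0 < N := lt_of_lt_of_le (by positivity) hql
    exact_mod_cast this
  have hlr : (0 : ℝ) < l := by exact_mod_cast hl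
  have hqr : (0 : ℝ) < q := by exact_mod_cast hq
  obtain ⟨y, hy, hy2⟩ := Finset.exists_le_card_fiber_of_nsmul_le_card_of_maps_to
    (b := (l : ℝ) / (3 * R)) hmaps
    ⟨(0, 0), by rw [Finset.mem_product, Finset.mem_Icc, Finset.mem_Ico]
                exact ⟨⟨le_refl _, hqz⟩, by dsimp; omega, by dsimp; omega⟩⟩ (by
      rw [nsmul_eq_mul, Finset.card_product, Int.card_Ico, Int.card_Icc]
      have h1 : ((m + 1 - -(m + 1)).toNat : ℝ) = 2 * (m : ℝ) + 2 := by
        have : ((m + 1 - -(m + 1)).toNat : ℤ) = 2 * m + 2 := by omega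
        exact_mod_cast this
      push_cast
      rw [h1]
      simp only [sub_zero, Int.toNat_natCast]
      have h2 : (m : ℝ) * (l * q) ≤ N := by exact_mod_cast hm2
      have h3 : 2 * (q : ℝ) * l ≤ N := by exact_mod_cast hql
      rw [mul_div_assoc', div_le_iff₀ (by positivity)]
      nlinarith)
  set F := H.filter (fun h => (h % (q : ℤ), h / (q : ℤ) / (l : ℤ)) = y) with hF
  have hFmem : ∀ h ∈ F, h ∈ H ∧ h % (q : ℤ) = y.1 ∧ h / (q : ℤ) / (l : ℤ) = y.2 := by
    intro h hh
    have := Finset.mem_filter.1 hh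
    refine ⟨this.1, ?_, ?_⟩
    · rw [← this.2]
    · rw [← this.2]
  set G := F.image (fun h => h / (q : ℤ)) with hG
  have hGc : G.card = F.card := by
    apply Finset.card_image_of_injOn
    intro a ha b hb hab
    have ha' := (hFmem a ha).2.1
    have hb' := (hFmem b hb).2.1
    simp only at hab
    rw [← Int.mul_ediv_add_emod a q, ← Int.mul_ediv_add_emod b q, hab, ha', hb']
  have hFpos : 0 < F.card := by
    have : (0 : ℝ) < F.card := lt_of_lt_of_le (by positivity) hy2
    exact_mod_cast this
  have hGne : G.Nonempty := by
    rw [← Finset.card_pos, hGc]; exact hFpos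
  obtain ⟨h1, hh1, hh1'⟩ := Finset.mem_image.1 (Finset.min'_mem G hGne)
  obtain ⟨h2, hh2, hh2'⟩ := Finset.mem_image.1 (Finset.max'_mem G hGne)
  have hle : G.min' hGne ≤ G.max' hGne := Finset.min'_le_max' _ _
  have hsub : G ⊆ Finset.Icc (G.min' hGne) (G.max' hGne) := by
    intro g hg
    rw [Finset.mem_Icc]
    exact ⟨Finset.min'_le _ _ hg, Finset.le_max' _ _ hg⟩
  have hcardG := Finset.card_le_card hsub
  rw [Int.card_Icc, hGc, ← hh1', ← hh2'] at hcardG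
  rw [← hh1', ← hh2'] at hle
  obtain ⟨a1, a2, a3⟩ := hFmem h1 hh1
  obtain ⟨b1, b2, b3⟩ := hFmem h2 hh2
  obtain ⟨u, hu⟩ := Int.eq_ofNat_of_zero_le (sub_nonneg.2 hle)
  refine ⟨h1, a1, u, ?_, ?_, ?_⟩
  · have : h1 + q * u = h2 := by
      rw [← Int.mul_ediv_add_emod h1 q, ← Int.mul_ediv_add_emod h2 q, a2, b2]
      have : h2 / (q : ℤ) = h1 / q + u := by linarith
      rw [this]; ring
    rw [this]; exact b1
  · have c1 := Int.ediv_mul_le (h1 / (q : ℤ)) (show (l : ℤ) ≠ 0 by omega)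
    have c2 := Int.lt_ediv_add_one_mul_self (h2 / (q : ℤ)) hlz
    rw [a3] at c1
    rw [b3] at c2
    have : (u : ℤ) < l := by rw [← hu]; linarith
    exact_mod_cast this
  · have d1 : F.card ≤ u + 1 := by
      have : h2 / (q : ℤ) + 1 - h1 / q = u + 1 := by linarith
      rw [this] at hcardG
      omega
    have d2 : (F.card : ℝ) ≤ u + 1 := by exact_mod_cast d1
    rw [div_le_iff₀ (by positivity)] at hy2
    nlinarith

lemma affine_vino (R : ℝ) (hR : 2 ≤ R) (N : ℕ) (hN : R ^ 12 ≤ N) (c θ ε : ℝ) (hε : 0 ≤ ε)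
    (hεR : ε * R ^ 12 ≤ 1) (H : Finset ℤ) (hH : ∀ h ∈ H, |h| ≤ (N : ℤ))
    (hc : (N : ℝ) ≤ R * H.card) (hnn : ∀ h ∈ H, nn (c + θ * h) ≤ ε) :
    ∃ q : ℕ, 1 ≤ q ∧ (q : ℝ) ≤ R ^ 12 ∧ nn (q * θ) ≤ ε * R ^ 12 / N ∧
      nn (q * c) ≤ ε * R ^ 12 := by
  have hRpos : 0 < R := by linarith
  have hbig : 2048 * R ≤ R ^ 12 := by
    simpa using const_mul_le hR 2048 1 12 11 (by norm_num) (by norm_num)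
  obtain ⟨q, hq1, hq2, g, hg, g', hg', hgg⟩ := affine_pair R hR N (by linarith) H hH hc
  have hdiff : ∀ h ∈ H, ∀ h' ∈ H, nn (θ * (h' - h)) ≤ 2 * ε := by
    intro h hh h' hh'
    have h1 := nn_sub (c + θ * h') (c + θ * h)
    have h2 : c + θ * h' - (c + θ * h) = θ * (h' - h) := by ring
    rw [h2] at h1
    linarith [hnn h hh, hnn h' hh']
  set η := q * θ - round (q * θ) with hη
  have hη1 : |η| ≤ 2 * ε := by
    have := hdiff g hg g' hg'
    rw [hgg] at this
    have h2 : θ * (((g + q : ℤ) : ℝ) - g) = q * θ := by push_cast; ring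
    rw [h2] at this
    exact this
  have hεR2 : 2048 * (R * ε) ≤ 1 := by nlinarith
  have key : ∀ l : ℕ, 6 * R ≤ l → 2 * q * l ≤ N → l * |η| ≤ 1 / 2 → l * |η| ≤ 12 * (R * ε) := by
    intro l hl1 hl2 hl3
    have hl0 : 1 ≤ l := by
      have : (1 : ℝ) ≤ l := by linarith
      exact_mod_cast this
    obtain ⟨h, hh, u, hu, hul, hlu⟩ := affine_class R hR N H hH hc q l hq1 hl0 hl2
    have h1 := hdiff h hh _ hu
    have h2 : θ * (((h + q * u : ℤ) : ℝ) - h) = u * η + ((u * round (q * θ) : ℤ) : ℝ) := by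
      rw [hη]; push_cast; ring
    rw [h2, nn_add_int] at h1
    have hul' : (u : ℝ) ≤ l := by exact_mod_cast hul.le
    have hu0 : (0 : ℝ) ≤ u := Nat.cast_nonneg u
    have h3 : |u * η| ≤ 1 / 2 := by
      rw [abs_mul, Nat.abs_cast]
      refine le_trans ?_ hl3
      gcongr
    rw [nn_eq_abs h3, abs_mul, Nat.abs_cast] at h1
    have h4 : (1 : ℝ) ≤ u := by
      by_contra hcon
      have : u = 0 := by
        by_contra h0
        exact hcon (by exact_mod_cast Nat.one_le_iff_ne_zero.2 h0)
      rw [this] at hlu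
      push_cast at hlu
      linarith
    have h5 : (l : ℝ) ≤ 6 * R * u := by nlinarith
    calc (l : ℝ) * |η| ≤ 6 * R * u * |η| := by gcongr
      _ = 6 * R * (u * |η|) := by ring
      _ ≤ 6 * R * (2 * ε) := by gcongr
      _ = _ := by ring
  have hall : ∀ l : ℕ, ⌈6 * R⌉₊ ≤ l → 2 * q * l ≤ N → l * |η| ≤ 1 / 2 := by
    intro l hl
    induction l, hl using Nat.le_induction with
    | base =>
      intro _
      have h1 : (⌈6 * R⌉₊ : ℝ) < 6 * R + 1 := Nat.ceil_lt_add_one (by linarith)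
      calc (⌈6 * R⌉₊ : ℝ) * |η| ≤ (7 * R) * (2 * ε) := by
            gcongr
            linarith
        _ ≤ 1 / 2 := by linarith
    | succ n hn ih =>
      intro h2
      have h3 : 2 * q * n ≤ N := le_trans (by gcongr; omega) h2
      have h4 := key n (le_trans (Nat.le_ceil _) (by exact_mod_cast hn)) h3 (ih h3)
      push_cast
      have h5 : |η| ≤ R * ε * 1 := by nlinarith
      linarith
  set l := N / (2 * q) with hl
  have hl1 : 2 * q * l ≤ N := Nat.mul_div_le N (2 * q)
  have hl2 : N < 2 * q * (l + 1) := by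
    have := Nat.lt_mul_div_succ N (show 0 < 2 * q by omega)
    simpa using this
  have hl2' : (N : ℝ) < 2 * q * (l + 1) := by exact_mod_cast hl2
  have hq0 : (1 : ℝ) ≤ q := by exact_mod_cast hq1
  have hR2 : 128 * R ^ 2 ≤ R ^ 12 := by
    exact const_mul_le hR 128 2 12 7 (by norm_num) (by norm_num)
  have hl3 : 6 * R + 1 ≤ l := by
    by_contra hcon
    push Not at hcon
    have : (N : ℝ) < 2 * (5 * R) * (6 * R + 1 + 1) := by
      refine lt_of_lt_of_le hl2' ?_
      gcongr
    nlinarith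
  have hl4 : ⌈6 * R⌉₊ ≤ l := by
    rw [Nat.ceil_le]; linarith
  have hfin := key l (by linarith) hl1 (hall l hl4 hl1)
  have hNpos : (0 : ℝ) < N := by
    refine lt_of_lt_of_le ?_ hN
    positivity
  have hη2 : |η| * N ≤ ε * R ^ 10 := by
    have h1 : (N : ℝ) ≤ 4 * q * l := by nlinarith
    have h2 : |η| * N ≤ 240 * R ^ 2 * ε := by
      calc |η| * N ≤ |η| * (4 * q * l) := by gcongr
        _ = 4 * q * (l * |η|) := by ring
        _ ≤ 4 * (5 * R) * (12 * (R * ε)) := by gcongr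
        _ = 240 * R ^ 2 * ε := by ring
    have h3 := const_mul_le hR 240 2 10 8 (by norm_num) (by norm_num)
    nlinarith
  have hpow : R ^ 10 ≤ R ^ 11 := pow_chain hR (by norm_num)
  have hpow12 : 2 * R ^ 11 ≤ R ^ 12 := const_mul_le hR 2 11 12 1 (by norm_num) (by norm_num)
  have hη3 : |η| ≤ ε * R ^ 10 / N := by rwa [le_div_iff₀ hNpos]
  refine ⟨q, hq1, by linarith, ?_, ?_⟩
  · refine le_trans hη3 ?_
    gcongr
    · linarith
    · norm_num
  · have e1 : q * c = q * (c + θ * g) - g * (q * θ) := by ring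
    rw [e1]
    refine (nn_sub _ _).trans ?_
    have e2 := nn_nat_mul q (c + θ * g)
    have e3 := nn_int_mul g (q * θ)
    have e4 : |(g : ℝ)| ≤ N := by exact_mod_cast hH g hg
    have e5 : |(g : ℝ)| * nn (q * θ) ≤ ε * R ^ 10 := by
      calc |(g : ℝ)| * nn (q * θ) ≤ N * |η| := by
            have : nn (q * θ) = |η| := rfl
            rw [this]; gcongr
        _ ≤ _ := by linarith
    have e6 : q * nn (c + θ * g) ≤ 5 * R * ε := by
      have := hnn g hg
      gcongr
      exact nn_nonneg _
    have e7 : 5 * R ≤ R ^ 11 := by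
      simpa using const_mul_le hR 5 1 11 3 (by norm_num) (by norm_num)
    nlinarith

end

section

open Polynomial

lemma natDegree_taylor_sub (P : ℝ[X]) (d : ℕ) (hP : P.natDegree ≤ d + 1) (t : ℝ) :
    (taylor t P - P).natDegree ≤ d := by
  rw [natDegree_le_iff_coeff_eq_zero]
  intro n hn
  rw [coeff_sub]
  rcases Nat.lt_or_ge (d + 1) n with h | h
  · rw [coeff_eq_zero_of_natDegree_lt (lt_of_le_of_lt hP h), coeff_eq_zero_of_natDegree_lt]
    · simp
    · rw [natDegree_taylor]; omega
  · have hn' : n = d + 1 := by omega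
    subst hn'
    rw [taylor_coeff]
    have h1 := natDegree_hasseDeriv_le P (d + 1)
    have h2 : (hasseDeriv (d + 1) P).natDegree ≤ 0 := by omega
    rw [eq_C_of_natDegree_le_zero h2, eval_C, hasseDeriv_coeff]
    simp

lemma taylor_sub_eval (P : ℝ[X]) (t x : ℝ) :
    (taylor t P - P).eval x = P.eval (x + t) - P.eval x := by
  rw [eval_sub, taylor_eval]

lemma taylor_sub_coeff_one (P : ℝ[X]) (t : ℝ) :
    (taylor t P - P).coeff 1 = (derivative P - C (P.coeff 1)).eval t := by
  rw [coeff_sub, taylor_coeff_one, eval_sub, eval_C]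

lemma deriv_sub_coeff (P : ℝ[X]) (i : ℕ) (hi : 1 ≤ i) :
    (derivative P - C (P.coeff 1)).coeff i = P.coeff (i + 1) * (i + 1) := by
  rw [coeff_sub, coeff_derivative, coeff_C, if_neg (by omega), sub_zero]

lemma deriv_sub_natDegree (P : ℝ[X]) (d : ℕ) (hP : P.natDegree ≤ d + 1) :
    (derivative P - C (P.coeff 1)).natDegree ≤ d := by
  refine (natDegree_sub_le _ _).trans ?_
  rw [natDegree_C]
  have := natDegree_derivative_le P
  omega

/-- From information on the derivative coefficients to information on the coefficients. -/
lemma coeff_from_deriv (d : ℕ) (P : ℝ[X]) (hP : P.natDegree ≤ d + 1) (q : ℕ) (N : ℕ) (B : ℝ)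
    (hB : 0 ≤ B)
    (h : ∀ i, 1 ≤ i → nn (q * (derivative P - C (P.coeff 1)).coeff i) ≤ B / (N : ℝ) ^ i) :
    ∀ j, 2 ≤ j → nn ((q * (d + 1).factorial : ℕ) * P.coeff j) ≤
      2 ^ (d + 1).factorial * B / (N : ℝ) ^ (j - 1) := by
  intro j hj
  rcases Nat.lt_or_ge (d + 1) j with h1 | h1
  · rw [coeff_eq_zero_of_natDegree_lt (lt_of_le_of_lt hP h1), mul_zero, nn_zero]
    positivity
  · obtain ⟨w, hw⟩ := Nat.dvd_factorial (show 0 < j by omega) h1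
    have h2 := h (j - 1) (by omega)
    rw [deriv_sub_coeff P (j - 1) (by omega), show j - 1 + 1 = j by omega] at h2
    have h3 : ((j - 1 : ℕ) : ℝ) + 1 = j := by
      have : j - 1 + 1 = j := by omega
      exact_mod_cast this
    rw [h3] at h2
    have h4 : ((q * (d + 1).factorial : ℕ) : ℝ) * P.coeff j = w * (q * (P.coeff j * j)) := by
      rw [hw]; push_cast; ring
    rw [h4]
    refine (nn_nat_mul _ _).trans ?_
    have h5 : (w : ℝ) ≤ 2 ^ (d + 1).factorial := by
      have hw1 : w ≤ (d + 1).factorial := by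
        rw [hw]; exact Nat.le_mul_of_pos_left _ (by omega)
      have hw2 : w ≤ 2 ^ (d + 1).factorial := hw1.trans Nat.lt_two_pow_self.le
      exact_mod_cast hw2
    rw [mul_div_assoc]
    gcongr
    exact nn_nonneg _

lemma eval_split (P : ℝ[X]) (d : ℕ) (hP : P.natDegree ≤ d + 1) (x : ℝ) :
    P.eval x = (P.coeff 0 + P.coeff 1 * x) +
      ∑ j ∈ Finset.range d, P.coeff (j + 2) * x ^ (j + 2) := by
  rw [eval_eq_sum_range' (show P.natDegree < d + 2 by omega), Finset.sum_range_succ',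
    Finset.sum_range_succ']
  ring

lemma VinoS_base : VinoS 1 12 := by
  intro R hR N hN P hP ε hε hεR H hH hc hnn
  obtain ⟨q, h1, h2, h3, h4⟩ := affine_vino R hR N hN (P.coeff 0) (P.coeff 1) ε hε hεR H hH hc (by
    intro h hh
    have := hnn h hh
    rw [eval_split P 0 (by simpa using hP)] at this
    simpa using this)
  refine ⟨q, h1, h2, ?_⟩
  intro i
  match i with
  | 0 => simpa using h4
  | 1 => simpa using h3
  | (n + 2) =>
    rw [coeff_eq_zero_of_natDegree_lt (by omega), mul_zero, nn_zero]
    positivity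

/-- The correlation count. -/
lemma sum_corr (H : Finset ℤ) (N : ℕ) (hH : ∀ h ∈ H, |h| ≤ (N : ℤ)) :
    ∑ t ∈ Finset.Icc (-(2 * N : ℤ)) (2 * N), ((H.filter (fun h => h + t ∈ H)).card : ℝ)
      = (H.card : ℝ) ^ 2 := by
  classical
  have h1 : ∀ t, (H.filter (fun h => h + t ∈ H)).card
      = ((H ×ˢ H).filter (fun p => p.2 - p.1 = t)).card := by
    intro t
    apply Finset.card_bij (fun h _ => (h, h + t))
    · intro a ha
      rw [Finset.mem_filter] at ha
      simp [ha.1, ha.2]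
    · intro a _ b _ hab
      exact (Prod.ext_iff.1 hab).1
    · intro b hb
      rw [Finset.mem_filter, Finset.mem_product] at hb
      have hb2 : b.1 + t = b.2 := by have := hb.2; omega
      refine ⟨b.1, ?_, ?_⟩
      · rw [Finset.mem_filter, hb2]; exact hb.1
      · rw [hb2]
  have h2 : (H ×ˢ H).card = ∑ t ∈ Finset.Icc (-(2 * N : ℤ)) (2 * N),
      ((H ×ˢ H).filter (fun p => p.2 - p.1 = t)).card := by
    apply Finset.card_eq_sum_card_fiberwise
    intro p hp
    simp only [Finset.coe_product, Set.mem_prod, Finset.mem_coe] at hp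
    have a1 := abs_le.1 (hH _ hp.1)
    have a2 := abs_le.1 (hH _ hp.2)
    simp only [Finset.coe_Icc, Set.mem_Icc]
    constructor <;> omega
  simp_rw [h1]
  rw [Finset.card_product] at h2
  rw [sq]
  exact_mod_cast h2.symm

lemma VinoS_step (d C : ℕ) (ih : VinoS (d + 1) C) :
    VinoS (d + 2) ((d + 2).factorial + 1 + 6 * C + (6 * C + 3) * C + (d + 2) + 12) := by
  classical
  intro R hR N hN P hP ε hε hεR H hH hc hnn
  set F := (d + 2).factorial with hF
  set E := (6 * C + 3) * C with hE
  set C3 := F + 1 + 6 * C + E with hC3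
  set C5 := C3 + (d + 2) + 12 with hC5
  have hR0 : 0 < R := by linarith
  have hR1 : 1 ≤ R := by linarith
  have hN1 : (1 : ℝ) ≤ N := le_trans (one_le_pow₀ hR1) hN
  have hNpos : (0 : ℝ) < N := by linarith
  have hcpos : (0 : ℝ) < H.card := by
    by_contra hcon
    push Not at hcon
    nlinarith
  -- popular differences
  set T0 := Finset.Icc (-(2 * N : ℤ)) (2 * N) with hT0
  have hT0c : (T0.card : ℝ) ≤ 5 * N := by
    rw [hT0, Int.card_Icc]
    have : ((2 * (N : ℤ) + 1 - -(2 * N)).toNat : ℤ) = 4 * N + 1 := by omega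
    have h2 : ((2 * (N : ℤ) + 1 - -(2 * N)).toNat : ℝ) = 4 * N + 1 := by exact_mod_cast this
    rw [h2]; linarith
  have hpop := popular T0 (fun t => ((H.filter (fun h => h + t ∈ H)).card : ℝ)) H.card (5 * N)
    ((H.card : ℝ) ^ 2) hT0c (by positivity) (by positivity)
    (by intro t _; exact_mod_cast Finset.card_filter_le _ _) (sum_corr H N hH).ge
  set T := T0.filter (fun t => (H.card : ℝ) ^ 2 ≤
    2 * (5 * N) * ((H.filter (fun h => h + t ∈ H)).card : ℝ)) with hT
  have hTc : (H.card : ℝ) ≤ 2 * T.card := by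
    have : (H.card : ℝ) * H.card ≤ H.card * (2 * T.card) := by nlinarith
    exact le_of_mul_le_mul_left this hcpos
  have hTne : T.Nonempty := by
    rw [← Finset.card_pos]
    have : (0 : ℝ) < T.card := by linarith
    exact_mod_cast this
  have hex : ∀ t ∈ T, ∃ q : ℕ, 1 ≤ q ∧ (q : ℝ) ≤ R ^ (6 * C) ∧
      nn (q * (derivative P - Polynomial.C (P.coeff 1)).eval (t : ℝ)) ≤ 2 * ε * R ^ (6 * C) / N := by
    intro t ht
    have ht2 := (Finset.mem_filter.1 ht).2
    have hpc : (R ^ 6) ^ C = R ^ (6 * C) := by rw [pow_mul]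
    have hle : R ^ (6 * C) ≤ R ^ C5 := pow_chain hR (by omega)
    obtain ⟨q, h1, h2, h3⟩ := ih (R ^ 6) (le_trans hR (by
        simpa using pow_chain hR (show 1 ≤ 6 by norm_num))) N (by rw [hpc]; exact hle.trans hN)
      (taylor (t : ℝ) P - P) (natDegree_taylor_sub P (d + 1) hP t) (2 * ε) (by positivity)
      (by
        rw [hpc]
        have : 2 * R ^ (6 * C) ≤ R ^ C5 := const_mul_le hR 2 _ _ 1 (by norm_num) (by omega)
        nlinarith) (H.filter (fun h => h + t ∈ H))
      (fun h hh => hH h (Finset.mem_filter.1 hh).1) (by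
        have h16 : 10 * R ^ 2 ≤ R ^ 6 := const_mul_le hR 10 2 6 4 (by norm_num) (by norm_num)
        set k := ((H.filter (fun h => h + t ∈ H)).card : ℝ) with hk
        have hk0 : 0 ≤ k := Nat.cast_nonneg _
        have a1 : (N : ℝ) ^ 2 ≤ R ^ 2 * (H.card : ℝ) ^ 2 := by
          rw [← mul_pow]; exact pow_le_pow_left₀ hNpos.le hc 2
        have a2 : (N : ℝ) * N ≤ (10 * R ^ 2 * k) * N := by
          calc (N : ℝ) * N = N ^ 2 := by ring
            _ ≤ R ^ 2 * (H.card : ℝ) ^ 2 := a1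
            _ ≤ R ^ 2 * (2 * (5 * N) * k) := by gcongr
            _ = _ := by ring
        have a3 := le_of_mul_le_mul_right a2 hNpos
        calc (N : ℝ) ≤ 10 * R ^ 2 * k := a3
          _ ≤ R ^ 6 * k := by gcongr) (by
        intro h hh
        have hh2 := Finset.mem_filter.1 hh
        rw [taylor_sub_eval]
        have e1 := hnn h hh2.1
        have e2 := hnn _ hh2.2
        push_cast at e2
        exact (nn_sub _ _).trans (by linarith))
    rw [hpc] at h2 h3
    refine ⟨q, h1, h2, ?_⟩
    have := h3 1
    rw [taylor_sub_coeff_one] at this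
    simpa using this
  choose! f hf1 hf2 hf3 using hex
  obtain ⟨q, hq1, hq2, hq3⟩ := pigeon_nat T hTne f (R ^ (6 * C)) (fun t ht => ⟨hf1 t ht, hf2 t ht⟩)
  set T' := T.filter (fun t => f t = q) with hT'
  have hpcE : (R ^ (6 * C + 3)) ^ C = R ^ E := by rw [hE, ← pow_mul]
  obtain ⟨q2, hq21, hq22, hq23⟩ := ih (R ^ (6 * C + 3)) (le_trans hR (by
        simpa using pow_chain hR (show 1 ≤ 6 * C + 3 by omega))) (2 * N) (by
        rw [hpcE]
        push_cast
        have : R ^ E ≤ R ^ C5 := pow_chain hR (by omega)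
        linarith)
      (Polynomial.C (q : ℝ) * (derivative P - Polynomial.C (P.coeff 1)))
      ((natDegree_C_mul_le _ _).trans (deriv_sub_natDegree P (d + 1) hP))
      (2 * ε * R ^ (6 * C) / N) (by positivity) (by
        rw [hpcE, div_mul_eq_mul_div, div_le_one hNpos]
        have e1 : 2 * R ^ (6 * C + E) ≤ R ^ C5 := const_mul_le hR 2 _ _ 1 (by norm_num) (by omega)
        rw [pow_add] at e1
        calc 2 * ε * R ^ (6 * C) * R ^ E = ε * (2 * (R ^ (6 * C) * R ^ E)) := by ring
          _ ≤ ε * R ^ C5 := by gcongr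
          _ ≤ 1 := hεR
          _ ≤ N := hN1) T' (by
        intro t ht
        have := (Finset.mem_filter.1 (Finset.mem_filter.1 ht).1).1
        rw [hT0, Finset.mem_Icc] at this
        rw [abs_le]
        push_cast
        exact this) (by
        push_cast
        have e1 : 4 * R ^ (6 * C + 1) ≤ R ^ (6 * C + 3) :=
          const_mul_le hR 4 _ _ 2 (by norm_num) (by omega)
        calc 2 * (N : ℝ) ≤ 2 * (R * H.card) := by gcongr
          _ ≤ 2 * (R * (2 * T.card)) := by gcongr
          _ ≤ 2 * (R * (2 * (R ^ (6 * C) * T'.card))) := by gcongr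
          _ = 4 * R ^ (6 * C + 1) * T'.card := by rw [pow_add]; ring
          _ ≤ _ := by gcongr) (by
        intro t ht
        have ht2 := Finset.mem_filter.1 ht
        rw [eval_mul, eval_C, ← ht2.2]
        exact hf3 t ht2.1)
  rw [hpcE] at hq22 hq23
  -- common denominator for the coefficients of degree at least two
  have hB0 : 0 ≤ 2 * ε * R ^ (6 * C) / N * R ^ E := by positivity
  have hco := coeff_from_deriv (d + 1) P hP (q2 * q) N (2 * ε * R ^ (6 * C) / N * R ^ E) hB0 (by
    intro i hi
    have := hq23 i
    rw [coeff_C_mul] at this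
    push_cast
    rw [mul_assoc]
    refine this.trans ?_
    push_cast
    gcongr
    linarith)
  set q3 := q2 * q * (d + 1 + 1).factorial with hq3def
  have hFle : ((d + 1 + 1).factorial : ℝ) ≤ 2 ^ F := by
    have : (d + 1 + 1).factorial ≤ 2 ^ F := Nat.lt_two_pow_self.le
    exact_mod_cast this
  have hq3le : (q3 : ℝ) ≤ R ^ C3 := by
    rw [hq3def]
    push_cast
    calc (q2 : ℝ) * q * (d + 1 + 1).factorial ≤ R ^ E * R ^ (6 * C) * R ^ F := by
          gcongr
          exact hFle.trans (const_le_pow hR F)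
      _ = R ^ (E + 6 * C + F) := by rw [pow_add, pow_add]
      _ ≤ R ^ C3 := pow_chain hR (by omega)
  have hq3pos : 1 ≤ q3 := by
    have : 0 < (d + 1 + 1).factorial := Nat.factorial_pos _
    exact Nat.mul_pos (Nat.mul_pos hq21 hq1) this
  have hco2 : ∀ j, 2 ≤ j → nn (q3 * P.coeff j) ≤ ε * R ^ C3 / (N : ℝ) ^ j := by
    intro j hj
    refine (hco j hj).trans ?_
    have e1 : (2 : ℝ) ^ F * 2 * R ^ (6 * C + E) ≤ R ^ C3 :=
      const_mul_le hR _ _ _ (F + 1) (by rw [pow_succ]) (by omega)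
    rw [pow_add] at e1
    have e2 : (N : ℝ) ^ j = N ^ (j - 1) * N := by
      rw [← pow_succ]; congr 1; omega
    rw [e2, div_le_div_iff₀ (by positivity) (by positivity)]
    have e3 : 2 ^ (d + 1 + 1).factorial * (2 * ε * R ^ (6 * C) / N * R ^ E) * ((N : ℝ) ^ (j - 1) * N)
        = ε * ((2 : ℝ) ^ F * 2 * (R ^ (6 * C) * R ^ E)) * N ^ (j - 1) := by
      field_simp
      exact mul_comm _ _
    rw [e3]
    gcongr
  -- the linear part
  have hlin : ∀ h ∈ H, nn (q3 * P.coeff 0 + q3 * P.coeff 1 * h) ≤ ε * R ^ (C3 + (d + 2)) := by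
    intro h hh
    have e1 := eval_split P (d + 1) hP h
    have e2 : q3 * P.coeff 0 + q3 * P.coeff 1 * h = q3 * P.eval (h : ℝ) -
        ∑ j ∈ Finset.range (d + 1), (q3 * P.coeff (j + 2)) * (h : ℝ) ^ (j + 2) := by
      rw [e1, mul_add, Finset.mul_sum]
      simp_rw [mul_assoc]
      ring
    rw [e2]
    refine (nn_sub _ _).trans ?_
    have e3 : nn (q3 * P.eval (h : ℝ)) ≤ R ^ C3 * ε := by
      refine (nn_nat_mul _ _).trans ?_
      have := hnn h hh
      gcongr
      exact nn_nonneg _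
    have e4 : nn (∑ j ∈ Finset.range (d + 1), (q3 * P.coeff (j + 2)) * (h : ℝ) ^ (j + 2))
        ≤ (d + 1 : ℕ) * (ε * R ^ C3) := by
      refine (nn_sum _ _).trans ?_
      rw [← nsmul_eq_mul]
      conv_rhs => rw [← Finset.card_range (d + 1)]
      apply Finset.sum_le_card_nsmul
      intro j _
      have f1 := nn_int_mul (h ^ (j + 2)) (q3 * P.coeff (j + 2))
      push_cast at f1
      rw [mul_comm]
      refine f1.trans ?_
      have f2 := hco2 (j + 2) (by omega)
      have f3 : |(h : ℝ) ^ (j + 2)| ≤ (N : ℝ) ^ (j + 2) := by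
        rw [abs_pow]
        have : |(h : ℝ)| ≤ N := by exact_mod_cast hH h hh
        gcongr
      calc |(h : ℝ) ^ (j + 2)| * nn (q3 * P.coeff (j + 2))
          ≤ (N : ℝ) ^ (j + 2) * (ε * R ^ C3 / (N : ℝ) ^ (j + 2)) := by
            gcongr
            exact nn_nonneg _
        _ = ε * R ^ C3 := by field_simp
    have e5 : ((d + 2 : ℕ) : ℝ) * R ^ C3 ≤ R ^ (C3 + (d + 2)) := by
      apply const_mul_le hR _ _ _ (d + 2) _ (by omega)
      have : d + 2 ≤ 2 ^ (d + 2) := Nat.lt_two_pow_self.le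
      exact_mod_cast this
    push_cast at e4 e5
    nlinarith
  have h12 : R ^ 12 ≤ R ^ C5 := pow_chain hR (by omega)
  obtain ⟨q4, hq41, hq42, hq43, hq44⟩ := affine_vino R hR N (h12.trans hN) (q3 * P.coeff 0)
    (q3 * P.coeff 1) (ε * R ^ (C3 + (d + 2))) (by positivity) (by
      rw [mul_assoc, ← pow_add]; exact hεR) H hH hc hlin
  refine ⟨q4 * q3, Nat.mul_pos hq41 hq3pos, ?_, ?_⟩
  · push_cast
    calc (q4 : ℝ) * q3 ≤ R ^ 12 * R ^ C3 := by gcongr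
      _ = R ^ (12 + C3) := (pow_add R 12 C3).symm
      _ ≤ _ := pow_chain hR (by omega)
  · intro i
    push_cast
    rw [mul_assoc]
    have hcomb : ε * R ^ (C3 + (d + 2)) * R ^ 12 = ε * R ^ C5 := by
      rw [mul_assoc, ← pow_add]
    match i with
    | 0 =>
      rw [hcomb] at hq44
      simpa using hq44
    | 1 =>
      rw [hcomb] at hq43
      simpa using hq43
    | (n + 2) =>
      refine (nn_nat_mul _ _).trans ?_
      have e1 := hco2 (n + 2) (by omega)
      calc (q4 : ℝ) * nn (q3 * P.coeff (n + 2)) ≤ R ^ 12 * (ε * R ^ C3 / (N : ℝ) ^ (n + 2)) := by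
            gcongr
            exact nn_nonneg _
        _ = ε * R ^ (12 + C3) / (N : ℝ) ^ (n + 2) := by rw [pow_add R 12 C3]; ring
        _ ≤ _ := by
            gcongr
            · omega

theorem vino (d : ℕ) : ∃ C : ℕ, VinoS d C := by
  have h : ∀ d : ℕ, ∃ C : ℕ, VinoS (d + 1) C := by
    intro d
    induction d with
    | zero => exact ⟨12, VinoS_base⟩
    | succ n ih =>
      obtain ⟨C, hC⟩ := ih
      exact ⟨_, VinoS_step n C hC⟩
  obtain ⟨C, hC⟩ := h d
  refine ⟨C, ?_⟩
  intro R hR N hN P hP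
  exact hC R hR N hN P (by omega)

end

section

open Polynomial

/-- Weyl's inequality over the integers, as a predicate in the degree and the constant. -/
def WeylS (d C : ℕ) : Prop :=
  ∀ R : ℝ, 2 ≤ R → ∀ N : ℕ, R ^ C ≤ N → ∀ P : ℝ[X], P.natDegree ≤ d →
    ∀ x y : ℤ, -(N : ℤ) ≤ x → y ≤ N →
      (N : ℝ) ≤ R * ‖∑ n ∈ Finset.Icc x y, eC (P.eval (n : ℝ))‖ →
      ∃ q : ℕ, 1 ≤ q ∧ (q : ℝ) ≤ R ^ C ∧ ∀ i, 1 ≤ i → nn (q * P.coeff i) ≤ R ^ C / (N : ℝ) ^ i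

lemma card_Icc_le (N : ℕ) (x y : ℤ) (hx : -(N : ℤ) ≤ x) (hy : y ≤ N) :
    ((Finset.Icc x y).card : ℝ) ≤ 2 * N + 1 := by
  rw [Int.card_Icc]
  have : (y + 1 - x).toNat ≤ 2 * N + 1 := by omega
  exact_mod_cast this

lemma norm_sum_eC_le (s : Finset ℤ) (g : ℤ → ℝ) : ‖∑ n ∈ s, eC (g n)‖ ≤ s.card := by
  refine (norm_sum_le _ _).trans ?_
  simp [norm_eC]

lemma vdc (g : ℤ → ℝ) (N : ℕ) (x y : ℤ) (hx : -(N : ℤ) ≤ x) (hy : y ≤ N) :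
    ‖∑ n ∈ Finset.Icc x y, eC (g n)‖ ^ 2 ≤ ∑ t ∈ Finset.Icc (-(2 * N : ℤ)) (2 * N),
      ‖∑ n ∈ Finset.Icc (max x (x - t)) (min y (y - t)), eC (g (n + t) - g n)‖ := by
  classical
  set J := Finset.Icc x y with hJ
  have h1 : ((‖∑ n ∈ J, eC (g n)‖ ^ 2 : ℝ) : ℂ) =
      ∑ t ∈ Finset.Icc (-(2 * N : ℤ)) (2 * N),
      ∑ n ∈ Finset.Icc (max x (x - t)) (min y (y - t)), eC (g (n + t) - g n) := by
    have e1 : ((‖∑ n ∈ J, eC (g n)‖ ^ 2 : ℝ) : ℂ) = ∑ p ∈ J ×ˢ J, eC (g p.2 - g p.1) := by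
      rw [← Complex.normSq_eq_norm_sq, ← Complex.mul_conj, map_sum, Finset.sum_mul_sum,
        Finset.sum_product_right]
      apply Finset.sum_congr rfl
      intro a _
      apply Finset.sum_congr rfl
      intro b _
      rw [← eC_neg, ← eC_add, sub_eq_add_neg]
    rw [e1, ← Finset.sum_fiberwise_of_maps_to (t := Finset.Icc (-(2 * N : ℤ)) (2 * N))
      (g := fun p : ℤ × ℤ => p.2 - p.1)]
    · apply Finset.sum_congr rfl
      intro t _
      symm
      apply Finset.sum_bij (fun n _ => (n, n + t))
      · intro n hn
        simp only [Finset.mem_Icc, max_le_iff, le_min_iff] at hn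
        simp only [Finset.mem_filter, Finset.mem_product, hJ, Finset.mem_Icc]
        omega
      · intro a _ b _ hab
        exact (Prod.ext_iff.1 hab).1
      · intro b hb
        simp only [Finset.mem_filter, Finset.mem_product, hJ, Finset.mem_Icc] at hb
        refine ⟨b.1, ?_, ?_⟩
        · simp only [Finset.mem_Icc, max_le_iff, le_min_iff]
          omega
        · ext
          · rfl
          · simp only; omega
      · intro n _
        rfl
    · intro p hp
      simp only [Finset.mem_product, hJ, Finset.mem_Icc] at hp
      simp only [Finset.mem_Icc]
      omega
  have h2 : ‖∑ n ∈ J, eC (g n)‖ ^ 2 = ‖((‖∑ n ∈ J, eC (g n)‖ ^ 2 : ℝ) : ℂ)‖ := by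
    rw [Complex.norm_real, Real.norm_of_nonneg (by positivity)]
  rw [h2, h1]
  exact norm_sum_le _ _

lemma shift_one (f : ℤ → ℂ) (hf : ∀ n, ‖f n‖ ≤ 1) (x y : ℤ) :
    ‖∑ n ∈ Finset.Icc x y, (f (n + 1) - f n)‖ ≤ 2 := by
  have h : ∀ m : ℕ, ∑ n ∈ Finset.Icc x (x + m - 1), (f (n + 1) - f n) = f (x + m) - f x := by
    intro m
    induction m with
    | zero => simp
    | succ m ih =>
      have : Finset.Icc x (x + (m + 1 : ℕ) - 1) = insert (x + m) (Finset.Icc x (x + m - 1)) := by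
        ext z
        simp only [Finset.mem_Icc, Finset.mem_insert]
        push_cast
        omega
      rw [this, Finset.sum_insert (by simp), ih]
      push_cast
      rw [add_assoc]
      ring
  rcases le_or_gt x y with hxy | hxy
  · obtain ⟨m, hm⟩ := Int.eq_ofNat_of_zero_le (show 0 ≤ y + 1 - x by omega)
    have h2 : y = x + m - 1 := by omega
    rw [h2, h m]
    exact (norm_sub_le _ _).trans (by linarith [hf (x + m), hf x])
  · rw [Finset.Icc_eq_empty (by omega)]
    simp

lemma shift_many (f : ℤ → ℂ) (hf : ∀ n, ‖f n‖ ≤ 1) (x y : ℤ) (t : ℕ) :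
    ‖∑ n ∈ Finset.Icc x y, (f (n + t) - f n)‖ ≤ 2 * t := by
  induction t with
  | zero => simp
  | succ t ih =>
    have h1 := shift_one (fun n => f (n + t)) (fun n => hf _) x y
    have h2 : ∑ n ∈ Finset.Icc x y, (f (n + (t + 1 : ℕ)) - f n)
        = ∑ n ∈ Finset.Icc x y, (f (n + 1 + t) - f (n + t))
          + ∑ n ∈ Finset.Icc x y, (f (n + t) - f n) := by
      rw [← Finset.sum_add_distrib]
      apply Finset.sum_congr rfl
      intro n _
      push_cast
      rw [show n + ((t : ℤ) + 1) = n + 1 + t by ring]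
      ring
    rw [h2]
    refine (norm_add_le _ _).trans ?_
    push_cast
    linarith

lemma pow_shift_bound (n : ℤ) (q N m : ℕ) (hn : |n| ≤ (N : ℤ)) (hq : q ≤ N) (hm : 1 ≤ m) :
    ∃ u : ℤ, (n + q) ^ m - n ^ m = q * u ∧ |(u : ℝ)| ≤ m * (2 * N) ^ (m - 1) := by
  rcases Nat.eq_zero_or_pos q with h | h
  · subst h
    refine ⟨0, by simp, ?_⟩
    simp only [Int.cast_zero, abs_zero]
    positivity
  obtain ⟨u, hu⟩ := sub_dvd_pow_sub_pow (n + q) n m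
  rw [add_sub_cancel_left] at hu
  refine ⟨u, hu, ?_⟩
  have h1 := abs_pow_sub_pow_le (n + q : ℤ) n m
  rw [hu, add_sub_cancel_left, abs_mul, mul_assoc] at h1
  have h2 : (0 : ℤ) < |(q : ℤ)| := by simp; omega
  have h3 := le_of_mul_le_mul_left h1 h2
  have h4 : max |n + q| |n| ≤ 2 * (N : ℤ) := by
    have := abs_le.1 hn
    apply max_le
    · rw [abs_le]; omega
    · omega
  have h5 : |u| ≤ m * (2 * (N : ℤ)) ^ (m - 1) := by
    refine h3.trans ?_
    gcongr
  exact_mod_cast h5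

/-- Once the coefficients of degree at least two are major-arc, so is the linear one. -/
lemma linear_coeff (d : ℕ) (P : ℝ[X]) (hP : P.natDegree ≤ d + 1) (N q : ℕ) (hN : 1 ≤ N)
    (hq : q ≤ N) (B : ℝ) (hB : 0 ≤ B)
    (hco : ∀ j, 2 ≤ j → nn (q * P.coeff j) ≤ B / (N : ℝ) ^ j) (x y : ℤ) (hx : -(N : ℤ) ≤ x)
    (hy : y ≤ N) :
    ‖∑ n ∈ Finset.Icc x y, eC (P.eval (n : ℝ))‖ * (4 * nn (q * P.coeff 1)) ≤
      2 * q + 21 * (d * ((d + 1) * 2 ^ (d + 1)) * B) := by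
  set Z := ∑ n ∈ Finset.Icc x y, eC (P.eval (n : ℝ)) with hZ
  have hNr : (1 : ℝ) ≤ N := by exact_mod_cast hN
  have h1 : ‖Z‖ * (4 * nn (q * P.coeff 1)) ≤ ‖Z * (eC (q * P.coeff 1) - 1)‖ := by
    rw [norm_mul]
    gcongr
    exact norm_eC_sub_one_ge _
  refine h1.trans ?_
  have h2 : Z * (eC (q * P.coeff 1) - 1) =
      ∑ n ∈ Finset.Icc x y, (eC (P.eval ((n + (q : ℤ) : ℤ) : ℝ)) - eC (P.eval (n : ℝ)))
      - ∑ n ∈ Finset.Icc x y, (eC (P.eval ((n + (q : ℤ) : ℤ) : ℝ))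
          - eC (P.eval (n : ℝ)) * eC (q * P.coeff 1)) := by
    rw [← Finset.sum_sub_distrib, hZ, Finset.sum_mul]
    apply Finset.sum_congr rfl
    intro n _
    ring
  rw [h2]
  refine (norm_sub_le _ _).trans ?_
  have h3 := shift_many (fun n : ℤ => eC (P.eval (n : ℝ))) (fun n => (norm_eC _).le) x y q
  have h4 : ‖∑ n ∈ Finset.Icc x y, (eC (P.eval ((n + (q : ℤ) : ℤ) : ℝ))
          - eC (P.eval (n : ℝ)) * eC (q * P.coeff 1))‖
      ≤ (2 * N + 1) * (7 * (d * ((d + 1) * 2 ^ (d + 1)) * (B / N))) := by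
    refine (norm_sum_le _ _).trans ?_
    have hterm : ∀ n ∈ Finset.Icc x y, ‖eC (P.eval ((n + (q : ℤ) : ℤ) : ℝ))
          - eC (P.eval (n : ℝ)) * eC (q * P.coeff 1)‖
        ≤ 7 * (d * ((d + 1) * 2 ^ (d + 1)) * (B / N)) := by
      intro n hn
      rw [Finset.mem_Icc] at hn
      have hnN : |n| ≤ (N : ℤ) := by rw [abs_le]; omega
      set W := ∑ j ∈ Finset.range d, P.coeff (j + 2) *
        (((n : ℝ) + q) ^ (j + 2) - (n : ℝ) ^ (j + 2)) with hW
      have e1 : P.eval ((n + (q : ℤ) : ℤ) : ℝ) = (P.eval (n : ℝ) + q * P.coeff 1) + W := by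
        rw [eval_split P d hP, eval_split P d hP, hW]
        simp_rw [mul_sub]
        rw [Finset.sum_sub_distrib]
        push_cast
        ring
      have e2 : eC (P.eval ((n + (q : ℤ) : ℤ) : ℝ)) - eC (P.eval (n : ℝ)) * eC (q * P.coeff 1)
          = eC (P.eval (n : ℝ) + q * P.coeff 1) * (eC W - 1) := by
        rw [e1, eC_add _ W, eC_add]; ring
      rw [e2, norm_mul, norm_eC, one_mul]
      refine (norm_eC_sub_one_le W).trans ?_
      gcongr
      refine (nn_sum _ _).trans ?_
      have : (d : ℝ) * ((d + 1) * 2 ^ (d + 1)) * (B / N)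
          = (Finset.range d).card • ((d + 1) * 2 ^ (d + 1) * (B / N)) := by
        rw [nsmul_eq_mul, Finset.card_range]; ring
      rw [this]
      apply Finset.sum_le_card_nsmul
      intro j hj
      rw [Finset.mem_range] at hj
      obtain ⟨u, hu1, hu2⟩ := pow_shift_bound n q N (j + 2) hnN hq (by omega)
      have e3 : ((n : ℝ) + q) ^ (j + 2) - (n : ℝ) ^ (j + 2) = q * u := by exact_mod_cast hu1
      rw [e3, show P.coeff (j + 2) * (q * (u : ℝ)) = u * (q * P.coeff (j + 2)) by ring]
      refine (nn_int_mul _ _).trans ?_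
      have e4 := hco (j + 2) (by omega)
      calc |(u : ℝ)| * nn (q * P.coeff (j + 2))
          ≤ ((j + 2 : ℕ) * (2 * N) ^ (j + 2 - 1)) * (B / (N : ℝ) ^ (j + 2)) := by
            gcongr
            exact nn_nonneg _
        _ = ((j + 2 : ℕ) * 2 ^ (j + 1)) * (B / N) := by
            rw [show j + 2 - 1 = j + 1 by omega, mul_pow]
            field_simp
            ring
        _ ≤ ((d + 1 : ℕ) * 2 ^ (d + 1)) * (B / N) := by
            have a1 : ((j + 2 : ℕ) : ℝ) ≤ ((d + 1 : ℕ) : ℝ) := by exact_mod_cast (by omega)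
            have a2 : (2 : ℝ) ^ (j + 1) ≤ 2 ^ (d + 1) :=
              pow_le_pow_right₀ (by norm_num) (by omega)
            gcongr
        _ = _ := by push_cast; ring
    refine (Finset.sum_le_card_nsmul _ _ _ hterm).trans ?_
    rw [nsmul_eq_mul]
    gcongr
    exact card_Icc_le N x y hx hy
  have h5 : (2 * (N : ℝ) + 1) * (7 * (d * ((d + 1) * 2 ^ (d + 1)) * (B / N)))
      ≤ 21 * (d * ((d + 1) * 2 ^ (d + 1)) * B) := by
    calc (2 * (N : ℝ) + 1) * (7 * (d * ((d + 1) * 2 ^ (d + 1)) * (B / N)))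
        ≤ (3 * N) * (7 * (d * ((d + 1) * 2 ^ (d + 1)) * (B / N))) := by
          gcongr
          linarith
      _ = _ := by field_simp; ring
  linarith

end

section

open Polynomial

set_option maxHeartbeats 1000000 in
lemma WeylS_step (d C V : ℕ) (ih : WeylS d C) (hV : VinoS d V) :
    WeylS (d + 1) ((d + 1).factorial + 6 * C + (6 * C + 6) * V + (3 * d + 8)) := by
  classical
  intro R hR N hN P hP x y hx hy hS
  set F := (d + 1).factorial with hF
  set E := (6 * C + 6) * V with hE
  set C3 := F + 6 * C + E with hC3
  set C5 := C3 + (3 * d + 8) with hC5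
  have hR0 : 0 < R := by linarith
  have hR1 : 1 ≤ R := by linarith
  have hN1 : (1 : ℝ) ≤ N := le_trans (one_le_pow₀ hR1) hN
  have hNpos : (0 : ℝ) < N := by linarith
  set Z := ∑ n ∈ Finset.Icc x y, eC (P.eval (n : ℝ)) with hZ
  set T0 := Finset.Icc (-(2 * N : ℤ)) (2 * N) with hT0
  have hT0c : (T0.card : ℝ) ≤ 5 * N := by
    rw [hT0, Int.card_Icc]
    have : ((2 * (N : ℤ) + 1 - -(2 * N)).toNat : ℤ) = 4 * N + 1 := by omega
    have h2 : ((2 * (N : ℤ) + 1 - -(2 * N)).toNat : ℝ) = 4 * N + 1 := by exact_mod_cast this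
    rw [h2]; linarith
  set g : ℤ → ℝ := fun t =>
    ‖∑ n ∈ Finset.Icc (max x (x - t)) (min y (y - t)),
      eC ((taylor (t : ℝ) P - P).eval (n : ℝ))‖ with hg
  have hZsq : (N : ℝ) ^ 2 / R ^ 2 ≤ ∑ t ∈ T0, g t := by
    have h1 := vdc (fun n => P.eval (n : ℝ)) N x y hx hy
    have h2 : (N : ℝ) ^ 2 / R ^ 2 ≤ ‖Z‖ ^ 2 := by
      rw [div_le_iff₀ (by positivity), ← mul_pow, mul_comm]
      exact pow_le_pow_left₀ hNpos.le hS 2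
    refine h2.trans (h1.trans (le_of_eq ?_))
    apply Finset.sum_congr rfl
    intro t _
    rw [hg]
    simp only
    congr 1
    apply Finset.sum_congr rfl
    intro n _
    rw [taylor_sub_eval]
    push_cast
    rfl
  have hgle : ∀ t ∈ T0, g t ≤ 3 * N := by
    intro t _
    refine (norm_sum_eC_le _ (fun n => (taylor (t : ℝ) P - P).eval (n : ℝ))).trans ?_
    refine (card_Icc_le N _ _ (le_max_of_le_left hx) (min_le_of_left_le hy)).trans ?_
    linarith
  have hpop := popular T0 g (3 * N) (5 * N) ((N : ℝ) ^ 2 / R ^ 2) hT0c (by positivity)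
    (by positivity) hgle hZsq
  set T := T0.filter (fun t => (N : ℝ) ^ 2 / R ^ 2 ≤ 2 * (5 * N) * g t) with hT
  have hTc : (N : ℝ) ≤ 6 * R ^ 2 * T.card := by
    rw [div_le_iff₀ (by positivity)] at hpop
    have : (N : ℝ) * N ≤ N * (6 * R ^ 2 * T.card) := by nlinarith
    exact le_of_mul_le_mul_left this hNpos
  have hTne : T.Nonempty := by
    rw [← Finset.card_pos]
    by_contra hcon
    have : T.card = 0 := by omega
    rw [this, Nat.cast_zero, mul_zero] at hTc
    linarith
  have hex : ∀ t ∈ T, ∃ q : ℕ, 1 ≤ q ∧ (q : ℝ) ≤ R ^ (6 * C) ∧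
      nn (q * (derivative P - Polynomial.C (P.coeff 1)).eval (t : ℝ)) ≤ R ^ (6 * C) / N := by
    intro t ht
    have ht2 := (Finset.mem_filter.1 ht).2
    have hpc : (R ^ 6) ^ C = R ^ (6 * C) := by rw [pow_mul]
    have hle : R ^ (6 * C) ≤ R ^ C5 := pow_chain hR (by omega)
    obtain ⟨q, h1, h2, h3⟩ := ih (R ^ 6) (le_trans hR (by
        simpa using pow_chain hR (show 1 ≤ 6 by norm_num))) N (by rw [hpc]; exact hle.trans hN)
      (taylor (t : ℝ) P - P) (natDegree_taylor_sub P d hP t) (max x (x - t)) (min y (y - t))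
      (le_max_of_le_left hx) (min_le_of_left_le hy) (by
        have h16 : 10 * R ^ 2 ≤ R ^ 6 := const_mul_le hR 10 2 6 4 (by norm_num) (by norm_num)
        have hk0 : 0 ≤ g t := norm_nonneg _
        rw [div_le_iff₀ (by positivity)] at ht2
        have a2 : (N : ℝ) * N ≤ (10 * R ^ 2 * g t) * N := by nlinarith
        have a3 := le_of_mul_le_mul_right a2 hNpos
        calc (N : ℝ) ≤ 10 * R ^ 2 * g t := a3
          _ ≤ R ^ 6 * g t := by gcongr)
    rw [hpc] at h2 h3
    refine ⟨q, h1, h2, ?_⟩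
    have := h3 1 le_rfl
    rw [taylor_sub_coeff_one] at this
    simpa using this
  choose! f hf1 hf2 hf3 using hex
  obtain ⟨q, hq1, hq2, hq3⟩ := pigeon_nat T hTne f (R ^ (6 * C)) (fun t ht => ⟨hf1 t ht, hf2 t ht⟩)
  set T' := T.filter (fun t => f t = q) with hT'
  have hpcE : (R ^ (6 * C + 6)) ^ V = R ^ E := by rw [hE, ← pow_mul]
  obtain ⟨q2, hq21, hq22, hq23⟩ := hV (R ^ (6 * C + 6)) (le_trans hR (by
        simpa using pow_chain hR (show 1 ≤ 6 * C + 6 by omega))) (2 * N) (by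
        rw [hpcE]
        push_cast
        have : R ^ E ≤ R ^ C5 := pow_chain hR (by omega)
        linarith)
      (Polynomial.C (q : ℝ) * (derivative P - Polynomial.C (P.coeff 1)))
      ((natDegree_C_mul_le _ _).trans (deriv_sub_natDegree P d hP))
      (R ^ (6 * C) / N) (by positivity) (by
        rw [hpcE, div_mul_eq_mul_div, div_le_one hNpos, ← pow_add]
        exact (pow_chain hR (by omega)).trans hN) T' (by
        intro t ht
        have := (Finset.mem_filter.1 (Finset.mem_filter.1 ht).1).1
        rw [hT0, Finset.mem_Icc] at this
        rw [abs_le]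
        push_cast
        exact this) (by
        push_cast
        have e1 : 12 * R ^ (6 * C + 2) ≤ R ^ (6 * C + 6) :=
          const_mul_le hR 12 _ _ 4 (by norm_num) (by omega)
        calc 2 * (N : ℝ) ≤ 2 * (6 * R ^ 2 * T.card) := by gcongr
          _ ≤ 2 * (6 * R ^ 2 * (R ^ (6 * C) * T'.card)) := by gcongr
          _ = 12 * R ^ (6 * C + 2) * T'.card := by rw [pow_add]; ring
          _ ≤ _ := by gcongr) (by
        intro t ht
        have ht2 := Finset.mem_filter.1 ht
        rw [eval_mul, eval_C, ← ht2.2]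
        exact hf3 t ht2.1)
  rw [hpcE] at hq22 hq23
  have hB0 : 0 ≤ R ^ (6 * C) / N * R ^ E := by positivity
  have hco := coeff_from_deriv d P hP (q2 * q) N (R ^ (6 * C) / N * R ^ E) hB0 (by
    intro i hi
    have := hq23 i
    rw [coeff_C_mul] at this
    push_cast
    rw [mul_assoc]
    refine this.trans ?_
    push_cast
    gcongr
    linarith)
  set q3 := q2 * q * (d + 1).factorial with hq3def
  have hFle : ((d + 1).factorial : ℝ) ≤ 2 ^ F := by
    have : (d + 1).factorial ≤ 2 ^ F := Nat.lt_two_pow_self.le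
    exact_mod_cast this
  have hq3le : (q3 : ℝ) ≤ R ^ C3 := by
    rw [hq3def]
    push_cast
    calc (q2 : ℝ) * q * (d + 1).factorial ≤ R ^ E * R ^ (6 * C) * R ^ F := by
          gcongr
          exact hFle.trans (const_le_pow hR F)
      _ = R ^ (E + 6 * C + F) := by rw [pow_add, pow_add]
      _ ≤ R ^ C3 := pow_chain hR (by omega)
  have hq3pos : 1 ≤ q3 := by
    have : 0 < (d + 1).factorial := Nat.factorial_pos _
    exact Nat.mul_pos (Nat.mul_pos hq21 hq1) this
  have hco2 : ∀ j, 2 ≤ j → nn (q3 * P.coeff j) ≤ R ^ C3 / (N : ℝ) ^ j := by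
    intro j hj
    refine (hco j hj).trans ?_
    have e1 : (2 : ℝ) ^ F * R ^ (6 * C + E) ≤ R ^ C3 :=
      const_mul_le hR _ _ _ F le_rfl (by omega)
    rw [pow_add] at e1
    have e2 : (N : ℝ) ^ j = N ^ (j - 1) * N := by
      rw [← pow_succ]; congr 1; omega
    rw [e2, div_le_div_iff₀ (by positivity) (by positivity)]
    have e3 : 2 ^ (d + 1).factorial * (R ^ (6 * C) / N * R ^ E) * ((N : ℝ) ^ (j - 1) * N)
        = ((2 : ℝ) ^ F * (R ^ (6 * C) * R ^ E)) * N ^ (j - 1) := by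
      field_simp
      rfl
    rw [e3]
    gcongr
  have hC35 : R ^ C3 ≤ R ^ C5 := pow_chain hR (by omega)
  have hlin := linear_coeff d P hP N q3 (by exact_mod_cast hN1)
    (by exact_mod_cast (hq3le.trans (hC35.trans hN))) (R ^ C3) (by positivity) hco2 x y hx hy
  have hlin2 : nn (q3 * P.coeff 1) ≤ R ^ C5 / N := by
    rw [le_div_iff₀ hNpos]
    have e1 : (d : ℝ) * ((d + 1) * 2 ^ (d + 1)) ≤ 2 ^ (3 * d + 2) := by
      have a1 : (d : ℝ) ≤ 2 ^ d := by exact_mod_cast Nat.lt_two_pow_self.le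
      have a2 : (d : ℝ) + 1 ≤ 2 ^ (d + 1) := by
        have : d + 1 ≤ 2 ^ (d + 1) := Nat.lt_two_pow_self.le
        exact_mod_cast this
      calc (d : ℝ) * ((d + 1) * 2 ^ (d + 1)) ≤ 2 ^ d * (2 ^ (d + 1) * 2 ^ (d + 1)) := by gcongr
        _ = 2 ^ (3 * d + 2) := by rw [← pow_add, ← pow_add]; congr 1; ring
    have e2 : 2 * (q3 : ℝ) + 21 * (d * ((d + 1) * 2 ^ (d + 1)) * R ^ C3)
        ≤ 2 ^ (3 * d + 7) * R ^ C3 := by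
      have a1 : (21 : ℝ) * (d * ((d + 1) * 2 ^ (d + 1)) * R ^ C3)
          ≤ 21 * (2 ^ (3 * d + 2) * R ^ C3) := by gcongr
      have a2 : (2 : ℝ) ^ (3 * d + 7) = 32 * 2 ^ (3 * d + 2) := by
        rw [show 3 * d + 7 = (3 * d + 2) + 5 by ring, pow_add]; norm_num; ring
      have a3 : (1 : ℝ) ≤ 2 ^ (3 * d + 2) := one_le_pow₀ (by norm_num)
      rw [a2]
      have a4 : R ^ C3 ≤ 2 ^ (3 * d + 2) * R ^ C3 := by
        have : 0 < R ^ C3 := by positivity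
        nlinarith
      nlinarith
    have e3 : 2 ^ (3 * d + 7) * R ^ (C3 + 1) ≤ R ^ C5 :=
      const_mul_le hR _ _ _ (3 * d + 7) le_rfl (by omega)
    have hnn0 := nn_nonneg (q3 * P.coeff 1)
    calc nn (q3 * P.coeff 1) * N ≤ nn (q3 * P.coeff 1) * (R * ‖Z‖) := by gcongr
      _ ≤ R * (‖Z‖ * (4 * nn (q3 * P.coeff 1))) := by
          have : 0 ≤ R * (‖Z‖ * nn (q3 * P.coeff 1)) := by positivity
          nlinarith
      _ ≤ R * (2 ^ (3 * d + 7) * R ^ C3) := by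
          exact mul_le_mul_of_nonneg_left (hlin.trans e2) hR0.le
      _ = 2 ^ (3 * d + 7) * R ^ (C3 + 1) := by rw [pow_succ]; ring
      _ ≤ _ := e3
  refine ⟨q3, hq3pos, hq3le.trans hC35, ?_⟩
  intro i hi
  rcases Nat.lt_or_ge i 2 with h | h
  · have : i = 1 := by omega
    subst this
    simpa using hlin2
  · refine (hco2 i h).trans ?_
    gcongr

theorem weylZ (d : ℕ) : ∃ C : ℕ, WeylS d C := by
  induction d with
  | zero =>
    refine ⟨0, ?_⟩
    intro R hR N hN P hP x y hx hy hS
    refine ⟨1, le_rfl, by simp, ?_⟩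
    intro i hi
    rw [coeff_eq_zero_of_natDegree_lt (by omega), mul_zero, nn_zero]
    positivity
  | succ n ih =>
    obtain ⟨C, hC⟩ := ih
    obtain ⟨V, hV⟩ := vino n
    exact ⟨_, WeylS_step n C V hC hV⟩

end

section

open Polynomial

/-- Major arc conclusion. -/
def Maj (B : ℝ) (N : ℕ) (P : ℝ[X]) : Prop :=
  ∃ q : ℕ, 1 ≤ q ∧ (q : ℝ) ≤ B ∧ ∀ i, 1 ≤ i → nn (q * P.coeff i) ≤ B / (N : ℝ) ^ i

lemma Maj.mono {B B' : ℝ} {N : ℕ} {P : ℝ[X]} (h : Maj B N P) (hB : B ≤ B') : Maj B' N P := by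
  obtain ⟨q, h1, h2, h3⟩ := h
  refine ⟨q, h1, h2.trans hB, fun i hi => (h3 i hi).trans ?_⟩
  gcongr

lemma ordc_Icc (s : Finset ℤ) (h : ∀ a ∈ s, ∀ b ∈ s, ∀ c, a ≤ c → c ≤ b → c ∈ s) (lo hi : ℤ)
    (hs : ∀ a ∈ s, lo ≤ a ∧ a ≤ hi) : ∃ u v : ℤ, lo ≤ u ∧ v ≤ hi ∧ s = Finset.Icc u v := by
  rcases s.eq_empty_or_nonempty with rfl | hne
  · refine ⟨lo, min hi (lo - 1), le_rfl, min_le_left _ _, ?_⟩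
    rw [Finset.Icc_eq_empty]
    intro hh
    have := hh.trans (min_le_right _ _)
    omega
  · refine ⟨s.min' hne, s.max' hne, (hs _ (s.min'_mem hne)).1, (hs _ (s.max'_mem hne)).2, ?_⟩
    ext c
    rw [Finset.mem_Icc]
    constructor
    · intro hc
      exact ⟨s.min'_le c hc, s.le_max' c hc⟩
    · rintro ⟨h1, h2⟩
      exact h _ (s.min'_mem hne) _ (s.max'_mem hne) c h1 h2

lemma nat_conv (s : Finset ℕ) (N : ℕ) (h : ∀ a ∈ s, ∀ b ∈ s, ∀ c, a ≤ c → c ≤ b → c ∈ s)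
    (hs : ∀ a ∈ s, a ≤ N) : ∃ u v : ℤ, -(N : ℤ) ≤ u ∧ v ≤ N ∧
      ∀ G : ℝ → ℂ, ∑ b ∈ s, G b = ∑ n ∈ Finset.Icc u v, G n := by
  obtain ⟨u, v, hu, hv, e⟩ := ordc_Icc (s.map Nat.castEmbedding) (by
    intro a ha b hb c hac hcb
    rw [Finset.mem_map] at ha hb ⊢
    obtain ⟨a', ha', rfl⟩ := ha
    obtain ⟨b', hb', rfl⟩ := hb
    simp only [Nat.castEmbedding_apply] at *
    refine ⟨c.toNat, h a' ha' b' hb' _ (by omega) (by omega), by omega⟩) (-(N : ℤ)) N (by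
    intro a ha
    rw [Finset.mem_map] at ha
    obtain ⟨a', ha', rfl⟩ := ha
    have := hs a' ha'
    simp only [Nat.castEmbedding_apply]
    omega)
  refine ⟨u, v, hu, hv, fun G => ?_⟩
  rw [← e, Finset.sum_map]
  simp

lemma weylNat (d C : ℕ) (hW : WeylS d C) (R : ℝ) (hR : 2 ≤ R) (N : ℕ) (hN : R ^ C ≤ N)
    (P : ℝ[X]) (hP : P.natDegree ≤ d) (s : Finset ℕ)
    (h : ∀ a ∈ s, ∀ b ∈ s, ∀ c, a ≤ c → c ≤ b → c ∈ s) (hs : ∀ a ∈ s, a ≤ N)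
    (hS : (N : ℝ) ≤ R * ‖∑ n ∈ s, eC (P.eval (n : ℝ))‖) : Maj (R ^ C) N P := by
  obtain ⟨u, v, hu, hv, e⟩ := nat_conv s N h hs
  rw [e (fun x => eC (P.eval x))] at hS
  exact hW R hR N hN P hP u v hu hv hS

lemma natDegree_comp_C_mul_X_le (P : ℝ[X]) (r : ℝ) :
    (P.comp (Polynomial.C r * X)).natDegree ≤ P.natDegree := by
  refine natDegree_comp_le.trans ?_
  have : (Polynomial.C r * X : ℝ[X]).natDegree ≤ 1 := (natDegree_C_mul_le _ _).trans natDegree_X_le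
  nlinarith

/-- Type I: a single dilate. -/
lemma type1 (d C : ℕ) (hW : WeylS d C) (R : ℝ) (hR : 2 ≤ R) (N : ℕ) (hN : R ^ C ≤ N)
    (P : ℝ[X]) (hP : P.natDegree ≤ d) (m : ℕ) (hm : 1 ≤ m) (hmR : (m : ℝ) ≤ R) (s : Finset ℕ)
    (h : ∀ a ∈ s, ∀ b ∈ s, ∀ c, a ≤ c → c ≤ b → c ∈ s) (hs : ∀ a ∈ s, a ≤ N)
    (hS : (N : ℝ) ≤ R * ‖∑ n ∈ s, eC (P.eval ((m * n : ℕ) : ℝ))‖) : Maj (R ^ (C + d)) N P := by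
  have hR0 : 0 < R := by linarith
  have hm1 : (1 : ℝ) ≤ m := by exact_mod_cast hm
  obtain ⟨q, h1, h2, h3⟩ := weylNat d C hW R hR N hN (P.comp (Polynomial.C (m : ℝ) * X))
    ((natDegree_comp_C_mul_X_le P m).trans hP) s h hs (by
      refine hS.trans (le_of_eq ?_)
      congr 2
      refine Finset.sum_congr rfl fun n _ => ?_
      simp [eval_comp])
  refine ⟨q * m ^ d, Nat.one_le_iff_ne_zero.2 (by positivity), ?_, ?_⟩
  · push_cast
    rw [pow_add]
    gcongr
  · intro i hi
    rcases Nat.lt_or_ge d i with hdi | hdi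
    · rw [coeff_eq_zero_of_natDegree_lt (by omega), mul_zero, nn_zero]
      positivity
    have h4 := h3 i hi
    rw [comp_C_mul_X_coeff] at h4
    have e : ((q * m ^ d : ℕ) : ℝ) * P.coeff i
        = ((m ^ (d - i) : ℕ) : ℝ) * (q * (P.coeff i * (m : ℝ) ^ i)) := by
      push_cast
      rw [← Nat.sub_add_cancel hdi, pow_add, Nat.sub_add_cancel hdi]
      ring
    rw [e]
    refine (nn_nat_mul _ _).trans ?_
    have h5 : ((m ^ (d - i) : ℕ) : ℝ) ≤ R ^ d := by
      push_cast
      calc (m : ℝ) ^ (d - i) ≤ (m : ℝ) ^ d := pow_le_pow_right₀ hm1 (by omega)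
        _ ≤ R ^ d := by gcongr
    calc ((m ^ (d - i) : ℕ) : ℝ) * nn (q * (P.coeff i * (m : ℝ) ^ i))
        ≤ R ^ d * (R ^ C / N ^ i) := by
          apply mul_le_mul h5 h4 (nn_nonneg _) (by positivity)
      _ = _ := by rw [pow_add]; ring

/-- Abel summation bound. -/
lemma abel_aux (w : ℕ → ℝ) (z : ℕ → ℂ) (G : ℝ) (y : ℕ)
    (l : ℕ) : ∀ x, x + l = y → (∀ x', x ≤ x' → ‖∑ n ∈ Finset.Icc x' y, z n‖ ≤ G) →
    ‖∑ n ∈ Finset.Icc x y, (w n : ℂ) * z n - w x * ∑ n ∈ Finset.Icc x y, z n‖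
      ≤ (∑ j ∈ Finset.Ico x y, |w (j + 1) - w j|) * G := by
  induction l with
  | zero =>
    intro x hx hG
    obtain rfl : x = y := by omega
    simp
  | succ l ih =>
    intro x hx hG
    have hxy : x < y := by omega
    have i1 := ih (x + 1) (by omega) (fun x' hx' => hG x' (by omega))
    have i2 := hG (x + 1) (by omega)
    have e1 : ∀ f : ℕ → ℂ, ∑ n ∈ Finset.Icc x y, f n = f x + ∑ n ∈ Finset.Icc (x + 1) y, f n := by
      intro f
      rw [← Finset.insert_Icc_add_one_left_eq_Icc (by omega : x ≤ y), Finset.sum_insert (by simp)]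
    rw [e1, e1, Finset.sum_eq_sum_Ico_succ_bot hxy]
    set A := ∑ n ∈ Finset.Icc (x + 1) y, (w n : ℂ) * z n
    set Z := ∑ n ∈ Finset.Icc (x + 1) y, z n
    have e2 : (w x : ℂ) * z x + A - w x * (z x + Z) = (A - w (x + 1) * Z)
        + ((w (x + 1) - w x : ℝ) : ℂ) * Z := by push_cast; ring
    rw [e2]
    refine (norm_add_le _ _).trans ?_
    rw [norm_mul, Complex.norm_real, Real.norm_eq_abs]
    have := mul_le_mul_of_nonneg_left i2 (abs_nonneg (w (x + 1) - w x))
    linarith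

lemma abel_bound (w : ℕ → ℝ) (hw : Monotone w ∨ Antitone w) (W : ℝ) (hW : ∀ n, |w n| ≤ W)
    (z : ℕ → ℂ) (G : ℝ) (hG0 : 0 ≤ G) (x y : ℕ)
    (hG : ∀ x', x ≤ x' → ‖∑ n ∈ Finset.Icc x' y, z n‖ ≤ G) :
    ‖∑ n ∈ Finset.Icc x y, (w n : ℂ) * z n‖ ≤ 3 * W * G := by
  have hW0 : 0 ≤ W := (abs_nonneg _).trans (hW 0)
  rcases Nat.lt_or_ge y x with h | h
  · rw [Finset.Icc_eq_empty (by omega)]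
    simp
    positivity
  have h1 := abel_aux w z G y (y - x) x (by omega) hG
  have h2 : ∑ j ∈ Finset.Ico x y, |w (j + 1) - w j| ≤ 2 * W := by
    have hx := abs_le.1 (hW x)
    have hy := abs_le.1 (hW y)
    rcases hw with hw | hw
    · have : ∑ j ∈ Finset.Ico x y, |w (j + 1) - w j| = ∑ j ∈ Finset.Ico x y, (w (j + 1) - w j) :=
        Finset.sum_congr rfl fun j _ => abs_of_nonneg (sub_nonneg.2 (hw (Nat.le_succ j)))
      rw [this, Finset.sum_Ico_sub w h]
      linarith
    · have : ∑ j ∈ Finset.Ico x y, |w (j + 1) - w j|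
          = -∑ j ∈ Finset.Ico x y, (w (j + 1) - w j) := by
        rw [← Finset.sum_neg_distrib]
        exact Finset.sum_congr rfl fun j _ => abs_of_nonpos (sub_nonpos.2 (hw (Nat.le_succ j)))
      rw [this, Finset.sum_Ico_sub w h]
      linarith
  have h3 : ‖(w x : ℂ) * ∑ n ∈ Finset.Icc x y, z n‖ ≤ W * G := by
    rw [norm_mul, Complex.norm_real, Real.norm_eq_abs]
    exact mul_le_mul (hW x) (hG x le_rfl) (norm_nonneg _) hW0
  have h4 := norm_sub_norm_le (∑ n ∈ Finset.Icc x y, (w n : ℂ) * z n)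
    (w x * ∑ n ∈ Finset.Icc x y, z n)
  have h5 := mul_le_mul_of_nonneg_right h2 hG0
  linarith

end

section

open Polynomial

lemma cs_bilinear (A T : Finset ℕ) (α β : ℕ → ℂ) (R : ℝ) (hR : 0 ≤ R)
    (hα : ∀ a, ‖α a‖ ≤ R) (hβ : ∀ b, ‖β b‖ ≤ R) (z : ℕ → ℕ → ℂ) :
    ‖∑ a ∈ A, ∑ b ∈ T, α a * β b * z a b‖ ^ 2 ≤
      R ^ 4 * T.card * ∑ a' ∈ A, ∑ a ∈ A, ‖∑ b ∈ T, z a b * (starRingEnd ℂ) (z a' b)‖ := by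
  have e1 : ∑ a ∈ A, ∑ b ∈ T, α a * β b * z a b = ∑ b ∈ T, β b * ∑ a ∈ A, α a * z a b := by
    rw [Finset.sum_comm]
    refine Finset.sum_congr rfl fun b _ => ?_
    rw [Finset.mul_sum]
    exact Finset.sum_congr rfl fun a _ => by ring
  rw [e1]
  have h1 : ‖∑ b ∈ T, β b * ∑ a ∈ A, α a * z a b‖ ≤ ∑ b ∈ T, R * ‖∑ a ∈ A, α a * z a b‖ := by
    refine (norm_sum_le _ _).trans (Finset.sum_le_sum fun b _ => ?_)
    rw [norm_mul]
    exact mul_le_mul_of_nonneg_right (hβ b) (norm_nonneg _)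
  rw [← Finset.mul_sum] at h1
  have h2 : (∑ b ∈ T, ‖∑ a ∈ A, α a * z a b‖) ^ 2
      ≤ T.card * ∑ b ∈ T, ‖∑ a ∈ A, α a * z a b‖ ^ 2 := sq_sum_le_card_mul_sum_sq
  have h3 : ∑ b ∈ T, ‖∑ a ∈ A, α a * z a b‖ ^ 2
      ≤ R ^ 2 * ∑ a' ∈ A, ∑ a ∈ A, ‖∑ b ∈ T, z a b * (starRingEnd ℂ) (z a' b)‖ := by
    have e2 : ((∑ b ∈ T, ‖∑ a ∈ A, α a * z a b‖ ^ 2 : ℝ) : ℂ)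
        = ∑ a' ∈ A, ∑ a ∈ A, (α a * (starRingEnd ℂ) (α a')) *
            ∑ b ∈ T, z a b * (starRingEnd ℂ) (z a' b) := by
      push_cast
      have : ∀ b ∈ T, ((‖∑ a ∈ A, α a * z a b‖ : ℂ)) ^ 2 = ∑ a' ∈ A, ∑ a ∈ A,
          (α a * (starRingEnd ℂ) (α a')) * (z a b * (starRingEnd ℂ) (z a' b)) := by
        intro b _
        rw [← Complex.mul_conj', map_sum, Finset.sum_mul_sum, Finset.sum_comm]
        refine Finset.sum_congr rfl fun a' _ => Finset.sum_congr rfl fun a _ => ?_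
        rw [map_mul]; ring
      rw [Finset.sum_congr rfl this, Finset.sum_comm]
      refine Finset.sum_congr rfl fun a' _ => ?_
      rw [Finset.sum_comm]
      refine Finset.sum_congr rfl fun a _ => ?_
      rw [Finset.mul_sum]
    have h4 : (∑ b ∈ T, ‖∑ a ∈ A, α a * z a b‖ ^ 2 : ℝ)
        = ‖((∑ b ∈ T, ‖∑ a ∈ A, α a * z a b‖ ^ 2 : ℝ) : ℂ)‖ := by
      rw [Complex.norm_real, Real.norm_eq_abs, abs_of_nonneg (Finset.sum_nonneg fun _ _ => by positivity)]
    rw [h4, e2]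
    refine (norm_sum_le _ _).trans ?_
    rw [Finset.mul_sum]
    refine Finset.sum_le_sum fun a' _ => (norm_sum_le _ _).trans ?_
    rw [Finset.mul_sum]
    refine Finset.sum_le_sum fun a _ => ?_
    rw [norm_mul, norm_mul, RCLike.norm_conj]
    refine mul_le_mul_of_nonneg_right ?_ (norm_nonneg _)
    rw [pow_two]
    exact mul_le_mul (hα a) (hα a') (norm_nonneg _) hR
  calc ‖∑ b ∈ T, β b * ∑ a ∈ A, α a * z a b‖ ^ 2
      ≤ (R * ∑ b ∈ T, ‖∑ a ∈ A, α a * z a b‖) ^ 2 := by gcongr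
    _ = R ^ 2 * (∑ b ∈ T, ‖∑ a ∈ A, α a * z a b‖) ^ 2 := by ring
    _ ≤ R ^ 2 * (T.card * (R ^ 2 *
          ∑ a' ∈ A, ∑ a ∈ A, ‖∑ b ∈ T, z a b * (starRingEnd ℂ) (z a' b)‖)) := by
        gcongr
        exact h2.trans (by gcongr)
    _ = _ := by ring

/-- Final step of type II: from many `a` with `q c_i (a^i - a'^i)` near integer. -/
lemma type2_vino (d V : ℕ) (hV : VinoS d V) (R : ℝ) (hR : 2 ≤ R) (M : ℕ)
    (hM : R ^ V ≤ M) (c : ℕ → ℝ) (ε : ℕ → ℝ) (hε0 : ∀ i, 0 ≤ ε i)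
    (hε : ∀ i, 1 ≤ i → ε i * R ^ V ≤ 1) (H : Finset ℤ)
    (hH : ∀ h ∈ H, |h| ≤ (M : ℤ)) (hHc : (M : ℝ) ≤ R * H.card) (a' : ℝ)
    (hh : ∀ h ∈ H, ∀ i, 1 ≤ i → nn (c i * ((h : ℝ) ^ i - a' ^ i)) ≤ ε i) :
    ∃ q : ℕ, 1 ≤ q ∧ (q : ℝ) ≤ R ^ (V * d) ∧ ∀ i, 1 ≤ i → i ≤ d →
      nn (q * c i) ≤ ε i * R ^ (V * d) / (M : ℝ) ^ i := by
  have hR0 : 0 < R := by linarith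
  have hR1 : 1 ≤ R := by linarith
  have key : ∀ i, 1 ≤ i → i ≤ d → ∃ q : ℕ, 1 ≤ q ∧ (q : ℝ) ≤ R ^ V ∧
      nn (q * c i) ≤ ε i * R ^ V / (M : ℝ) ^ i := by
    intro i hi hid
    obtain ⟨q, h1, h2, h3⟩ := hV R hR M hM
      (Polynomial.C (c i) * X ^ i - Polynomial.C (c i * a' ^ i)) (by
        refine (natDegree_sub_le _ _).trans ?_
        rw [natDegree_C]
        refine max_le ((natDegree_C_mul_X_pow_le _ _).trans hid) (by omega)) (ε i) (hε0 i)
      (hε i hi) H hH hHc (by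
        intro h hhH
        have := hh h hhH i hi
        simpa [mul_sub] using this)
    refine ⟨q, h1, h2, ?_⟩
    have := h3 i
    rw [coeff_sub, coeff_C_mul_X_pow, if_pos rfl, coeff_C, if_neg (by omega), sub_zero] at this
    exact this
  choose! Q hQ1 hQ2 hQ3 using key
  have hsub : ∀ i ∈ Finset.Icc 1 d, 1 ≤ i ∧ i ≤ d := fun i hi => Finset.mem_Icc.1 hi
  refine ⟨∏ i ∈ Finset.Icc 1 d, Q i, ?_, ?_, ?_⟩
  · exact Nat.one_le_iff_ne_zero.2 (Finset.prod_ne_zero_iff.2 fun i hi => by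
      have := hQ1 i (hsub i hi).1 (hsub i hi).2
      omega)
  · push_cast
    calc ∏ i ∈ Finset.Icc 1 d, (Q i : ℝ) ≤ ∏ i ∈ Finset.Icc 1 d, R ^ V :=
          Finset.prod_le_prod (fun _ _ => by positivity)
            fun i hi => hQ2 i (hsub i hi).1 (hsub i hi).2
      _ = R ^ (V * d) := by simp [pow_mul]
  · intro i hi hid
    have him : i ∈ Finset.Icc 1 d := Finset.mem_Icc.2 ⟨hi, hid⟩
    rw [← Finset.prod_erase_mul _ _ him]
    have e : (((∏ x ∈ (Finset.Icc 1 d).erase i, Q x) * Q i : ℕ) : ℝ) * c i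
        = ((∏ x ∈ (Finset.Icc 1 d).erase i, Q x : ℕ) : ℝ) * (Q i * c i) := by push_cast; ring
    rw [e]
    refine (nn_nat_mul _ _).trans ?_
    have h5 : ((∏ x ∈ (Finset.Icc 1 d).erase i, Q x : ℕ) : ℝ) ≤ R ^ (V * (d - 1)) := by
      push_cast
      calc ∏ x ∈ (Finset.Icc 1 d).erase i, (Q x : ℝ) ≤ ∏ x ∈ (Finset.Icc 1 d).erase i, R ^ V :=
            Finset.prod_le_prod (fun _ _ => by positivity) fun x hx => by
              have hx' := hsub x (Finset.mem_of_mem_erase hx)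
              exact hQ2 x hx'.1 hx'.2
        _ = R ^ (V * (d - 1)) := by
            simp [pow_mul, Finset.card_erase_of_mem him]
    calc _ ≤ R ^ (V * (d - 1)) * (ε i * R ^ V / (M : ℝ) ^ i) :=
          mul_le_mul h5 (hQ3 i hi hid) (nn_nonneg _) (by positivity)
      _ = ε i * (R ^ (V * (d - 1)) * R ^ V) / (M : ℝ) ^ i := by ring
      _ = _ := by
          rw [← pow_add]
          congr 3
          obtain ⟨e, rfl⟩ : ∃ e, d = e + 1 := ⟨d - 1, by omega⟩
          simp; ring

end

section

open Polynomial

/-- the type II summand -/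
noncomputable def zT (P : ℝ[X]) (x y a b : ℕ) : ℂ :=
  if x ≤ a * b ∧ a * b ≤ y then eC (P.eval ((a * b : ℕ) : ℝ)) else 0

lemma norm_zT_le (P : ℝ[X]) (x y a b : ℕ) : ‖zT P x y a b‖ ≤ 1 := by
  unfold zT
  split_ifs <;> simp [norm_eC]

lemma zT_mul_conj (P : ℝ[X]) (x y a a' B : ℕ) :
    ∑ b ∈ Finset.Icc 1 B, zT P x y a b * (starRingEnd ℂ) (zT P x y a' b)
      = ∑ b ∈ (Finset.Icc 1 B).filter
          (fun b => (x ≤ a * b ∧ a * b ≤ y) ∧ (x ≤ a' * b ∧ a' * b ≤ y)),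
        eC ((P.comp (Polynomial.C (a : ℝ) * X) - P.comp (Polynomial.C (a' : ℝ) * X)).eval
          (b : ℝ)) := by
  rw [Finset.sum_filter]
  refine Finset.sum_congr rfl fun b _ => ?_
  unfold zT
  by_cases h1 : x ≤ a * b ∧ a * b ≤ y
  · by_cases h2 : x ≤ a' * b ∧ a' * b ≤ y
    · rw [if_pos h1, if_pos h2, if_pos ⟨h1, h2⟩, ← eC_neg, ← eC_add]
      congr 1
      simp [eval_comp, sub_eq_add_neg]
    · rw [if_neg h2, map_zero, mul_zero, if_neg (fun h => h2 h.2)]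
  · rw [if_neg h1, zero_mul, if_neg (fun h => h1 h.1)]

set_option maxHeartbeats 1000000 in
lemma type2 (d C V : ℕ) (hW : WeylS d C) (hV : VinoS d V) (R : ℝ) (hR : 2 ≤ R) (N D B : ℕ)
    (hD1 : 1 ≤ D) (hB : B = N / D) (hDR : R ^ (7 * C + (7 * C + 8) * V * (d + 1)) ≤ D)
    (hBR : R ^ (7 * C + (7 * C + 8) * V * (d + 1)) ≤ B) (P : ℝ[X]) (hP : P.natDegree ≤ d)
    (α β : ℕ → ℂ) (hα : ∀ a, ‖α a‖ ≤ R) (hβ : ∀ b, ‖β b‖ ≤ R) (x y : ℕ)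
    (hS : (N : ℝ) ≤ R * ‖∑ a ∈ Finset.Ico D (2 * D), ∑ b ∈ Finset.Icc 1 B,
      α a * β b * zT P x y a b‖) :
    Maj (R ^ (7 * C + (7 * C + 8) * V * (d + 1))) N P := by
  classical
  set K := 7 * C + (7 * C + 8) * V * (d + 1) with hK
  have hR0 : 0 < R := by linarith
  have hR1 : 1 ≤ R := by linarith
  have hB1 : (1 : ℝ) ≤ B := (one_le_pow₀ hR1).trans hBR
  have hD1' : (1 : ℝ) ≤ D := by exact_mod_cast hD1
  have hBD : (B : ℝ) * D ≤ N := by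
    have : B * D ≤ N := by rw [hB]; exact Nat.div_mul_le_self N D
    exact_mod_cast this
  have hBD2 : (N : ℝ) ≤ B * (2 * D) := by
    have h1 : N < D * (N / D + 1) := Nat.lt_mul_div_succ N hD1
    rw [← hB] at h1
    have h2 : (N : ℝ) < D * (B + 1) := by exact_mod_cast h1
    nlinarith
  have hNpos : (0 : ℝ) < N := by nlinarith
  set A := Finset.Ico D (2 * D) with hA
  have hAc : A.card = D := by rw [hA, Nat.card_Ico]; omega
  set g : ℕ → ℕ → ℝ := fun a' a =>
    ‖∑ b ∈ Finset.Icc 1 B, zT P x y a b * (starRingEnd ℂ) (zT P x y a' b)‖ with hg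
  have hgB : ∀ a' a, g a' a ≤ B := by
    intro a' a
    refine (norm_sum_le _ _).trans ?_
    have : ∀ b ∈ Finset.Icc 1 B, ‖zT P x y a b * (starRingEnd ℂ) (zT P x y a' b)‖ ≤ 1 := by
      intro b _
      rw [norm_mul, RCLike.norm_conj]
      exact mul_le_one₀ (norm_zT_le _ _ _ _ _) (norm_nonneg _) (norm_zT_le _ _ _ _ _)
    refine (Finset.sum_le_sum this).trans ?_
    simp
  have hcs := cs_bilinear A (Finset.Icc 1 B) α β R hR0.le hα hβ (zT P x y)
  rw [Nat.card_Icc, Nat.add_sub_cancel] at hcs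
  set S := ‖∑ a ∈ A, ∑ b ∈ Finset.Icc 1 B, α a * β b * zT P x y a b‖ with hSdef
  have hsum : (N : ℝ) * D / R ^ 6 ≤ ∑ a' ∈ A, ∑ a ∈ A, g a' a := by
    rw [div_le_iff₀ (by positivity)]
    have h1 : (N : ℝ) ^ 2 ≤ R ^ 2 * S ^ 2 := by
      rw [← mul_pow]; gcongr
    have h2 : (N : ℝ) ^ 2 ≤ R ^ 6 * B * ∑ a' ∈ A, ∑ a ∈ A, g a' a := by
      calc (N : ℝ) ^ 2 ≤ R ^ 2 * S ^ 2 := h1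
        _ ≤ R ^ 2 * (R ^ 4 * B * ∑ a' ∈ A, ∑ a ∈ A, g a' a) := by gcongr
        _ = _ := by ring
    have h3 : (B : ℝ) * (N * D) ≤ B * ((∑ a' ∈ A, ∑ a ∈ A, g a' a) * R ^ 6) := by
      calc (B : ℝ) * (N * D) = N * (B * D) := by ring
        _ ≤ N * N := by gcongr
        _ = (N : ℝ) ^ 2 := by ring
        _ ≤ _ := h2
        _ = _ := by ring
    exact le_of_mul_le_mul_left h3 (by linarith)
  obtain ⟨a', haAmem, ha'⟩ : ∃ a' ∈ A, (N : ℝ) / R ^ 6 ≤ ∑ a ∈ A, g a' a := by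
    apply Finset.exists_le_of_sum_le (Finset.card_pos.1 (by omega))
    rw [Finset.sum_const, hAc, nsmul_eq_mul]
    refine le_trans (le_of_eq ?_) hsum
    ring
  have hpop := popular A (g a') B D ((N : ℝ) / R ^ 6) (by rw [hAc]) (by linarith) (by positivity)
    (fun a _ => hgB a' a) ha'
  set T := A.filter (fun a => (N : ℝ) / R ^ 6 ≤ 2 * D * g a' a) with hT
  have hTc : (D : ℝ) ≤ 2 * R ^ 6 * T.card := by
    rw [div_le_iff₀ (by positivity)] at hpop
    have : (B : ℝ) * D ≤ B * (2 * R ^ 6 * T.card) := by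
      refine hBD.trans (hpop.trans (le_of_eq ?_)); ring
    exact le_of_mul_le_mul_left this (by linarith)
  have hTne : T.Nonempty := by
    rw [← Finset.card_pos]
    by_contra hcon
    have : T.card = 0 := by omega
    rw [this, Nat.cast_zero, mul_zero] at hTc
    linarith
  have hpc : (R ^ 7) ^ C = R ^ (7 * C) := by rw [pow_mul]
  have hex : ∀ a ∈ T, ∃ q : ℕ, 1 ≤ q ∧ (q : ℝ) ≤ R ^ (7 * C) ∧ ∀ i, 1 ≤ i →
      nn (q * (P.coeff i * ((a : ℝ) ^ i - (a' : ℝ) ^ i))) ≤ R ^ (7 * C) / B ^ i := by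
    intro a ha
    have ha2 := (Finset.mem_filter.1 ha).2
    have haA := Finset.mem_Ico.1 (Finset.mem_filter.1 ha).1
    have haApr := Finset.mem_Ico.1 haAmem
    obtain ⟨q, h1, h2, h3⟩ := weylNat d C hW (R ^ 7) (le_trans hR (by
        simpa using pow_chain hR (show 1 ≤ 7 by norm_num))) B
      (by rw [hpc]; exact (pow_chain hR (by omega)).trans hBR)
      (P.comp (Polynomial.C (a : ℝ) * X) - P.comp (Polynomial.C (a' : ℝ) * X))
      (by
        refine (natDegree_sub_le _ _).trans (max_le ?_ ?_)
        · exact (natDegree_comp_C_mul_X_le P _).trans hP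
        · exact (natDegree_comp_C_mul_X_le P _).trans hP)
      ((Finset.Icc 1 B).filter
          (fun b => (x ≤ a * b ∧ a * b ≤ y) ∧ (x ≤ a' * b ∧ a' * b ≤ y)))
      (by
        intro u hu v hv c huc hcv
        rw [Finset.mem_filter, Finset.mem_Icc] at hu hv ⊢
        have m1 := Nat.mul_le_mul_left a huc
        have m2 := Nat.mul_le_mul_left a' huc
        have m3 := Nat.mul_le_mul_left a hcv
        have m4 := Nat.mul_le_mul_left a' hcv
        refine ⟨⟨?_, ?_⟩, ⟨?_, ?_⟩, ?_, ?_⟩ <;> omega)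
      (fun b hb => (Finset.mem_Icc.1 (Finset.mem_filter.1 hb).1).2)
      (by
        rw [← zT_mul_conj]
        change (B : ℝ) ≤ R ^ 7 * g a' a
        rw [div_le_iff₀ (by positivity)] at ha2
        have hg0 : 0 ≤ g a' a := norm_nonneg _
        have h16 : 2 * R ^ 6 ≤ R ^ 7 := const_mul_le hR 2 6 7 1 (by norm_num) (by norm_num)
        have : (D : ℝ) * B ≤ D * (2 * R ^ 6 * g a' a) := by
          calc (D : ℝ) * B = B * D := by ring
            _ ≤ _ := hBD
            _ ≤ _ := ha2
            _ = _ := by ring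
        refine (le_of_mul_le_mul_left this (by linarith)).trans ?_
        gcongr)
    refine ⟨q, h1, hpc ▸ h2, fun i hi => ?_⟩
    have := h3 i hi
    rw [coeff_sub, comp_C_mul_X_coeff, comp_C_mul_X_coeff, hpc, ← mul_sub] at this
    exact this
  choose! Q hQ1 hQ2 hQ3 using hex
  obtain ⟨q, hq1, hq2, hq3⟩ := pigeon_nat T hTne Q (R ^ (7 * C)) (fun t ht => ⟨hQ1 t ht, hQ2 t ht⟩)
  set T' := T.filter (fun t => Q t = q) with hT'
  have hR2 : (2 : ℝ) ≤ R ^ (7 * C + 8) := hR.trans (by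
    simpa using pow_chain hR (show 1 ≤ 7 * C + 8 by omega))
  have hT'c : ((2 * D : ℕ) : ℝ) ≤ R ^ (7 * C + 8) * T'.card := by
    push_cast
    calc (2 : ℝ) * D ≤ 2 * (2 * R ^ 6 * T.card) := by gcongr
      _ ≤ 2 * (2 * R ^ 6 * (R ^ (7 * C) * T'.card)) := by gcongr
      _ = (4 * R ^ (7 * C + 6)) * T'.card := by rw [pow_add]; ring
      _ ≤ R ^ (7 * C + 8) * T'.card := by
          gcongr
          exact const_mul_le hR 4 _ _ 2 (by norm_num) (by omega)
  have hVK : (R ^ (7 * C + 8)) ^ V ≤ R ^ K := by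
    rw [← pow_mul]
    refine pow_chain hR ?_
    rw [hK]; nlinarith
  have hle1 : (7 * C + 8) * V ≤ (7 * C + 8) * V * (d + 1) :=
    Nat.le_mul_of_pos_right _ (Nat.succ_pos d)
  have hεK : R ^ (7 * C) * (R ^ (7 * C + 8)) ^ V ≤ R ^ K := by
    rw [← pow_mul, ← pow_add]
    refine pow_chain hR ?_
    omega
  obtain ⟨q2, hq21, hq22, hq23⟩ := type2_vino d V hV (R ^ (7 * C + 8)) hR2 (2 * D)
    (hVK.trans (hDR.trans (by push_cast; linarith))) (fun i => q * P.coeff i)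
    (fun i => R ^ (7 * C) / B ^ i) (fun i => by positivity)
    (by
      intro i hi
      rw [div_mul_eq_mul_div, div_le_one (by positivity)]
      calc R ^ (7 * C) * (R ^ (7 * C + 8)) ^ V ≤ R ^ K := hεK
        _ ≤ B := hBR
        _ = (B : ℝ) ^ 1 := by simp
        _ ≤ (B : ℝ) ^ i := pow_le_pow_right₀ hB1 hi)
    (T'.map Nat.castEmbedding)
    (by
      intro h hh
      rw [Finset.mem_map] at hh
      obtain ⟨t, ht, rfl⟩ := hh
      have := Finset.mem_Ico.1 (Finset.mem_filter.1 (Finset.mem_filter.1 ht).1).1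
      simp only [Nat.castEmbedding_apply]
      rw [abs_of_nonneg (by positivity)]
      omega)
    (by rw [Finset.card_map]; exact hT'c) a'
    (by
      intro h hh i hi
      rw [Finset.mem_map] at hh
      obtain ⟨t, ht, rfl⟩ := hh
      have ht1 := Finset.mem_filter.1 ht
      have := hQ3 t ht1.1 i hi
      rw [ht1.2] at this
      simp only [Nat.castEmbedding_apply, Int.cast_natCast]
      rw [mul_assoc]
      exact this)
  have hpow2 : (R ^ (7 * C + 8)) ^ (V * d) * R ^ (7 * C) ≤ R ^ K := by
    rw [← pow_mul, ← pow_add]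
    refine pow_chain hR ?_
    rw [hK]; nlinarith
  refine ⟨q2 * q, Nat.one_le_iff_ne_zero.2 (by positivity), ?_, ?_⟩
  · push_cast
    refine le_trans ?_ hpow2
    gcongr
  · intro i hi
    rcases Nat.lt_or_ge d i with hdi | hdi
    · rw [coeff_eq_zero_of_natDegree_lt (by omega), mul_zero, nn_zero]
      positivity
    have h6 := hq23 i hi hdi
    push_cast at h6 ⊢
    rw [mul_assoc]
    refine h6.trans ?_
    rw [div_mul_eq_mul_div, div_div, ← mul_pow]
    have h7 : (N : ℝ) ^ i ≤ (B * (2 * D)) ^ i := by gcongr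
    refine div_le_div₀ (by positivity) ?_ (by positivity) h7
    rw [mul_comm]; exact hpow2

end

section

open Polynomial ArithmeticFunction

lemma conv_sum (f g : ArithmeticFunction ℝ) (P : ℝ[X]) (x y : ℕ) (hx : 1 ≤ x)
    (A T : Finset ℕ) (hAT : ∀ a b, x ≤ a * b → a * b ≤ y → a ∈ A ∧ b ∈ T) :
    ∑ n ∈ Finset.Icc x y, (((f * g) n : ℝ) : ℂ) * eC (P.eval (n : ℝ))
      = ∑ a ∈ A, ∑ b ∈ T, (f a : ℂ) * (g b : ℂ) * zT P x y a b := by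
  classical
  rw [← Finset.sum_product' A T (fun a b => (f a : ℂ) * (g b : ℂ) * zT P x y a b)]
  have h1 : ∑ p ∈ A ×ˢ T, (f p.1 : ℂ) * (g p.2 : ℂ) * zT P x y p.1 p.2
      = ∑ p ∈ (A ×ˢ T).filter (fun p => p.1 * p.2 ∈ Finset.Icc x y),
        (f p.1 : ℂ) * (g p.2 : ℂ) * eC (P.eval ((p.1 * p.2 : ℕ) : ℝ)) := by
    rw [Finset.sum_filter]
    refine Finset.sum_congr rfl fun p _ => ?_
    unfold zT
    by_cases h : x ≤ p.1 * p.2 ∧ p.1 * p.2 ≤ y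
    · rw [if_pos h, if_pos (Finset.mem_Icc.2 h)]
    · rw [if_neg h, if_neg (fun h' => h (Finset.mem_Icc.1 h')), mul_zero]
  rw [h1, ← Finset.sum_fiberwise_of_maps_to (g := fun p : ℕ × ℕ => p.1 * p.2)
    (t := Finset.Icc x y) (fun p hp => (Finset.mem_filter.1 hp).2)]
  refine Finset.sum_congr rfl fun n hn => ?_
  have hn' := Finset.mem_Icc.1 hn
  rw [ArithmeticFunction.mul_apply]
  push_cast
  rw [Finset.sum_mul]
  have e : ((A ×ˢ T).filter (fun p => p.1 * p.2 ∈ Finset.Icc x y)).filter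
      (fun p => p.1 * p.2 = n) = n.divisorsAntidiagonal := by
    ext p
    rw [Finset.mem_filter, Finset.mem_filter, Nat.mem_divisorsAntidiagonal, Finset.mem_product]
    constructor
    · rintro ⟨_, h⟩
      exact ⟨h, by omega⟩
    · rintro ⟨h, _⟩
      exact ⟨⟨hAT _ _ (by omega) (by omega), by rw [h]; exact hn⟩, h⟩
  rw [e]
  refine Finset.sum_congr rfl fun p hp => ?_
  have := (Nat.mem_divisorsAntidiagonal.1 hp).1
  rw [← this]
  push_cast
  rfl

/-- truncation to `n ≤ U` -/
noncomputable def tlo (U : ℕ) (f : ArithmeticFunction ℝ) : ArithmeticFunction ℝ :=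
  ⟨fun n => if n ≤ U then f n else 0, by simp⟩

/-- truncation to `n > U` -/
noncomputable def thi (U : ℕ) (f : ArithmeticFunction ℝ) : ArithmeticFunction ℝ :=
  ⟨fun n => if n ≤ U then 0 else f n, by simp⟩

lemma tlo_apply (U : ℕ) (f : ArithmeticFunction ℝ) (n : ℕ) :
    tlo U f n = if n ≤ U then f n else 0 := rfl
lemma thi_apply (U : ℕ) (f : ArithmeticFunction ℝ) (n : ℕ) :
    thi U f n = if n ≤ U then 0 else f n := rfl

lemma tlo_add_thi (U : ℕ) (f : ArithmeticFunction ℝ) : tlo U f + thi U f = f := by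
  ext n
  rw [ArithmeticFunction.add_apply, tlo_apply, thi_apply]
  split_ifs <;> simp

/-- real Moebius -/
noncomputable def muR : ArithmeticFunction ℝ := ((moebius : ArithmeticFunction ℤ) : ArithmeticFunction ℝ)

/-- real zeta -/
noncomputable def zeR : ArithmeticFunction ℝ := ((zeta : ArithmeticFunction ℕ) : ArithmeticFunction ℝ)

lemma vaughan (U : ℕ) : vonMangoldt = tlo U vonMangoldt + tlo U muR * ArithmeticFunction.log
    - (tlo U vonMangoldt * tlo U muR) * zeR + thi U muR * (thi U vonMangoldt * zeR) := by
  have h1 : vonMangoldt * zeR = ArithmeticFunction.log := vonMangoldt_mul_zeta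
  have h2 : zeR * muR = 1 := coe_zeta_mul_coe_moebius
  have h3 := tlo_add_thi U vonMangoldt
  have h4 := tlo_add_thi U muR
  have h5 : thi U vonMangoldt = thi U vonMangoldt * (zeR * (tlo U muR + thi U muR)) := by
    rw [h4, h2, mul_one]
  have h6 : thi U vonMangoldt = vonMangoldt - tlo U vonMangoldt := by
    rw [eq_sub_iff_add_eq, add_comm]; exact h3
  have h7 : thi U vonMangoldt * zeR * tlo U muR
      = tlo U muR * ArithmeticFunction.log - (tlo U vonMangoldt * tlo U muR) * zeR := by
    rw [h6, ← h1]; ring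
  calc vonMangoldt = tlo U vonMangoldt + thi U vonMangoldt := h3.symm
    _ = tlo U vonMangoldt + (thi U vonMangoldt * zeR * tlo U muR
          + thi U muR * (thi U vonMangoldt * zeR)) := by
        congr 1
        rw [show thi U vonMangoldt * zeR * tlo U muR + thi U muR * (thi U vonMangoldt * zeR)
          = thi U vonMangoldt * (zeR * (tlo U muR + thi U muR)) by ring]
        exact h5
    _ = _ := by rw [h7]; ring

lemma abs_conv_le_log (f g : ArithmeticFunction ℝ) (hf : ∀ n, |f n| ≤ vonMangoldt n)
    (hg : ∀ n, |g n| ≤ 1) (n : ℕ) : |(f * g) n| ≤ Real.log n := by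
  rw [ArithmeticFunction.mul_apply]
  refine (Finset.abs_sum_le_sum_abs _ _).trans ?_
  rw [← vonMangoldt_sum, ← Nat.sum_divisorsAntidiagonal (f := fun i _ => vonMangoldt i)]
  refine Finset.sum_le_sum fun p _ => ?_
  rw [abs_mul]
  calc |f p.1| * |g p.2| ≤ vonMangoldt p.1 * 1 :=
        mul_le_mul (hf _) (hg _) (abs_nonneg _) vonMangoldt_nonneg
    _ = _ := mul_one _

lemma abs_muR_le (n : ℕ) : |muR n| ≤ 1 := by
  unfold muR
  rw [intCoe_apply]
  have := @abs_moebius_le_one n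
  exact_mod_cast this

lemma zeR_apply (n : ℕ) (hn : 1 ≤ n) : zeR n = 1 := by
  unfold zeR
  rw [natCoe_apply, zeta_apply_ne (by omega)]
  simp

lemma abs_zeR_le (n : ℕ) : |zeR n| ≤ 1 := by
  rcases Nat.eq_zero_or_pos n with rfl | h
  · simp
  · rw [zeR_apply n h]; simp

lemma abs_tlo_le (U : ℕ) (f : ArithmeticFunction ℝ) (n : ℕ) : |tlo U f n| ≤ |f n| := by
  rw [tlo_apply]; split_ifs <;> simp
lemma abs_thi_le (U : ℕ) (f : ArithmeticFunction ℝ) (n : ℕ) : |thi U f n| ≤ |f n| := by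
  rw [thi_apply]; split_ifs <;> simp

lemma typeI_sum (f : ℕ → ℝ) (g : ℕ → ℝ) (P : ℝ[X]) (x y N U : ℕ) (F G : ℝ) (hF : 0 ≤ F)
    (hG0 : 0 ≤ G)
    (hf : ∀ a, a ≤ N → |f a| ≤ F) (hfU : ∀ a, U < a → f a = 0)
    (hG : ∀ a, 1 ≤ a → a ≤ U → ‖∑ b ∈ Finset.Icc 1 N, (g b : ℂ) * zT P x y a b‖ ≤ G) :
    ‖∑ a ∈ Finset.Icc 1 N, ∑ b ∈ Finset.Icc 1 N, (f a : ℂ) * (g b : ℂ) * zT P x y a b‖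
      ≤ U * (F * G) := by
  have h1 : ∀ a ∈ Finset.Icc 1 N, ‖∑ b ∈ Finset.Icc 1 N, (f a : ℂ) * (g b : ℂ) * zT P x y a b‖
      ≤ if a ∈ Finset.Icc 1 U then F * G else 0 := by
    intro a ha
    have ha' := Finset.mem_Icc.1 ha
    split_ifs with h
    · have h' := Finset.mem_Icc.1 h
      have : ∑ b ∈ Finset.Icc 1 N, (f a : ℂ) * (g b : ℂ) * zT P x y a b
          = f a * ∑ b ∈ Finset.Icc 1 N, (g b : ℂ) * zT P x y a b := by
        rw [Finset.mul_sum]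
        exact Finset.sum_congr rfl fun b _ => by ring
      rw [this, norm_mul, Complex.norm_real, Real.norm_eq_abs]
      exact mul_le_mul (hf a ha'.2) (hG a h'.1 h'.2) (norm_nonneg _) hF
    · have : U < a := by
        by_contra hc
        exact h (Finset.mem_Icc.2 ⟨ha'.1, by omega⟩)
      rw [hfU a this]
      simp
  refine (norm_sum_le _ _).trans ((Finset.sum_le_sum h1).trans ?_)
  rw [← Finset.sum_filter, Finset.sum_const, nsmul_eq_mul]
  gcongr
  have : (Finset.Icc 1 N).filter (fun a => a ∈ Finset.Icc 1 U) ⊆ Finset.Icc 1 U :=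
    fun a ha => (Finset.mem_filter.1 ha).2
  exact (Finset.card_le_card this).trans (by simp)

lemma zT_sum (P : ℝ[X]) (x y a u v : ℕ) : ∑ b ∈ Finset.Icc u v, zT P x y a b
    = ∑ b ∈ (Finset.Icc u v).filter (fun b => x ≤ a * b ∧ a * b ≤ y),
        eC (P.eval ((a * b : ℕ) : ℝ)) := by
  rw [Finset.sum_filter]
  rfl

lemma sum_dyadic (f : ℕ → ℂ) (J : ℕ) : ∑ a ∈ Finset.Ico 1 (2 ^ J), f a
    = ∑ j ∈ Finset.range J, ∑ a ∈ Finset.Ico (2 ^ j) (2 * 2 ^ j), f a := by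
  induction J with
  | zero => simp
  | succ J ih =>
    rw [Finset.sum_range_succ, ← ih, pow_succ, mul_comm (2 ^ J) 2,
      Finset.sum_Ico_consecutive _ Nat.one_le_two_pow (by omega)]

lemma log_bound (N : ℕ) (hN : 1 ≤ N) (R : ℝ) (hR : 2 ≤ R) (h : Real.log N ≤ R) :
    ((Nat.log 2 N + 1 : ℕ) : ℝ) ≤ 3 * R := by
  have h1 : 2 ^ Nat.log 2 N ≤ N := Nat.pow_log_le_self 2 (by omega)
  have h2 : ((2 : ℝ) ^ Nat.log 2 N) ≤ N := by exact_mod_cast h1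
  have h3 := Real.log_le_log (by positivity) h2
  rw [Real.log_pow] at h3
  have h4 := Real.log_two_gt_d9
  have h5 : (0 : ℝ) ≤ Nat.log 2 N := by positivity
  push_cast
  nlinarith

end

section

open Polynomial ArithmeticFunction

lemma typeII_sum (f g : ℕ → ℝ) (P : ℝ[X]) (x y N U : ℕ) (hN : 1 ≤ N) (hy : y ≤ N)
    (R G : ℝ) (hR : 2 ≤ R) (hlog : Real.log N ≤ R) (hG0 : 0 ≤ G)
    (hf : ∀ a, |f a| ≤ R) (hfU : ∀ a, a ≤ U → f a = 0) (hgU : ∀ b, b ≤ U → g b = 0)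
    (hg : ∀ b, b ≤ N → |g b| ≤ R)
    (hII : ∀ D, 1 ≤ D → U ≤ 2 * D → U ≤ N / D → ∀ α β : ℕ → ℂ, (∀ a, ‖α a‖ ≤ R) →
      (∀ b, ‖β b‖ ≤ R) → ‖∑ a ∈ Finset.Ico D (2 * D), ∑ b ∈ Finset.Icc 1 (N / D),
        α a * β b * zT P x y a b‖ ≤ G) :
    ‖∑ a ∈ Finset.Ico 1 (2 ^ (Nat.log 2 N + 1)), ∑ b ∈ Finset.Icc 1 N,
      (f a : ℂ) * (g b : ℂ) * zT P x y a b‖ ≤ 3 * R * G := by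
  rw [sum_dyadic]
  refine (norm_sum_le _ _).trans ?_
  have key : ∀ j ∈ Finset.range (Nat.log 2 N + 1),
      ‖∑ a ∈ Finset.Ico (2 ^ j) (2 * 2 ^ j), ∑ b ∈ Finset.Icc 1 N,
        (f a : ℂ) * (g b : ℂ) * zT P x y a b‖ ≤ G := by
    intro j _
    set D := 2 ^ j with hD
    have hD1 : 1 ≤ D := Nat.one_le_two_pow
    rcases Nat.lt_or_ge (2 * D) U with h1 | h1
    · rw [Finset.sum_eq_zero]
      · simpa using hG0
      · intro a ha
        rw [hfU a (by have := Finset.mem_Ico.1 ha; omega)]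
        simp
    have hrestr : ∀ a ∈ Finset.Ico D (2 * D), ∑ b ∈ Finset.Icc 1 N,
        (f a : ℂ) * (g b : ℂ) * zT P x y a b = ∑ b ∈ Finset.Icc 1 (N / D),
        (f a : ℂ) * (((if b ≤ N then g b else 0 : ℝ)) : ℂ) * zT P x y a b := by
      intro a ha
      have ha' := Finset.mem_Ico.1 ha
      symm
      have hsub : Finset.Icc 1 (N / D) ⊆ Finset.Icc 1 N :=
        Finset.Icc_subset_Icc_right (Nat.div_le_self N D)
      rw [Finset.sum_subset_zero_on_sdiff hsub]
      · intro b hb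
        rw [Finset.mem_sdiff, Finset.mem_Icc, Finset.mem_Icc] at hb
        have hb2 : N / D < b := by
          by_contra hc
          exact hb.2 ⟨hb.1.1, by omega⟩
        have h3 : N < D * b := by
          rw [Nat.div_lt_iff_lt_mul hD1] at hb2
          rw [mul_comm]; exact hb2
        have h4 : D * b ≤ a * b := Nat.mul_le_mul_right b ha'.1
        unfold zT
        rw [if_neg (by omega), mul_zero]
      · intro b hb
        have := Finset.mem_Icc.1 (hsub hb)
        rw [if_pos this.2]
    rw [Finset.sum_congr rfl hrestr]
    rcases Nat.lt_or_ge (N / D) U with h2 | h2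
    · rw [Finset.sum_eq_zero]
      · simpa using hG0
      · intro a ha
        refine Finset.sum_eq_zero fun b hb => ?_
        rw [hgU b (by have := Finset.mem_Icc.1 hb; omega)]
        simp
    refine hII D hD1 h1 h2 (fun a => (f a : ℂ))
      (fun b => (((if b ≤ N then g b else 0 : ℝ)) : ℂ)) (fun a => ?_) (fun b => ?_)
    · rw [Complex.norm_real]; exact hf a
    · rw [Complex.norm_real, Real.norm_eq_abs]
      split_ifs with h
      · exact hg b h
      · simp; linarith
  refine (Finset.sum_le_card_nsmul _ _ _ key).trans ?_
  rw [Finset.card_range, nsmul_eq_mul]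
  exact mul_le_mul_of_nonneg_right (log_bound N hN R hR hlog) hG0

set_option maxHeartbeats 1000000 in
theorem lamSum (d : ℕ) : ∃ K : ℕ, ∀ R : ℝ, 2 ≤ R → ∀ N : ℕ, Real.log N ≤ R → R ^ K ≤ N →
    ∀ P : ℝ[X], P.natDegree ≤ d → ∀ x y : ℕ, 1 ≤ x → y ≤ N →
    (N : ℝ) ≤ R * ‖∑ n ∈ Finset.Icc x y, ((vonMangoldt n : ℝ) : ℂ) * eC (P.eval (n : ℝ))‖ →
    Maj (R ^ K) N P := by
  obtain ⟨C, hW⟩ := weylZ d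
  obtain ⟨V, hV⟩ := vino d
  set K2 := 7 * C + (7 * C + 8) * V * (d + 1) with hK2
  set u := 6 * K2 with hu
  set K := (2 * u + 10) * (C + d) + u + 8 with hK
  refine ⟨K, ?_⟩
  intro R hR N hlog hN P hP x y hx hy hS
  by_contra hMaj
  have hR0 : 0 < R := by linarith
  have hR1 : 1 ≤ R := by linarith
  have hN1 : (1 : ℝ) ≤ N := (one_le_pow₀ hR1).trans hN
  have hN1' : 1 ≤ N := by exact_mod_cast hN1
  have hNpos : (0 : ℝ) < N := by linarith
  set U := ⌈2 * R ^ u⌉₊ with hU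
  have hUlo : 2 * R ^ u ≤ U := Nat.le_ceil _
  have hUhi : (U : ℝ) ≤ R ^ (u + 2) := by
    have h1 : (U : ℝ) < 2 * R ^ u + 1 := Nat.ceil_lt_add_one (by positivity)
    have h2 : (1 : ℝ) ≤ R ^ u := one_le_pow₀ hR1
    have h3 : 4 * R ^ u ≤ R ^ (u + 2) := const_mul_le hR 4 _ _ 2 (by norm_num) (by omega)
    linarith
  set R1 := R ^ (2 * u + 10) with hR1def
  have hR1two : 2 ≤ R1 := hR.trans (by simpa using pow_chain hR (show 1 ≤ 2 * u + 10 by omega))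
  have hUU : ((U * U : ℕ) : ℝ) ≤ R ^ (2 * u + 4) := by
    push_cast
    calc (U : ℝ) * U ≤ R ^ (u + 2) * R ^ (u + 2) := by gcongr
      _ = _ := by rw [← pow_add]; congr 1; ring
  have hI : ∀ m : ℕ, 1 ≤ m → (m : ℝ) ≤ R1 → ∀ s : Finset ℕ,
      (∀ a ∈ s, ∀ b ∈ s, ∀ c, a ≤ c → c ≤ b → c ∈ s) → (∀ a ∈ s, a ≤ N) →
      ‖∑ n ∈ s, eC (P.eval ((m * n : ℕ) : ℝ))‖ ≤ N / R1 := by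
    intro m hm hmR s hs1 hs2
    by_contra hc
    push Not at hc
    rw [div_lt_iff₀ (by positivity)] at hc
    refine hMaj ((type1 d C hW R1 hR1two N ?_ P hP m hm hmR s hs1 hs2 ?_).mono ?_)
    · rw [hR1def, ← pow_mul]
      refine (pow_chain hR ?_).trans hN
      rw [hK, mul_add]; omega
    · rw [mul_comm]; exact hc.le
    · rw [hR1def, ← pow_mul]
      refine pow_chain hR ?_
      omega
  have hIz : ∀ a : ℕ, 1 ≤ a → (a : ℝ) ≤ R1 → ∀ v, 1 ≤ v →
      ‖∑ b ∈ Finset.Icc v N, zT P x y a b‖ ≤ N / R1 := by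
    intro a ha haR v hv
    rw [zT_sum]
    refine hI a ha haR _ ?_ ?_
    · intro u' hu' v' hv' c huc hcv
      rw [Finset.mem_filter, Finset.mem_Icc] at hu' hv' ⊢
      have m1 := Nat.mul_le_mul_left a huc
      have m3 := Nat.mul_le_mul_left a hcv
      refine ⟨⟨?_, ?_⟩, ?_, ?_⟩ <;> omega
    · intro b hb
      exact (Finset.mem_Icc.1 (Finset.mem_filter.1 hb).1).2
  have hII : ∀ D, 1 ≤ D → U ≤ 2 * D → U ≤ N / D → ∀ α β : ℕ → ℂ, (∀ a, ‖α a‖ ≤ R) →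
      (∀ b, ‖β b‖ ≤ R) → ‖∑ a ∈ Finset.Ico D (2 * D), ∑ b ∈ Finset.Icc 1 (N / D),
        α a * β b * zT P x y a b‖ ≤ N / R ^ 6 := by
    intro D hD1 hUD hUB α β hα hβ
    by_contra hc
    push Not at hc
    rw [div_lt_iff₀ (by positivity)] at hc
    have hRR : R ≤ R ^ 6 := by simpa using pow_chain hR (show 1 ≤ 6 by norm_num)
    have hp : (R ^ 6) ^ K2 = R ^ u := by rw [← pow_mul]
    have hUD' : (U : ℝ) ≤ 2 * D := by exact_mod_cast hUD
    have hUB' : (U : ℝ) ≤ (N / D : ℕ) := by exact_mod_cast hUB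
    have hpos : 0 < R ^ u := by positivity
    refine hMaj ((type2 d C V hW hV (R ^ 6) (hR.trans hRR) N D (N / D) hD1 rfl ?_ ?_ P hP α β
      (fun a => (hα a).trans hRR) (fun b => (hβ b).trans hRR) x y ?_).mono ?_)
    · rw [← hK2, hp]; linarith
    · rw [← hK2, hp]; linarith
    · rw [mul_comm]; exact hc.le
    · rw [← hK2, hp]; exact pow_chain hR (by omega)
  have hlogn : ∀ n, n ≤ N → Real.log n ≤ R := by
    intro n hn
    rcases Nat.eq_zero_or_pos n with rfl | h
    · simp; linarith
    · refine le_trans (Real.log_le_log (by exact_mod_cast h) (by exact_mod_cast hn)) hlog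
  have hLam : ∀ n, |vonMangoldt n| ≤ vonMangoldt n := fun n =>
    le_of_eq (abs_of_nonneg vonMangoldt_nonneg)
  have hR5 : 0 < R ^ 5 := by positivity
  -- term 0
  have t0 : ‖∑ n ∈ Finset.Icc x y, ((tlo U vonMangoldt n : ℝ) : ℂ) * eC (P.eval (n : ℝ))‖
      ≤ N / R ^ 5 := by
    refine (norm_sum_le _ _).trans ?_
    have h1 : ∀ n ∈ Finset.Icc x y, ‖((tlo U vonMangoldt n : ℝ) : ℂ) * eC (P.eval (n : ℝ))‖
        ≤ if n ∈ Finset.Icc 1 U then R else 0 := by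
      intro n hn
      have hn' := Finset.mem_Icc.1 hn
      rw [norm_mul, norm_eC, mul_one, Complex.norm_real, Real.norm_eq_abs]
      split_ifs with h
      · refine (abs_tlo_le _ _ _).trans ((hLam n).trans ?_)
        exact vonMangoldt_le_log.trans (hlogn n (by omega))
      · rw [tlo_apply, if_neg, abs_zero]
        intro hc
        exact h (Finset.mem_Icc.2 ⟨by omega, hc⟩)
    refine (Finset.sum_le_sum h1).trans ?_
    rw [← Finset.sum_filter, Finset.sum_const, nsmul_eq_mul, le_div_iff₀ hR5]
    have h2 : (((Finset.Icc x y).filter (fun a => a ∈ Finset.Icc 1 U)).card : ℝ) ≤ U := by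
      have : (Finset.Icc x y).filter (fun a => a ∈ Finset.Icc 1 U) ⊆ Finset.Icc 1 U :=
        fun a ha => (Finset.mem_filter.1 ha).2
      have h3 := (Finset.card_le_card this).trans (by simp : (Finset.Icc 1 U).card ≤ U)
      exact_mod_cast h3
    calc _ ≤ (U : ℝ) * R * R ^ 5 := by gcongr
      _ ≤ R ^ (u + 2) * R * R ^ 5 := by gcongr
      _ = R ^ (u + 8) := by rw [pow_add, pow_add]; ring
      _ ≤ R ^ K := pow_chain hR (by omega)
      _ ≤ N := hN
  have hAT : ∀ a b, x ≤ a * b → a * b ≤ y → a ∈ Finset.Icc 1 N ∧ b ∈ Finset.Icc 1 N := by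
    intro a b h1 h2
    have h3 : 0 < a * b := by omega
    have ha : 0 < a := Nat.pos_of_mul_pos_right h3
    have hb : 0 < b := Nat.pos_of_mul_pos_left h3
    have h4 : a ≤ a * b := Nat.le_mul_of_pos_right a hb
    have h5 : b ≤ a * b := Nat.le_mul_of_pos_left b ha
    rw [Finset.mem_Icc, Finset.mem_Icc]
    omega
  have hUR1 : ∀ a : ℕ, a ≤ U * U → (a : ℝ) ≤ R1 := by
    intro a ha
    have : (a : ℝ) ≤ ((U * U : ℕ) : ℝ) := by exact_mod_cast ha
    exact this.trans (hUU.trans (pow_chain hR (by omega)))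
  have hU1 : 1 ≤ U := by
    have : (1 : ℝ) ≤ U := by
      have : (1 : ℝ) ≤ R ^ u := one_le_pow₀ hR1
      linarith
    exact_mod_cast this
  -- term 1
  have t1 : ‖∑ n ∈ Finset.Icc x y, (((tlo U muR * ArithmeticFunction.log) n : ℝ) : ℂ)
      * eC (P.eval (n : ℝ))‖ ≤ N / R ^ 5 := by
    rw [conv_sum _ _ P x y hx _ _ hAT]
    refine (typeI_sum (fun a => tlo U muR a) (fun b => ArithmeticFunction.log b) P x y N U 1
      (3 * R * (N / R1)) zero_le_one (by positivity)
      (fun a _ => (abs_tlo_le _ _ _).trans (abs_muR_le a))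
      (fun a ha => by rw [tlo_apply, if_neg (by omega)]) ?_).trans ?_
    · intro a ha haU
      have e : ∑ b ∈ Finset.Icc 1 N, ((ArithmeticFunction.log b : ℝ) : ℂ) * zT P x y a b
          = ∑ b ∈ Finset.Icc 1 N, ((Real.log ((min b N : ℕ) : ℝ) : ℝ) : ℂ) * zT P x y a b := by
        refine Finset.sum_congr rfl fun b hb => ?_
        rw [min_eq_left (Finset.mem_Icc.1 hb).2, ArithmeticFunction.log_apply]
      rw [e]
      refine abel_bound (fun b => Real.log ((min b N : ℕ) : ℝ)) (Or.inl ?_) R ?_ _ _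
        (by positivity) 1 N ?_
      · intro b c hbc
        have hmin : min b N ≤ min c N := min_le_min_right N hbc
        simp only
        rcases Nat.eq_zero_or_pos (min b N) with h | h
        · rw [h]; simp only [Nat.cast_zero, Real.log_zero]
          exact Real.log_natCast_nonneg _
        · exact Real.log_le_log (by exact_mod_cast h) (by exact_mod_cast hmin)
      · intro n
        rw [abs_of_nonneg (Real.log_natCast_nonneg _)]
        exact hlogn _ (min_le_right _ _)
      · intro x' hx'
        exact hIz a ha (hUR1 a (by nlinarith)) x' hx'
    · rw [one_mul, le_div_iff₀ hR5]
      calc (U : ℝ) * (3 * R * (N / R1)) * R ^ 5 = (N : ℝ) * ((3 * U * R ^ 6) / R1) := by ring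
        _ ≤ (N : ℝ) * 1 := by
            gcongr
            rw [div_le_one (by positivity)]
            calc 3 * (U : ℝ) * R ^ 6 ≤ 3 * R ^ (u + 2) * R ^ 6 := by gcongr
              _ = 3 * R ^ (u + 8) := by rw [pow_add, pow_add]; ring
              _ ≤ R1 := const_mul_le hR 3 _ _ 2 (by norm_num) (by omega)
        _ = (N : ℝ) := mul_one _
  -- term 2
  have t2 : ‖∑ n ∈ Finset.Icc x y, (((tlo U vonMangoldt * tlo U muR * zeR) n : ℝ) : ℂ)
      * eC (P.eval (n : ℝ))‖ ≤ N / R ^ 5 := by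
    rw [conv_sum _ _ P x y hx _ _ hAT]
    refine (typeI_sum (fun a => (tlo U vonMangoldt * tlo U muR) a) (fun b => zeR b) P x y N
      (U * U) R (N / R1) hR0.le (by positivity)
      (fun a ha => (abs_conv_le_log _ _ (fun n => (abs_tlo_le _ _ _).trans (hLam n))
        (fun n => (abs_tlo_le _ _ _).trans (abs_muR_le n)) a).trans (hlogn a ha))
      ?_ ?_).trans ?_
    · intro a ha
      rw [ArithmeticFunction.mul_apply]
      refine Finset.sum_eq_zero fun p hp => ?_
      have hp' := (Nat.mem_divisorsAntidiagonal.1 hp).1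
      rw [tlo_apply, tlo_apply]
      by_cases h1 : p.1 ≤ U
      · by_cases h2 : p.2 ≤ U
        · exfalso
          have := Nat.mul_le_mul h1 h2
          omega
        · rw [if_neg h2, mul_zero]
      · rw [if_neg h1, zero_mul]
    · intro a ha haU
      have e : ∑ b ∈ Finset.Icc 1 N, ((zeR b : ℝ) : ℂ) * zT P x y a b
          = ∑ b ∈ Finset.Icc 1 N, zT P x y a b := by
        refine Finset.sum_congr rfl fun b hb => ?_
        rw [zeR_apply b (Finset.mem_Icc.1 hb).1]; simp
      rw [e]
      exact hIz a ha (hUR1 a haU) 1 le_rfl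
    · rw [le_div_iff₀ hR5]
      calc ((U * U : ℕ) : ℝ) * (R * (N / R1)) * R ^ 5
          = (N : ℝ) * ((((U * U : ℕ) : ℝ) * R ^ 6) / R1) := by ring
        _ ≤ (N : ℝ) * 1 := by
            gcongr
            rw [div_le_one (by positivity)]
            calc ((U * U : ℕ) : ℝ) * R ^ 6 ≤ R ^ (2 * u + 4) * R ^ 6 := by gcongr
              _ = R1 := by rw [← pow_add]
        _ = (N : ℝ) := mul_one _
  -- term 3
  have t3 : ‖∑ n ∈ Finset.Icc x y, (((thi U muR * (thi U vonMangoldt * zeR)) n : ℝ) : ℂ)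
      * eC (P.eval (n : ℝ))‖ ≤ 3 * R * (N / R ^ 6) := by
    rw [conv_sum _ _ P x y hx (Finset.Ico 1 (2 ^ (Nat.log 2 N + 1))) (Finset.Icc 1 N) (by
      intro a b h1 h2
      obtain ⟨h3, h4⟩ := hAT a b h1 h2
      refine ⟨?_, h4⟩
      have := Nat.lt_pow_succ_log_self (b := 2) (by norm_num) N
      rw [Finset.mem_Icc] at h3
      rw [Finset.mem_Ico]
      omega)]
    refine typeII_sum (fun a => thi U muR a) (fun b => (thi U vonMangoldt * zeR) b) P x y N U
      hN1' hy R (N / R ^ 6) hR hlog (by positivity)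
      (fun a => ((abs_thi_le _ _ _).trans (abs_muR_le a)).trans hR1)
      (fun a ha => by rw [thi_apply, if_pos ha]) ?_
      (fun b hb => (abs_conv_le_log _ _ (fun n => (abs_thi_le _ _ _).trans (hLam n))
        abs_zeR_le b).trans (hlogn b hb)) hII
    intro b hb
    rw [ArithmeticFunction.mul_apply]
    refine Finset.sum_eq_zero fun p hp => ?_
    have hp' := Nat.mem_divisorsAntidiagonal.1 hp
    have hp1 : p.1 ≤ b := Nat.le_of_dvd (by omega) ⟨p.2, hp'.1.symm⟩
    rw [thi_apply, if_pos (by omega), zero_mul]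
  have htot : ‖∑ n ∈ Finset.Icc x y, ((vonMangoldt n : ℝ) : ℂ) * eC (P.eval (n : ℝ))‖
      ≤ N / R ^ 5 + N / R ^ 5 + N / R ^ 5 + 3 * R * (N / R ^ 6) := by
    have e : ∑ n ∈ Finset.Icc x y, ((vonMangoldt n : ℝ) : ℂ) * eC (P.eval (n : ℝ))
        = ∑ n ∈ Finset.Icc x y, ((tlo U vonMangoldt n : ℝ) : ℂ) * eC (P.eval (n : ℝ))
        + ∑ n ∈ Finset.Icc x y, (((tlo U muR * ArithmeticFunction.log) n : ℝ) : ℂ)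
            * eC (P.eval (n : ℝ))
        - ∑ n ∈ Finset.Icc x y, (((tlo U vonMangoldt * tlo U muR * zeR) n : ℝ) : ℂ)
            * eC (P.eval (n : ℝ))
        + ∑ n ∈ Finset.Icc x y, (((thi U muR * (thi U vonMangoldt * zeR)) n : ℝ) : ℂ)
            * eC (P.eval (n : ℝ)) := by
      rw [← Finset.sum_add_distrib, ← Finset.sum_sub_distrib, ← Finset.sum_add_distrib]
      refine Finset.sum_congr rfl fun n _ => ?_
      have hv := congrArg (fun f : ArithmeticFunction ℝ => ((f n : ℝ) : ℂ)) (vaughan U)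
      simp only [sub_eq_add_neg, ArithmeticFunction.add_apply, ArithmeticFunction.neg_apply] at hv
      rw [hv]
      push_cast
      ring
    rw [e]
    refine (norm_add_le _ _).trans (add_le_add ((norm_sub_le _ _).trans (add_le_add
      ((norm_add_le _ _).trans (add_le_add t0 t1)) t2)) t3)
  have hfin : (N : ℝ) ≤ R * (N / R ^ 5 + N / R ^ 5 + N / R ^ 5 + 3 * R * (N / R ^ 6)) :=
    hS.trans (by gcongr)
  have e : R * (N / R ^ 5 + N / R ^ 5 + N / R ^ 5 + 3 * R * (N / R ^ 6)) = N * (6 / R ^ 4) := by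
    field_simp
    ring
  rw [e] at hfin
  have h16 : (16 : ℝ) ≤ R ^ 4 := by
    have := const_le_pow hR 4
    norm_num at this
    exact this
  have h6 : 6 / R ^ 4 ≤ 6 / 16 := by gcongr
  nlinarith

end

section

open Polynomial ArithmeticFunction

lemma nonprime_lam (N x y : ℕ) (hx : 1 ≤ x) (hy : y ≤ N) (hN : 1 ≤ N) (c : ℕ → ℂ)
    (hc : ∀ n, ‖c n‖ ≤ 1) :
    ‖∑ n ∈ (Finset.Icc x y).filter (fun n => ¬ n.Prime), ((vonMangoldt n : ℝ) : ℂ) * c n‖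
      ≤ 2 * √(N : ℝ) * Real.log N := by
  have h1 := Chebyshev.psi_sub_theta_eq_sum_not_prime (N : ℝ)
  have h2 := Chebyshev.psi_sub_theta_le (x := (N : ℝ)) (by exact_mod_cast hN)
  rw [h1, Nat.floor_natCast] at h2
  refine le_trans ?_ h2
  refine (norm_sum_le _ _).trans ?_
  have h3 : ∀ n ∈ (Finset.Icc x y).filter (fun n => ¬ n.Prime),
      ‖((vonMangoldt n : ℝ) : ℂ) * c n‖ ≤ vonMangoldt n := by
    intro n _
    rw [norm_mul, Complex.norm_real, Real.norm_eq_abs, abs_of_nonneg vonMangoldt_nonneg]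
    exact mul_le_of_le_one_right vonMangoldt_nonneg (hc n)
  refine (Finset.sum_le_sum h3).trans ?_
  refine Finset.sum_le_sum_of_subset_of_nonneg ?_ (fun _ _ _ => vonMangoldt_nonneg)
  intro n hn
  rw [Finset.mem_filter, Finset.mem_Icc] at hn
  rw [Finset.mem_filter, Finset.mem_Ioc]
  refine ⟨⟨by omega, by omega⟩, hn.2⟩

theorem primeSum (d : ℕ) : ∃ K : ℕ, ∀ R : ℝ, 2 ≤ R → ∀ N : ℕ, Real.log N ≤ R → R ^ K ≤ N →
    ∀ P : ℝ[X], P.natDegree ≤ d → ∀ x y : ℕ, 1 ≤ x → y ≤ N →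
    (N : ℝ) ≤ R * ‖∑ n ∈ (Finset.Icc x y).filter Nat.Prime, eC (P.eval (n : ℝ))‖ →
    Maj (R ^ K) N P := by
  obtain ⟨K0, hK0⟩ := lamSum d
  refine ⟨6 * K0 + 16, ?_⟩
  intro R hR N hlog hN P hP x y hx hy hS
  by_contra hMaj
  have hR0 : 0 < R := by linarith
  have hR1 : 1 ≤ R := by linarith
  have hN1 : (1 : ℝ) ≤ N := (one_le_pow₀ hR1).trans hN
  have hN1' : 1 ≤ N := by exact_mod_cast hN1
  have hNpos : (0 : ℝ) < N := by linarith
  have hRR : R ≤ R ^ 6 := by simpa using pow_chain hR (show 1 ≤ 6 by norm_num)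
  have hp : (R ^ 6) ^ K0 = R ^ (6 * K0) := by rw [← pow_mul]
  have hL : ∀ x', 1 ≤ x' →
      ‖∑ n ∈ Finset.Icc x' y, ((vonMangoldt n : ℝ) : ℂ) * eC (P.eval (n : ℝ))‖ ≤ N / R ^ 6 := by
    intro x' hx'
    by_contra hc
    push Not at hc
    rw [div_lt_iff₀ (by positivity)] at hc
    refine hMaj ((hK0 (R ^ 6) (hR.trans hRR) N (hlog.trans hRR) ?_ P hP x' y hx' hy ?_).mono ?_)
    · rw [hp]; exact (pow_chain hR (by omega)).trans hN
    · rw [mul_comm]; exact hc.le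
    · rw [hp]; exact pow_chain hR (by omega)
  have hsq : 2 * √(N : ℝ) * Real.log N ≤ N / R ^ 6 := by
    have h1 : R ^ 8 ≤ √(N : ℝ) := by
      apply Real.le_sqrt_of_sq_le
      rw [← pow_mul]
      exact (pow_chain hR (by omega)).trans hN
    rw [le_div_iff₀ (by positivity)]
    have h2 : (N : ℝ) = √(N : ℝ) * √(N : ℝ) := (Real.mul_self_sqrt hNpos.le).symm
    have h3 : 2 * R ^ 7 ≤ R ^ 8 := const_mul_le hR 2 7 8 1 (by norm_num) (by norm_num)
    calc 2 * √(N : ℝ) * Real.log N * R ^ 6 ≤ 2 * √(N : ℝ) * R * R ^ 6 := by gcongr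
      _ = √(N : ℝ) * (2 * R ^ 7) := by ring
      _ ≤ √(N : ℝ) * √(N : ℝ) := by gcongr; exact h3.trans h1
      _ = N := h2.symm
  set z : ℕ → ℂ := fun n => if n.Prime then ((vonMangoldt n : ℝ) : ℂ) * eC (P.eval (n : ℝ)) else 0
    with hz
  have hzb : ∀ x', x ≤ x' → ‖∑ n ∈ Finset.Icc x' y, z n‖ ≤ 2 * (N / R ^ 6) := by
    intro x' hx'
    have h1 := hL x' (by omega)
    have h2 := (nonprime_lam N x' y (by omega) hy hN1' (fun n => eC (P.eval (n : ℝ)))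
      (fun n => by rw [norm_eC])).trans hsq
    rw [← Finset.sum_filter]
    have e := Finset.sum_filter_add_sum_filter_not (Finset.Icc x' y) Nat.Prime
      (fun n => ((vonMangoldt n : ℝ) : ℂ) * eC (P.eval (n : ℝ)))
    rw [eq_sub_of_add_eq e]
    refine (norm_sub_le _ _).trans ?_
    linarith
  have hl2 := Real.log_two_gt_d9
  have hw := abel_bound (fun n => 1 / Real.log ((max n 2 : ℕ) : ℝ)) (Or.inr (by
      intro a b hab
      have hm : max a 2 ≤ max b 2 := max_le_max_right 2 hab
      have h2 : (1 : ℝ) < ((max a 2 : ℕ) : ℝ) := by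
        have : 1 < max a 2 := lt_of_lt_of_le (by norm_num) (le_max_right a 2)
        exact_mod_cast this
      simp only
      exact one_div_le_one_div_of_le (Real.log_pos h2)
        (Real.log_le_log (by linarith) (by exact_mod_cast hm)))) 2 (by
      intro n
      have h2 : (2 : ℝ) ≤ ((max n 2 : ℕ) : ℝ) := by exact_mod_cast le_max_right n 2
      have h3 := Real.log_le_log (by norm_num) h2
      rw [abs_of_nonneg (by positivity), div_le_iff₀ (by linarith)]
      linarith) z _ (by positivity) x y hzb
  have e : ∑ n ∈ Finset.Icc x y, ((1 / Real.log ((max n 2 : ℕ) : ℝ) : ℝ) : ℂ) * z n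
      = ∑ n ∈ (Finset.Icc x y).filter Nat.Prime, eC (P.eval (n : ℝ)) := by
    rw [Finset.sum_filter]
    refine Finset.sum_congr rfl fun n _ => ?_
    simp only [hz]
    split_ifs with h
    · rw [max_eq_left h.two_le, vonMangoldt_apply_prime h, ← mul_assoc, ← Complex.ofReal_mul,
        one_div, inv_mul_cancel₀, Complex.ofReal_one, one_mul]
      exact (Real.log_pos (by exact_mod_cast h.one_lt)).ne'
    · simp
  rw [e] at hw
  have hfin : (N : ℝ) ≤ R * (3 * 2 * (2 * (N / R ^ 6))) := hS.trans (by gcongr)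
  have e2 : R * (3 * 2 * (2 * (N / R ^ 6))) = N * (12 / R ^ 5) := by
    field_simp
    ring
  rw [e2] at hfin
  have h32 : (32 : ℝ) ≤ R ^ 5 := by
    have := const_le_pow hR 5
    norm_num at this
    exact this
  have h6 : 12 / R ^ 5 ≤ 12 / 32 := by gcongr
  nlinarith

/-- The two admissible coordinate weights. -/
def AdmW (w : ℤ → ℝ) : Prop :=
  (w = fun _ => 1) ∨ (w = Set.indicator {n : ℤ | Prime n} (fun _ => 1))

lemma posPart_sum (P : ℝ[X]) (u v : ℤ) :
    ∑ n ∈ ((Finset.Icc u v).filter (fun n : ℤ => Prime n)).filter (fun n => 0 < n),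
      eC (P.eval (n : ℝ))
    = ∑ n ∈ (Finset.Icc (max u 1).toNat v.toNat).filter Nat.Prime, eC (P.eval (n : ℝ)) := by
  symm
  refine Finset.sum_nbij (fun n : ℕ => (n : ℤ)) ?_ ?_ ?_ ?_
  · intro n hn
    simp only [Finset.mem_filter, Finset.mem_Icc] at hn ⊢
    refine ⟨⟨by omega, Nat.prime_iff_prime_int.1 hn.2⟩, ?_⟩
    exact_mod_cast hn.2.pos
  · intro a _ b _ h
    simpa using h
  · intro n hn
    simp only [Finset.coe_filter, Finset.mem_filter, Finset.mem_Icc, Set.mem_ofPred_eq] at hn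
    refine ⟨n.toNat, ?_, by simp only; omega⟩
    simp only [Finset.coe_filter, Finset.mem_Icc, Set.mem_ofPred_eq]
    refine ⟨by omega, Nat.prime_iff_prime_int.2 ?_⟩
    rw [Int.toNat_of_nonneg (by omega)]
    exact hn.1.2
  · intro n _
    simp

lemma negPart_sum (P : ℝ[X]) (u v : ℤ) :
    ∑ n ∈ ((Finset.Icc u v).filter (fun n : ℤ => Prime n)).filter (fun n => ¬ 0 < n),
      eC (P.eval (n : ℝ))
    = ∑ n ∈ ((Finset.Icc (-v) (-u)).filter (fun n : ℤ => Prime n)).filter (fun n => 0 < n),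
      eC ((P.comp (Polynomial.C (-1 : ℝ) * X)).eval (n : ℝ)) := by
  refine Finset.sum_nbij (fun n : ℤ => -n) ?_ ?_ ?_ ?_
  · intro n hn
    simp only [Finset.mem_filter, Finset.mem_Icc] at hn ⊢
    have h0 : n ≠ 0 := hn.1.2.ne_zero
    exact ⟨⟨by omega, hn.1.2.neg⟩, by omega⟩
  · intro a _ b _ h
    simpa using h
  · intro n hn
    simp only [Finset.coe_filter, Finset.mem_filter, Finset.mem_Icc, Set.mem_ofPred_eq] at hn
    refine ⟨-n, ?_, by simp⟩
    simp only [Finset.coe_filter, Finset.mem_filter, Finset.mem_Icc, Set.mem_ofPred_eq]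
    exact ⟨⟨by omega, hn.1.2.neg⟩, by omega⟩
  · intro n _
    simp [eval_comp]

lemma Maj_neg {B : ℝ} {N : ℕ} {P : ℝ[X]} (h : Maj B N (P.comp (Polynomial.C (-1 : ℝ) * X))) :
    Maj B N P := by
  obtain ⟨q, h1, h2, h3⟩ := h
  refine ⟨q, h1, h2, fun i hi => ?_⟩
  have := h3 i hi
  rw [comp_C_mul_X_coeff] at this
  rcases neg_one_pow_eq_or ℝ i with h | h
  · rw [h, mul_one] at this; exact this
  · rw [h, mul_neg, mul_one, mul_neg] at this
    have h4 := nn_neg (-(q * P.coeff i))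
    rw [neg_neg] at h4
    exact h4.trans this

theorem oneDim (d : ℕ) : ∃ K : ℕ, ∀ R : ℝ, 2 ≤ R → ∀ N : ℕ, Real.log N ≤ R → R ^ K ≤ N →
    ∀ w, AdmW w → ∀ P : ℝ[X], P.natDegree ≤ d → ∀ u v : ℤ, -(N : ℤ) ≤ u → v ≤ N →
    (N : ℝ) ≤ R * ‖∑ n ∈ Finset.Icc u v, (w n : ℂ) * eC (P.eval (n : ℝ))‖ →
    Maj (R ^ K) N P := by
  classical
  obtain ⟨C, hC⟩ := weylZ d
  obtain ⟨K0, hK0⟩ := primeSum d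
  refine ⟨C + 2 * K0, ?_⟩
  intro R hR N hlog hN w hw P hP u v hu hv hS
  have hR0 : 0 < R := by linarith
  rcases hw with rfl | rfl
  · have h1 : Maj (R ^ C) N P := hC R hR N ((pow_chain hR (by omega)).trans hN) P hP u v hu hv
      (by simpa using hS)
    exact h1.mono (pow_chain hR (by omega))
  · have hRR : R ≤ R ^ 2 := by simpa using pow_chain hR (show 1 ≤ 2 by norm_num)
    have hp : (R ^ 2) ^ K0 = R ^ (2 * K0) := by rw [← pow_mul]
    have key : ∀ (Q : ℝ[X]) (u v : ℤ), Q.natDegree ≤ d → v ≤ N →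
        (N : ℝ) ≤ R ^ 2 * ‖∑ n ∈ ((Finset.Icc u v).filter (fun n : ℤ => Prime n)).filter
          (fun n => 0 < n), eC (Q.eval (n : ℝ))‖ → Maj (R ^ (C + 2 * K0)) N Q := by
      intro Q u v hQ hv hQS
      rw [posPart_sum] at hQS
      refine (hK0 (R ^ 2) (hR.trans hRR) N (hlog.trans hRR) ?_ Q hQ (max u 1).toNat v.toNat
        (by omega) (by omega) hQS).mono ?_
      · rw [hp]; exact (pow_chain hR (by omega)).trans hN
      · rw [hp]; exact pow_chain hR (by omega)
    have e1 : ∑ n ∈ Finset.Icc u v,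
        ((Set.indicator {n : ℤ | Prime n} (fun _ => (1 : ℝ)) n : ℝ) : ℂ) * eC (P.eval (n : ℝ))
        = ∑ n ∈ (Finset.Icc u v).filter (fun n : ℤ => Prime n), eC (P.eval (n : ℝ)) := by
      rw [Finset.sum_filter]
      refine Finset.sum_congr rfl fun n _ => ?_
      by_cases h : Prime n
      · rw [Set.indicator_of_mem (by exact h), if_pos h]; simp
      · rw [Set.indicator_of_notMem (by exact h), if_neg h]; simp
    rw [e1, ← Finset.sum_filter_add_sum_filter_not _ (fun n : ℤ => 0 < n)] at hS
    set S1 := ∑ n ∈ ((Finset.Icc u v).filter (fun n : ℤ => Prime n)).filter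
          (fun n => 0 < n), eC (P.eval (n : ℝ)) with hS1
    set S2 := ∑ n ∈ ((Finset.Icc u v).filter (fun n : ℤ => Prime n)).filter
          (fun n => ¬ 0 < n), eC (P.eval (n : ℝ)) with hS2
    have h3 : (N : ℝ) ≤ R * ‖S1‖ + R * ‖S2‖ := by
      rw [← mul_add]
      exact hS.trans (mul_le_mul_of_nonneg_left (norm_add_le _ _) hR0.le)
    have h2R : 2 * R ≤ R ^ 2 := by nlinarith
    rcases le_total ‖S2‖ ‖S1‖ with h | h
    · refine key P u v hP hv ?_
      have := norm_nonneg S1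
      calc (N : ℝ) ≤ R * ‖S1‖ + R * ‖S2‖ := h3
        _ ≤ R * ‖S1‖ + R * ‖S1‖ := by gcongr
        _ = 2 * R * ‖S1‖ := by ring
        _ ≤ R ^ 2 * ‖S1‖ := by gcongr
    · refine Maj_neg (key _ (-v) (-u) ((natDegree_comp_C_mul_X_le P _).trans hP) (by omega) ?_)
      rw [← negPart_sum, ← hS2]
      have := norm_nonneg S2
      calc (N : ℝ) ≤ R * ‖S1‖ + R * ‖S2‖ := h3
        _ ≤ R * ‖S2‖ + R * ‖S2‖ := by gcongr
        _ = 2 * R * ‖S2‖ := by ring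
        _ ≤ R ^ 2 * ‖S2‖ := by gcongr

end

section

open Polynomial

/-- slice polynomial in coordinate `p` -/
noncomputable def polyAt {k : ℕ} (p : Fin (k + 1)) (Γ : Finset (Fin (k + 1) → ℕ))
    (ξ : (Fin (k + 1) → ℕ) → ℝ) (v : Fin k → ℤ) : ℝ[X] :=
  ∑ γ ∈ Γ, monomial (γ p) (ξ γ * ∏ j, (v j : ℝ) ^ (γ (p.succAbove j)))

/-- slice of the exponent set -/
def sl {k : ℕ} (p : Fin (k + 1)) (i : ℕ) (Γ : Finset (Fin (k + 1) → ℕ)) : Finset (Fin k → ℕ) :=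
  (Γ.filter (fun γ => γ p = i)).image (fun γ => p.removeNth γ)

lemma polyAt_eval {k : ℕ} (p : Fin (k + 1)) (Γ : Finset (Fin (k + 1) → ℕ))
    (ξ : (Fin (k + 1) → ℕ) → ℝ) (v : Fin k → ℤ) (n : ℤ) :
    (polyAt p Γ ξ v).eval (n : ℝ) = qPair Γ ξ (p.insertNth (α := fun _ => ℤ) n v) := by
  unfold polyAt qPair
  rw [eval_finsetSum]
  refine Finset.sum_congr rfl fun γ _ => ?_
  rw [eval_monomial, Fin.prod_univ_succAbove _ p]
  simp only [Fin.insertNth_apply_same, Fin.insertNth_apply_succAbove]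
  ring

lemma polyAt_deg {k : ℕ} (p : Fin (k + 1)) (Γ : Finset (Fin (k + 1) → ℕ))
    (ξ : (Fin (k + 1) → ℕ) → ℝ) (v : Fin k → ℤ) (d : ℕ) (hd : ∀ γ ∈ Γ, γ p ≤ d) :
    (polyAt p Γ ξ v).natDegree ≤ d := by
  unfold polyAt
  refine natDegree_sum_le_of_forall_le _ _ fun γ hγ => ?_
  exact (natDegree_monomial_le _).trans (hd γ hγ)

lemma polyAt_coeff {k : ℕ} (p : Fin (k + 1)) (Γ : Finset (Fin (k + 1) → ℕ))
    (ξ : (Fin (k + 1) → ℕ) → ℝ) (v : Fin k → ℤ) (i : ℕ) :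
    (polyAt p Γ ξ v).coeff i
      = qPair (sl p i Γ) (fun γ' => ξ (p.insertNth (α := fun _ => ℕ) i γ')) v := by
  unfold polyAt qPair sl
  rw [finsetSum_coeff, Finset.sum_image]
  · rw [Finset.sum_filter]
    refine Finset.sum_congr rfl fun γ _ => ?_
    rw [coeff_monomial]
    split_ifs with h
    · subst h
      simp only [Fin.insertNth_self_removeNth]
      rfl
    · rfl
  · intro a ha b hb hab
    rw [Finset.mem_coe, Finset.mem_filter] at ha hb
    have h1 := Fin.insertNth_self_removeNth p a
    have h2 := Fin.insertNth_self_removeNth p b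
    rw [← h1, ← h2, ha.2, hb.2]
    simp only at hab
    rw [hab]

lemma qPair_smul {k : ℕ} (Γ : Finset (Fin k → ℕ)) (ξ : (Fin k → ℕ) → ℝ) (v : Fin k → ℤ) (q : ℝ) :
    qPair Γ (fun γ => q * ξ γ) v = q * qPair Γ ξ v := by
  unfold qPair
  rw [Finset.mul_sum]
  exact Finset.sum_congr rfl fun γ _ => by ring

/-- Multi-dimensional Vinogradov lemma. -/
def MVS (k : ℕ) (Γ : Finset (Fin k → ℕ)) (C : ℕ) : Prop :=
  ∀ R : ℝ, 2 ≤ R → ∀ N : ℕ, R ^ C ≤ N → ∀ ξ : (Fin k → ℕ) → ℝ, ∀ ε : ℝ, 0 ≤ ε → ε * R ^ C ≤ 1 →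
    ∀ H : Finset (Fin k → ℤ), (∀ h ∈ H, ∀ i, |h i| ≤ (N : ℤ)) → (N : ℝ) ^ k ≤ R * H.card →
    (∀ h ∈ H, nn (qPair Γ ξ h) ≤ ε) → ∀ γ ∈ Γ, ∃ q : ℕ, 1 ≤ q ∧ (q : ℝ) ≤ R ^ C ∧
      nn (q * ξ γ) ≤ ε * R ^ C / (N : ℝ) ^ (∑ i, γ i)

/-- the integer box -/
noncomputable def box (k N : ℕ) : Finset (Fin k → ℤ) := Fintype.piFinset fun _ => Finset.Icc (-(N : ℤ)) N

lemma mem_box {k N : ℕ} {v : Fin k → ℤ} : v ∈ box k N ↔ ∀ i, |v i| ≤ (N : ℤ) := by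
  unfold box
  rw [Fintype.mem_piFinset]
  simp only [Finset.mem_Icc, abs_le]

lemma card_box (k N : ℕ) : ((box k N).card : ℝ) = (2 * N + 1) ^ k := by
  unfold box
  rw [Fintype.card_piFinset]
  simp only [Int.card_Icc, Finset.prod_const, Finset.card_univ, Fintype.card_fin]
  have : ((N : ℤ) + 1 - -N).toNat = 2 * N + 1 := by omega
  rw [this]
  push_cast
  ring

/-- Sum over the box by slices. -/
lemma sum_box_slice {M : Type*} [AddCommMonoid M] (k N : ℕ) (p : Fin (k + 1))
    (f : (Fin (k + 1) → ℤ) → M) :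
    ∑ v ∈ box (k + 1) N, f v = ∑ v' ∈ box k N, ∑ n ∈ Finset.Icc (-(N : ℤ)) N,
      f (p.insertNth (α := fun _ => ℤ) n v') := by
  rw [← Finset.sum_product' (box k N) (Finset.Icc (-(N : ℤ)) N)
    (fun v' n => f (p.insertNth (α := fun _ => ℤ) n v'))]
  refine Finset.sum_nbij' (fun v => (p.removeNth v, v p))
    (fun x => p.insertNth (α := fun _ => ℤ) x.2 x.1) ?_ ?_ ?_ ?_ ?_
  · intro v hv
    rw [mem_box] at hv
    rw [Finset.mem_product, mem_box, Finset.mem_Icc]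
    exact ⟨fun i => hv _, abs_le.1 (hv p)⟩
  · intro x hx
    rw [Finset.mem_product, mem_box, Finset.mem_Icc] at hx
    rw [mem_box]
    intro i
    refine Fin.succAboveCases p ?_ ?_ i
    · rw [Fin.insertNth_apply_same]; exact abs_le.2 hx.2
    · intro j
      rw [Fin.insertNth_apply_succAbove]; exact hx.1 j
  · intro v _
    exact Fin.insertNth_self_removeNth p v
  · intro x _
    simp
  · intro v _
    rw [Fin.insertNth_self_removeNth]

set_option maxHeartbeats 1000000 in
theorem mvino (k : ℕ) : ∀ Γ : Finset (Fin k → ℕ), ∃ C, MVS k Γ C := by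
  classical
  induction k with
  | zero =>
    intro Γ
    refine ⟨0, ?_⟩
    intro R hR N hN ξ ε hε0 hε H hH hHc hh γ hγ
    refine ⟨1, le_rfl, by simp, ?_⟩
    have hne : H.Nonempty := by
      rw [← Finset.card_pos]
      by_contra hcon
      have : H.card = 0 := by omega
      rw [this] at hHc
      norm_num at hHc
    obtain ⟨h, hhH⟩ := hne
    have h1 := hh h hhH
    have e : qPair Γ ξ h = ξ γ := by
      unfold qPair
      rw [show Γ = {γ} from Finset.eq_singleton_iff_unique_mem.2
        ⟨hγ, fun x _ => Subsingleton.elim _ _⟩]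
      simp
    rw [e] at h1
    simpa using h1
  | succ k ih =>
    intro Γ
    set p : Fin (k + 1) := 0 with hp
    obtain ⟨V, hV⟩ := vino (Γ.sup (fun γ => γ p))
    choose Cf hCf using fun i => ih (sl p i Γ)
    set d := Γ.sup (fun γ => γ p) with hd
    have hdle : ∀ γ ∈ Γ, γ p ≤ d := fun γ hγ => Finset.le_sup (f := fun γ => γ p) hγ
    set Cm := ∑ i ∈ Finset.range (d + 1), Cf i with hCm
    set a := (2 * k + 2) * V with ha
    refine ⟨a + (a + 4) * Cm + a, ?_⟩
    set Ct := a + (a + 4) * Cm + a with hCt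
    intro R hR N hN ξ ε hε0 hε H hH hHc hh γ hγ
    have hR0 : 0 < R := by linarith
    have hR1 : 1 ≤ R := by linarith
    have hN1 : (1 : ℝ) ≤ N := (one_le_pow₀ hR1).trans hN
    have hNpos : (0 : ℝ) < N := by linarith
    set fib : (Fin k → ℤ) → Finset ℤ := fun v' => (Finset.Icc (-(N : ℤ)) N).filter
      (fun n => p.insertNth (α := fun _ => ℤ) n v' ∈ H) with hfib
    have hcard : (H.card : ℝ) = ∑ v' ∈ box k N, ((fib v').card : ℝ) := by
      have h1 : H = (box (k + 1) N).filter (fun v => v ∈ H) := by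
        ext v
        rw [Finset.mem_filter]
        exact ⟨fun h => ⟨mem_box.2 (hH v h), h⟩, fun h => h.2⟩
      have h2 : H.card = ∑ v ∈ box (k + 1) N, if v ∈ H then 1 else 0 := by
        conv_lhs => rw [h1]
        rw [Finset.card_filter]
      rw [h2, sum_box_slice k N p]
      push_cast
      refine Finset.sum_congr rfl fun v' _ => ?_
      rw [hfib, Finset.card_filter]
      push_cast
      rfl
    have hpop := popular (box k N) (fun v' => ((fib v').card : ℝ)) (3 * N) ((3 * N) ^ k)
      ((N : ℝ) ^ (k + 1) / R) (by rw [card_box]; gcongr; linarith) (by positivity) (by positivity)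
      (by
        intro v' _
        have h1 : ((fib v').card : ℝ) ≤ ((Finset.Icc (-(N : ℤ)) N).card : ℝ) := by
          exact_mod_cast Finset.card_filter_le _ _
        refine h1.trans ((card_Icc_le N _ _ le_rfl le_rfl).trans ?_)
        linarith)
      (by rw [← hcard, div_le_iff₀ hR0, mul_comm]; exact hHc)
    set G := (box k N).filter
      (fun v' => (N : ℝ) ^ (k + 1) / R ≤ 2 * (3 * N) ^ k * ((fib v').card : ℝ)) with hG
    have hGc : (N : ℝ) ^ k ≤ 6 * R * G.card := by
      rw [div_le_iff₀ hR0] at hpop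
      have : (N : ℝ) * N ^ k ≤ N * (6 * R * G.card) := by
        calc (N : ℝ) * N ^ k = N ^ (k + 1) := by ring
          _ ≤ _ := hpop
          _ = _ := by ring
      exact le_of_mul_le_mul_left this hNpos
    have hGne : G.Nonempty := by
      rw [← Finset.card_pos]
      by_contra hcon
      have : G.card = 0 := by omega
      rw [this, Nat.cast_zero, mul_zero] at hGc
      have : 0 < (N : ℝ) ^ k := by positivity
      linarith
    set R1 := R ^ (2 * k + 2) with hR1d
    have hR12 : 2 ≤ R1 := hR.trans (by simpa using pow_chain hR (show 1 ≤ 2 * k + 2 by omega))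
    have hR1V : R1 ^ V = R ^ a := by rw [hR1d, ← pow_mul]
    have haC : R ^ a ≤ R ^ Ct := pow_chain hR (by omega)
    have hex : ∀ v' ∈ G, ∃ q : ℕ, 1 ≤ q ∧ (q : ℝ) ≤ R ^ a ∧
        ∀ i, nn (q * (polyAt p Γ ξ v').coeff i) ≤ ε * R ^ a / (N : ℝ) ^ i := by
      intro v' hv'
      have hv2 := (Finset.mem_filter.1 hv').2
      have := hV R1 hR12 N (by rw [hR1V]; exact haC.trans hN) (polyAt p Γ ξ v')
        (polyAt_deg p Γ ξ v' d hdle) ε hε0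
        (by rw [hR1V]; exact (mul_le_mul_of_nonneg_left haC hε0).trans hε) (fib v')
        (by
          intro n hn
          exact abs_le.2 (Finset.mem_Icc.1 (Finset.mem_filter.1 hn).1))
        (by
          rw [div_le_iff₀ hR0] at hv2
          have h1 : (N : ℝ) ^ k * N ≤ N ^ k * (2 * 3 ^ k * R * (fib v').card) := by
            calc (N : ℝ) ^ k * N = N ^ (k + 1) := by ring
              _ ≤ _ := hv2
              _ = _ := by rw [mul_pow]; ring
          have h2 := le_of_mul_le_mul_left h1 (by positivity)
          refine h2.trans ?_
          gcongr
          have h3 : (2 : ℝ) * 3 ^ k ≤ 2 ^ (2 * k + 1) := by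
            calc (2 : ℝ) * 3 ^ k ≤ 2 * 4 ^ k := by gcongr; norm_num
              _ = 2 ^ (2 * k + 1) := by rw [pow_succ, pow_mul]; norm_num; ring
          have h4 := const_mul_le hR (2 * 3 ^ k) 1 (2 * k + 2) (2 * k + 1) h3 (by omega)
          simpa using h4)
        (by
          intro n hn
          rw [polyAt_eval]
          exact hh _ (Finset.mem_filter.1 hn).2)
      rw [hR1V] at this
      exact this
    choose! Q hQ1 hQ2 hQ3 using hex
    obtain ⟨q, hq1, hq2, hq3⟩ := pigeon_nat G hGne Q (R ^ a) (fun t ht => ⟨hQ1 t ht, hQ2 t ht⟩)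
    set G' := G.filter (fun t => Q t = q) with hG'
    set i := γ p with hi
    set R2 := R ^ (a + 4) with hR2d
    have hR22 : 2 ≤ R2 := hR.trans (by simpa using pow_chain hR (show 1 ≤ a + 4 by omega))
    have hiCm : Cf i ≤ Cm := by
      refine Finset.single_le_sum (f := Cf) (fun _ _ => Nat.zero_le _) ?_
      rw [Finset.mem_range]
      have := hdle γ hγ
      omega
    have hR2C : R2 ^ Cf i ≤ R ^ ((a + 4) * Cm) := by
      rw [hR2d, ← pow_mul]
      exact pow_chain hR (Nat.mul_le_mul_left _ hiCm)
    have hεle : ε * R ^ a / (N : ℝ) ^ i ≤ ε * R ^ a :=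
      div_le_self (by positivity) (one_le_pow₀ hN1)
    have hprod : R ^ a * R2 ^ Cf i ≤ R ^ Ct := by
      calc R ^ a * R2 ^ Cf i ≤ R ^ a * R ^ ((a + 4) * Cm) := by gcongr
        _ = R ^ (a + (a + 4) * Cm) := by rw [pow_add]
        _ ≤ _ := pow_chain hR (by omega)
    obtain ⟨q2, hq21, hq22, hq23⟩ := hCf i R2 hR22 N
      (hR2C.trans ((pow_chain hR (by omega)).trans hN))
      (fun γ' => q * ξ (p.insertNth (α := fun _ => ℕ) i γ')) (ε * R ^ a / (N : ℝ) ^ i)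
      (by positivity)
      (by
        calc ε * R ^ a / (N : ℝ) ^ i * R2 ^ Cf i ≤ ε * R ^ a * R2 ^ Cf i := by gcongr
          _ = ε * (R ^ a * R2 ^ Cf i) := by ring
          _ ≤ ε * R ^ Ct := by gcongr
          _ ≤ 1 := hε)
      G'
      (by
        intro h hhG
        exact mem_box.1 (Finset.mem_filter.1 (Finset.mem_filter.1 hhG).1).1)
      (by
        calc (N : ℝ) ^ k ≤ 6 * R * G.card := hGc
          _ ≤ 6 * R * (R ^ a * G'.card) := by gcongr
          _ = (6 * R ^ (a + 1)) * G'.card := by rw [pow_succ]; ring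
          _ ≤ R2 * G'.card := by
              gcongr
              exact const_mul_le hR 6 _ _ 3 (by norm_num) (by omega))
      (by
        intro h hhG
        have hG1 := Finset.mem_filter.1 hhG
        rw [qPair_smul, ← polyAt_coeff, ← hG1.2]
        exact hQ3 h hG1.1 i)
      (p.removeNth γ)
      (Finset.mem_image.2 ⟨γ, Finset.mem_filter.2 ⟨hγ, rfl⟩, rfl⟩)
    refine ⟨q2 * q, Nat.one_le_iff_ne_zero.2 (by positivity), ?_, ?_⟩
    · push_cast
      calc (q2 : ℝ) * q ≤ R2 ^ Cf i * R ^ a := by gcongr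
        _ = R ^ a * R2 ^ Cf i := mul_comm _ _
        _ ≤ _ := hprod
    · rw [hi, Fin.insertNth_self_removeNth, ← hi] at hq23
      push_cast
      rw [mul_assoc]
      refine hq23.trans ?_
      have e : (N : ℝ) ^ (∑ j, γ j) = N ^ i * N ^ (∑ j, p.removeNth γ j) := by
        rw [← pow_add, Fin.sum_univ_succAbove _ p]
        rfl
      rw [e, div_mul_eq_mul_div, div_div]
      refine div_le_div_of_nonneg_right ?_ (by positivity)
      rw [mul_assoc]
      exact mul_le_mul_of_nonneg_left hprod hε0

end

section

set_option maxHeartbeats 1000000 in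
/-- Few bad lines unless `ξ γ₀` is major arc. -/
lemma badFew {k : ℕ} (p : Fin (k + 1)) (Γ : Finset (Fin (k + 1) → ℕ)) (γ : Fin (k + 1) → ℕ)
    (hγ : γ ∈ Γ) (hγp : 1 ≤ γ p) : ∃ C : ℕ, ∀ R : ℝ, 2 ≤ R → ∀ N : ℕ, Real.log N ≤ R →
      R ^ C ≤ N → ∀ w : ℤ → ℝ, AdmW w → ∀ ξ : (Fin (k + 1) → ℕ) → ℝ,
      ∀ G : Finset (Fin k → ℤ), G ⊆ box k N → (N : ℝ) ^ k ≤ R * G.card →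
      (∀ v' ∈ G, ∃ u v : ℤ, -(N : ℤ) ≤ u ∧ v ≤ N ∧
        (N : ℝ) ≤ R * ‖∑ n ∈ Finset.Icc u v, (w n : ℂ) * eC ((polyAt p Γ ξ v').eval (n : ℝ))‖) →
      ∃ q : ℕ, 1 ≤ q ∧ (q : ℝ) ≤ R ^ C ∧ nn (q * ξ γ) ≤ R ^ C / (N : ℝ) ^ (∑ i, γ i) := by
  classical
  obtain ⟨K, hK⟩ := oneDim (Γ.sup (fun γ => γ p))
  set d := Γ.sup (fun γ => γ p) with hd
  have hdle : ∀ γ ∈ Γ, γ p ≤ d := fun γ hγ => Finset.le_sup (f := fun γ => γ p) hγ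
  obtain ⟨V, hV⟩ := mvino k (sl p (γ p) Γ)
  refine ⟨K + (K + 1) * V, ?_⟩
  set Ct := K + (K + 1) * V with hCt
  intro R hR N hlog hN w hw ξ G hG hGc hbad
  have hR0 : 0 < R := by linarith
  have hR1 : 1 ≤ R := by linarith
  have hN1 : (1 : ℝ) ≤ N := (one_le_pow₀ hR1).trans hN
  have hNpos : (0 : ℝ) < N := by linarith
  have hGne : G.Nonempty := by
    rw [← Finset.card_pos]
    by_contra hcon
    have : G.card = 0 := by omega
    rw [this, Nat.cast_zero, mul_zero] at hGc
    have : 0 < (N : ℝ) ^ k := by positivity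
    linarith
  have hex : ∀ v' ∈ G, Maj (R ^ K) N (polyAt p Γ ξ v') := by
    intro v' hv'
    obtain ⟨u, v, hu, hv, h⟩ := hbad v' hv'
    exact hK R hR N hlog ((pow_chain hR (by omega)).trans hN) w hw (polyAt p Γ ξ v')
      (polyAt_deg p Γ ξ v' d hdle) u v hu hv h
  unfold Maj at hex
  choose! Q hQ1 hQ2 hQ3 using hex
  obtain ⟨q, hq1, hq2, hq3⟩ := pigeon_nat G hGne Q (R ^ K) (fun t ht => ⟨hQ1 t ht, hQ2 t ht⟩)
  set G' := G.filter (fun t => Q t = q) with hG'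
  set R2 := R ^ (K + 1) with hR2d
  have hR22 : 2 ≤ R2 := hR.trans (by simpa using pow_chain hR (show 1 ≤ K + 1 by omega))
  have hR2C : R2 ^ V = R ^ ((K + 1) * V) := by rw [hR2d, ← pow_mul]
  have hprod : R ^ K * R2 ^ V = R ^ Ct := by rw [hR2C, ← pow_add]
  obtain ⟨q2, hq21, hq22, hq23⟩ := hV R2 hR22 N
    (hR2C.le.trans ((pow_chain hR (by omega)).trans hN))
    (fun γ' => q * ξ (p.insertNth (α := fun _ => ℕ) (γ p) γ')) (R ^ K / (N : ℝ) ^ (γ p))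
    (by positivity)
    (by
      rw [div_mul_eq_mul_div, hprod, div_le_one (by positivity)]
      refine hN.trans ?_
      calc (N : ℝ) = N ^ 1 := (pow_one _).symm
        _ ≤ _ := pow_le_pow_right₀ hN1 hγp)
    G'
    (by
      intro h hhG
      exact mem_box.1 (hG (Finset.mem_filter.1 hhG).1))
    (by
      calc (N : ℝ) ^ k ≤ R * G.card := hGc
        _ ≤ R * (R ^ K * G'.card) := by gcongr
        _ = R2 * G'.card := by rw [hR2d, pow_succ]; ring)
    (by
      intro h hhG
      have hG1 := Finset.mem_filter.1 hhG
      rw [qPair_smul, ← polyAt_coeff, ← hG1.2]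
      exact hQ3 h hG1.1 (γ p) hγp)
    (p.removeNth γ)
    (Finset.mem_image.2 ⟨γ, Finset.mem_filter.2 ⟨hγ, rfl⟩, rfl⟩)
  refine ⟨q2 * q, Nat.one_le_iff_ne_zero.2 (by positivity), ?_, ?_⟩
  · push_cast
    calc (q2 : ℝ) * q ≤ R2 ^ V * R ^ K := by gcongr
      _ = R ^ Ct := by rw [mul_comm, hprod]
  · rw [Fin.insertNth_self_removeNth] at hq23
    push_cast
    rw [mul_assoc]
    refine hq23.trans (le_of_eq ?_)
    have e : (N : ℝ) ^ (∑ j, γ j) = N ^ (γ p) * N ^ (∑ j, p.removeNth γ j) := by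
      rw [← pow_add, Fin.sum_univ_succAbove _ p]
      rfl
    rw [e, div_mul_eq_mul_div, div_div, hprod]

lemma arith_contra (x B M : ℝ) (hM : 0 < M) (a q : ℤ) (hc : IsCoprime a q) (hq : 1 ≤ q)
    (hx : |x - (a : ℝ) / q| ≤ 1 / (q : ℝ) ^ 2) (q0 : ℕ) (h1 : 1 ≤ q0) (hB : (q0 : ℝ) ≤ B)
    (hn : nn (q0 * x) ≤ B / M) (hBq : 2 * B < q) (hqM : q * B / M < 1 / 2) : False := by
  have hq0 : (0 : ℝ) < q := by exact_mod_cast (by omega : (0 : ℤ) < q)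
  have hnn : |(q0 : ℝ) * x - round ((q0 : ℝ) * x)| ≤ B / M := hn
  set m := round ((q0 : ℝ) * x) with hm
  have e : ((q0 : ℝ) * a - m * q) = q * ((q0 * x - m) - q0 * (x - a / q)) := by
    field_simp; ring
  have hlt : |(q0 : ℝ) * a - m * q| < 1 := by
    rw [e, abs_mul, abs_of_pos hq0]
    have h2 : |(q0 * x - m) - q0 * (x - a / q)| ≤ B / M + q0 * (1 / (q : ℝ) ^ 2) := by
      refine (abs_sub _ _).trans (add_le_add hnn ?_)
      rw [abs_mul, Nat.abs_cast]
      gcongr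
    calc (q : ℝ) * |(q0 * x - m) - q0 * (x - a / q)| ≤ q * (B / M + q0 * (1 / (q : ℝ) ^ 2)) := by
          gcongr
      _ = q * B / M + q0 / q := by field_simp
      _ < 1 / 2 + 1 / 2 := by
          refine add_lt_add hqM ?_
          rw [div_lt_iff₀ hq0]
          linarith
      _ = 1 := by norm_num
  have hz : (q0 : ℤ) * a - m * q = 0 := by
    have : |(q0 : ℤ) * a - m * q| < 1 := by exact_mod_cast hlt
    exact Int.abs_lt_one_iff.1 this
  have hdvd : q ∣ (q0 : ℤ) := by
    have h3 : q ∣ (q0 : ℤ) * a := ⟨m, by linarith⟩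
    exact hc.symm.dvd_of_dvd_mul_right h3
  have hle : q ≤ (q0 : ℤ) := Int.le_of_dvd (by omega) hdvd
  have hle' : (q : ℝ) ≤ q0 := by exact_mod_cast hle
  have : (0 : ℝ) < q0 := by exact_mod_cast h1
  linarith

end

section

lemma admW_abs {w : ℤ → ℝ} (hw : AdmW w) (n : ℤ) : ‖(w n : ℂ)‖ ≤ 1 := by
  rw [Complex.norm_real]
  rcases hw with h | h
  · rw [h]; simp
  · rw [h]
    by_cases hn : n ∈ {n : ℤ | Prime n}
    · rw [Set.indicator_of_mem hn]; simp
    · rw [Set.indicator_of_notMem hn]; simp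

/-- one order-connected piece, cut in cells -/
lemma piece_bound (N : ℕ) (l : ℕ) (hl : 1 ≤ l) (G : ℤ → ℂ) (hG : ∀ n, ‖G n‖ ≤ 1) (f : ℤ → ℂ)
    (T F D : ℝ) (hT0 : 0 ≤ T) (hF0 : 0 ≤ F) (hD0 : 0 ≤ D)
    (hT : ∀ u v : ℤ, -(N : ℤ) ≤ u → v ≤ N → ‖∑ n ∈ Finset.Icc u v, G n‖ ≤ T)
    (s : Finset ℤ) (hs : ∀ n ∈ s, -(N : ℤ) ≤ n ∧ n ≤ N)
    (hord : ∀ a ∈ s, ∀ b ∈ s, ∀ c, a ≤ c → c ≤ b → c ∈ s)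
    (hF : ∀ n ∈ s, ‖f n‖ ≤ F) (hD : ∀ n ∈ s, ∀ m ∈ s, |n - m| ≤ (l : ℤ) → ‖f n - f m‖ ≤ D) :
    ‖∑ n ∈ s, G n * f n‖ ≤ (2 * N + 1) * D + (2 * N / l + 3) * (F * T) := by
  classical
  have hl0 : (0 : ℤ) < l := by exact_mod_cast hl
  have hlr : (0 : ℝ) < l := by exact_mod_cast hl
  set J := Finset.Icc ((-(N : ℤ)) / l) ((N : ℤ) / l) with hJ
  have hmap : ∀ n ∈ s, n / (l : ℤ) ∈ J := by
    intro n hn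
    rw [hJ, Finset.mem_Icc]
    exact ⟨Int.ediv_le_ediv hl0 (hs n hn).1, Int.ediv_le_ediv hl0 (hs n hn).2⟩
  have hscard : (s.card : ℝ) ≤ 2 * N + 1 := by
    have h1 : s ⊆ Finset.Icc (-(N : ℤ)) N := fun n hn => Finset.mem_Icc.2 (hs n hn)
    have h2 : (s.card : ℝ) ≤ ((Finset.Icc (-(N : ℤ)) N).card : ℝ) := by
      exact_mod_cast Finset.card_le_card h1
    exact h2.trans (card_Icc_le N _ _ le_rfl le_rfl)
  have hJc : (J.card : ℝ) ≤ 2 * N / l + 3 := by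
    have h1 : ((-(N : ℤ)) / l : ℤ) * l ≥ -(N : ℤ) - l := by
      have := Int.lt_ediv_add_one_mul_self (-(N : ℤ)) hl0
      nlinarith
    have h2 : ((N : ℤ) / l) * l ≤ N := Int.ediv_mul_le _ hl0.ne'
    set x := (-(N : ℤ)) / (l : ℤ) with hx
    set y := (N : ℤ) / (l : ℤ) with hy
    have h1r : (x : ℝ) * l ≥ -(N : ℝ) - l := by exact_mod_cast h1
    have h2r : (y : ℝ) * l ≤ N := by exact_mod_cast h2
    have h3 : (y : ℝ) - x ≤ 2 * N / l + 1 := by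
      rw [← sub_nonneg]
      have : 2 * (N : ℝ) / l + 1 - (y - x) = (2 * N + l - (y * l - x * l)) / l := by
        field_simp
      rw [this]
      apply div_nonneg _ hlr.le
      linarith
    have h4 : J.card = (y + 1 - x).toNat := by rw [hJ, Int.card_Icc]
    rw [h4]
    have hpos : (0 : ℝ) ≤ 2 * N / l := by positivity
    rcases le_total 0 (y + 1 - x) with h5 | h5
    · have h6 : (((y + 1 - x).toNat : ℤ) : ℝ) = ((y + 1 - x : ℤ) : ℝ) := by
        rw [Int.toNat_of_nonneg h5]
      rw [Int.cast_natCast] at h6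
      rw [h6]
      push_cast
      linarith
    · rw [Int.toNat_of_nonpos h5]
      push_cast
      linarith
  rw [← Finset.sum_fiberwise_of_maps_to hmap]
  have hcell : ∀ j ∈ J, ‖∑ n ∈ s.filter (fun n => n / (l : ℤ) = j), G n * f n‖
      ≤ ((s.filter (fun n => n / (l : ℤ) = j)).card : ℝ) * D + F * T := by
    intro j _
    set t := s.filter (fun n => n / (l : ℤ) = j) with ht
    rcases t.eq_empty_or_nonempty with h0 | ⟨n0, hn0⟩
    · rw [h0]; simp; positivity
    · have hts : ∀ n ∈ t, n ∈ s := fun n hn => (Finset.mem_filter.1 hn).1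
      have htj : ∀ n ∈ t, n / (l : ℤ) = j := fun n hn => (Finset.mem_filter.1 hn).2
      obtain ⟨u, v, hu, hv, htu⟩ := ordc_Icc t (by
        intro a ha b hb c hac hcb
        refine Finset.mem_filter.2 ⟨hord a (hts a ha) b (hts b hb) c hac hcb, ?_⟩
        have h1 := Int.ediv_le_ediv hl0 hac
        have h2 := Int.ediv_le_ediv hl0 hcb
        rw [htj a ha] at h1
        rw [htj b hb] at h2
        omega) (-(N : ℤ)) N (fun n hn => hs n (hts n hn))
      have e : ∑ n ∈ t, G n * f n = ∑ n ∈ t, G n * (f n - f n0) + (∑ n ∈ t, G n) * f n0 := by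
        rw [Finset.sum_mul, ← Finset.sum_add_distrib]
        exact Finset.sum_congr rfl fun n _ => by ring
      rw [e]
      refine (norm_add_le _ _).trans (add_le_add ?_ ?_)
      · refine (norm_sum_le _ _).trans ?_
        rw [← nsmul_eq_mul]
        refine Finset.sum_le_card_nsmul _ _ _ fun n hn => ?_
        rw [norm_mul]
        have hd : ‖f n - f n0‖ ≤ D := by
          refine hD n (hts n hn) n0 (hts n0 hn0) ?_
          have a1 := Int.emod_nonneg n hl0.ne'
          have a2 := Int.emod_lt_of_pos n hl0
          have b1 := Int.emod_nonneg n0 hl0.ne'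
          have b2 := Int.emod_lt_of_pos n0 hl0
          have a3 := Int.emod_add_mul_ediv n l
          have b3 := Int.emod_add_mul_ediv n0 l
          rw [htj n hn] at a3
          rw [htj n0 hn0] at b3
          rw [abs_le]
          constructor <;> linarith
        calc ‖G n‖ * ‖f n - f n0‖ ≤ 1 * D := by gcongr; exact hG n
          _ = D := one_mul _
      · rw [norm_mul, mul_comm]
        refine mul_le_mul (hF n0 (hts n0 hn0)) ?_ (norm_nonneg _) hF0
        rw [htu]
        exact hT u v hu hv
  refine (norm_sum_le _ _).trans ((Finset.sum_le_sum hcell).trans ?_)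
  rw [Finset.sum_add_distrib, ← Finset.sum_mul, Finset.sum_const, nsmul_eq_mul]
  have hcs : ∑ j ∈ J, ((s.filter (fun n => n / (l : ℤ) = j)).card : ℝ) = s.card := by
    rw [Finset.card_eq_sum_card_fiberwise (f := fun n => n / (l : ℤ)) (t := J) (s := s) hmap]
    push_cast
    rfl
  rw [hcs]
  gcongr

/-- a difference of two order connected sets -/
lemma line_bound (N : ℕ) (l : ℕ) (hl : 1 ≤ l) (G : ℤ → ℂ) (hG : ∀ n, ‖G n‖ ≤ 1) (f : ℤ → ℂ)
    (T F D : ℝ) (hT0 : 0 ≤ T) (hF0 : 0 ≤ F) (hD0 : 0 ≤ D)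
    (hT : ∀ u v : ℤ, -(N : ℤ) ≤ u → v ≤ N → ‖∑ n ∈ Finset.Icc u v, G n‖ ≤ T)
    (A A' : Set ℤ) (hA : A.OrdConnected) (hA' : A'.OrdConnected)
    (hF : ∀ n ∈ A \ A', ‖f n‖ ≤ F)
    (hD : ∀ n ∈ A \ A', ∀ m ∈ A \ A', |n - m| ≤ (l : ℤ) → ‖f n - f m‖ ≤ D) :
    ‖∑ n ∈ Finset.Icc (-(N : ℤ)) N, Set.indicator (A \ A') (fun n => G n * f n) n‖
      ≤ 2 * ((2 * N + 1) * D + (2 * N / l + 3) * (F * T)) := by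
  classical
  rw [Finset.sum_indicator_eq_sum_filter]
  set s := (Finset.Icc (-(N : ℤ)) N).filter (fun n => n ∈ A \ A') with hs
  have hsm : ∀ n ∈ s, (-(N : ℤ) ≤ n ∧ n ≤ N) ∧ n ∈ A \ A' := by
    intro n hn
    rw [hs, Finset.mem_filter, Finset.mem_Icc] at hn
    exact hn
  rw [← Finset.sum_filter_add_sum_filter_not s (fun n => ∃ m ∈ A', n < m)]
  refine (norm_add_le _ _).trans ?_
  rw [two_mul]
  refine add_le_add ?_ ?_
  · refine piece_bound N l hl G hG f T F D hT0 hF0 hD0 hT _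
      (fun n hn => (hsm n (Finset.mem_filter.1 hn).1).1) ?_
      (fun n hn => hF n (hsm n (Finset.mem_filter.1 hn).1).2)
      (fun n hn m hm => hD n (hsm n (Finset.mem_filter.1 hn).1).2 m
        (hsm m (Finset.mem_filter.1 hm).1).2)
    intro a ha b hb c hac hcb
    obtain ⟨ha1, ha2⟩ := Finset.mem_filter.1 ha
    obtain ⟨hb1, m, hm, hbm⟩ := Finset.mem_filter.1 hb
    have a3 := hsm a ha1
    have b3 := hsm b hb1
    refine Finset.mem_filter.2 ⟨?_, m, hm, by omega⟩
    rw [hs, Finset.mem_filter, Finset.mem_Icc]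
    refine ⟨⟨by omega, by omega⟩, hA.out a3.2.1 b3.2.1 ⟨hac, hcb⟩, fun hc => ?_⟩
    exact b3.2.2 (hA'.out hc hm ⟨hcb, hbm.le⟩)
  · refine piece_bound N l hl G hG f T F D hT0 hF0 hD0 hT _
      (fun n hn => (hsm n (Finset.mem_filter.1 hn).1).1) ?_
      (fun n hn => hF n (hsm n (Finset.mem_filter.1 hn).1).2)
      (fun n hn m hm => hD n (hsm n (Finset.mem_filter.1 hn).1).2 m
        (hsm m (Finset.mem_filter.1 hm).1).2)
    intro a ha b hb c hac hcb
    obtain ⟨ha1, ha2⟩ := Finset.mem_filter.1 ha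
    obtain ⟨hb1, hb2⟩ := Finset.mem_filter.1 hb
    have a3 := hsm a ha1
    have b3 := hsm b hb1
    push Not at ha2
    refine Finset.mem_filter.2 ⟨?_, ?_⟩
    · rw [hs, Finset.mem_filter, Finset.mem_Icc]
      refine ⟨⟨by omega, by omega⟩, hA.out a3.2.1 b3.2.1 ⟨hac, hcb⟩, fun hc => ?_⟩
      have h1 := ha2 c hc
      have : c = a := by omega
      exact a3.2.2 (this ▸ hc)
    · rintro ⟨m, hm, hcm⟩
      have := ha2 m hm
      omega

end

section

/-- points on a coordinate line -/
lemma zEmbed_line {k : ℕ} (p : Fin (k + 1)) (v : Fin k → ℤ) (n : ℤ) :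
    zEmbed (p.insertNth (α := fun _ => ℤ) n v)
      = AffineMap.lineMap (k := ℝ) (zEmbed (p.insertNth (α := fun _ => ℤ) 0 v))
          (zEmbed (p.insertNth (α := fun _ => ℤ) 1 v)) (n : ℝ) := by
  rw [AffineMap.lineMap_apply]
  ext i
  refine Fin.succAboveCases p ?_ ?_ i
  · simp [zEmbed]
  · intro j
    simp [zEmbed]

lemma zEmbed_dist {k : ℕ} (p : Fin (k + 1)) (v : Fin k → ℤ) (n m : ℤ) :
    dist (zEmbed (p.insertNth (α := fun _ => ℤ) n v)) (zEmbed (p.insertNth (α := fun _ => ℤ) m v))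
      = |(n : ℝ) - m| := by
  rw [EuclideanSpace.dist_eq, Fin.sum_univ_succAbove _ p]
  simp [zEmbed, Real.dist_eq, Real.sqrt_sq_eq_abs]

lemma line_ordConnected {k : ℕ} (p : Fin (k + 1)) (v : Fin k → ℤ)
    (Ω : Set (EuclideanSpace ℝ (Fin (k + 1)))) (h : Convex ℝ Ω) :
    {n : ℤ | zEmbed (p.insertNth (α := fun _ => ℤ) n v) ∈ Ω}.OrdConnected := by
  have h1 := (h.affine_preimage (AffineMap.lineMap (k := ℝ)
    (zEmbed (p.insertNth (α := fun _ => ℤ) 0 v))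
          (zEmbed (p.insertNth (α := fun _ => ℤ) 1 v)))).ordConnected
  refine ⟨fun a ha b hb c hc => ?_⟩
  simp only [Set.mem_ofPred_eq] at ha hb ⊢
  rw [zEmbed_line] at ha hb ⊢
  exact h1.out ha hb ⟨by exact_mod_cast hc.1, by exact_mod_cast hc.2⟩

open Classical in
/-- weight of coordinate `p` -/
noncomputable def wOf (k' p : ℕ) : ℤ → ℝ :=
  if p < k' then (fun _ => 1) else Set.indicator {n : ℤ | Prime n} (fun _ => 1)

lemma wOf_adm (k' p : ℕ) : AdmW (wOf k' p) := by
  unfold wOf AdmW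
  split_ifs
  · exact Or.inl rfl
  · exact Or.inr rfl

/-- weight of the remaining coordinates -/
noncomputable def wRest {k : ℕ} (k' : ℕ) (p : Fin (k + 1)) (v : Fin k → ℤ) : ℝ :=
  Set.indicator {v : Fin k → ℤ | ∀ j, k' ≤ (p.succAbove j : ℕ) → Prime (v j)} (fun _ => 1) v

lemma wRest_norm {k : ℕ} (k' : ℕ) (p : Fin (k + 1)) (v : Fin k → ℤ) :
    ‖(wRest k' p v : ℂ)‖ ≤ 1 := by
  rw [Complex.norm_real]
  unfold wRest
  by_cases h : v ∈ {v : Fin k → ℤ | ∀ j, k' ≤ (p.succAbove j : ℕ) → Prime (v j)}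
  · rw [Set.indicator_of_mem h]; simp
  · rw [Set.indicator_of_notMem h]; simp

lemma primeInd_split {k : ℕ} (k' : ℕ) (p : Fin (k + 1)) (v : Fin k → ℤ) (n : ℤ) :
    primeInd k' (p.insertNth (α := fun _ => ℤ) n v) = wOf k' p n * wRest k' p v := by
  classical
  have e : (p.insertNth (α := fun _ => ℤ) n v ∈
      {w : Fin (k + 1) → ℤ | ∀ i : Fin (k + 1), k' ≤ (i : ℕ) → Prime (w i)}) ↔
      ((k' ≤ (p : ℕ) → Prime n) ∧ v ∈ {v : Fin k → ℤ | ∀ j, k' ≤ (p.succAbove j : ℕ) → Prime (v j)}) := by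
    simp only [Set.mem_ofPred_eq]
    rw [Fin.forall_iff_succAbove p]
    simp only [Fin.insertNth_apply_same, Fin.insertNth_apply_succAbove]
  unfold primeInd wOf wRest
  rw [Set.indicator_apply, Set.indicator_apply]
  simp only [e]
  by_cases hp : (p : ℕ) < k'
  · simp [hp]
  · simp only [hp, if_false, Set.indicator_apply, Set.mem_ofPred_eq]
    have : k' ≤ (p : ℕ) := by omega
    by_cases hn : Prime n <;> simp [hn, this]

lemma norm_mul_le_one_right {a b : ℂ} {c : ℝ} (ha : ‖a‖ ≤ 1) (hb : ‖b‖ ≤ c) : ‖a * b‖ ≤ c := by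
  rw [norm_mul]
  calc ‖a‖ * ‖b‖ ≤ 1 * c := mul_le_mul ha hb (norm_nonneg _) zero_le_one
    _ = c := one_mul _

/-- a bad line -/
def BadL {k : ℕ} (p : Fin (k + 1)) (k' : ℕ) (Γ : Finset (Fin (k + 1) → ℕ))
    (ξ : (Fin (k + 1) → ℕ) → ℝ) (N : ℕ) (R : ℝ) (v' : Fin k → ℤ) : Prop :=
  ∃ u v : ℤ, -(N : ℤ) ≤ u ∧ v ≤ N ∧
    (N : ℝ) ≤ R * ‖∑ n ∈ Finset.Icc u v,
      (wOf k' p n : ℂ) * eC ((polyAt p Γ ξ v').eval (n : ℝ))‖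

/-- the summand -/
noncomputable def term {k : ℕ} (k' : ℕ) (Γ : Finset (Fin k → ℕ))
    (ξ : (Fin k → ℕ) → ℝ) (Ω Ω' : Set (EuclideanSpace ℝ (Fin k)))
    (φ : EuclideanSpace ℝ (Fin k) → ℂ) (v : Fin k → ℤ) : ℂ :=
  eC (qPair Γ ξ v) * φ (zEmbed v) *
    ((primeInd k' v * Set.indicator (Ω \ Ω') (fun _ => 1) (zEmbed v) : ℝ) : ℂ)

lemma primeInd_norm {k : ℕ} (k' : ℕ) (v : Fin k → ℤ) : ‖(primeInd k' v : ℂ)‖ ≤ 1 := by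
  rw [Complex.norm_real]
  unfold primeInd
  by_cases h : v ∈ {w : Fin k → ℤ | ∀ i : Fin k, k' ≤ (i : ℕ) → Prime (w i)}
  · rw [Set.indicator_of_mem h]; simp
  · rw [Set.indicator_of_notMem h]; simp

lemma term_norm {k : ℕ} (k' : ℕ) (Γ : Finset (Fin k → ℕ))
    (ξ : (Fin k → ℕ) → ℝ) (Ω Ω' : Set (EuclideanSpace ℝ (Fin k)))
    (φ : EuclideanSpace ℝ (Fin k) → ℂ) (v : Fin k → ℤ) (F : ℝ) (hF0 : 0 ≤ F)
    (hF : ∀ x ∈ Ω \ Ω', ‖φ x‖ ≤ F) : ‖term k' Γ ξ Ω Ω' φ v‖ ≤ F := by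
  unfold term
  by_cases h : zEmbed v ∈ Ω \ Ω'
  · rw [Set.indicator_of_mem h, mul_one, mul_comm]
    refine norm_mul_le_one_right (primeInd_norm k' v) ?_
    exact norm_mul_le_one_right (norm_eC _).le (hF _ h)
  · rw [Set.indicator_of_notMem h]
    simpa using hF0

lemma term_slice {k : ℕ} (p : Fin (k + 1)) (k' : ℕ) (Γ : Finset (Fin (k + 1) → ℕ))
    (ξ : (Fin (k + 1) → ℕ) → ℝ) (Ω Ω' : Set (EuclideanSpace ℝ (Fin (k + 1))))
    (φ : EuclideanSpace ℝ (Fin (k + 1)) → ℂ) (v : Fin k → ℤ) (n : ℤ) :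
    term k' Γ ξ Ω Ω' φ (p.insertNth (α := fun _ => ℤ) n v) = (wRest k' p v : ℂ) *
      Set.indicator ({n : ℤ | zEmbed (p.insertNth (α := fun _ => ℤ) n v) ∈ Ω} \
        {n : ℤ | zEmbed (p.insertNth (α := fun _ => ℤ) n v) ∈ Ω'})
        (fun n => ((wOf k' p n : ℂ) * eC ((polyAt p Γ ξ v).eval (n : ℝ))) *
          φ (zEmbed (p.insertNth (α := fun _ => ℤ) n v))) n := by
  unfold term
  rw [primeInd_split]
  by_cases h : zEmbed (p.insertNth (α := fun _ => ℤ) n v) ∈ Ω \ Ω'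
  · rw [Set.indicator_of_mem h, Set.indicator_of_mem (show n ∈ _ from h), polyAt_eval]
    push_cast
    ring
  · rw [Set.indicator_of_notMem h, Set.indicator_of_notMem (show n ∉ _ from h)]
    simp

open Classical in
lemma total_bound {k : ℕ} (p : Fin (k + 1)) (k' : ℕ) (Γ : Finset (Fin (k + 1) → ℕ))
    (ξ : (Fin (k + 1) → ℕ) → ℝ) (Ω Ω' : Set (EuclideanSpace ℝ (Fin (k + 1))))
    (hΩ : Convex ℝ Ω) (hΩ' : Convex ℝ Ω')
    (φ : EuclideanSpace ℝ (Fin (k + 1)) → ℂ) (N : ℕ) (hN : 1 ≤ N) (R : ℝ) (hR : 0 < R)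
    (l : ℕ) (hl : 1 ≤ l) (F D : ℝ) (hF0 : 0 ≤ F) (hD0 : 0 ≤ D)
    (hF : ∀ x ∈ Ω \ Ω', ‖φ x‖ ≤ F)
    (hD : ∀ x ∈ Ω \ Ω', ∀ y ∈ Ω \ Ω', dist x y ≤ l → ‖φ x - φ y‖ ≤ D)
    (hbad : R * ((box k N).filter (BadL p k' Γ ξ N R)).card ≤ (N : ℝ) ^ k) :
    ‖∑ v ∈ box (k + 1) N, term k' Γ ξ Ω Ω' φ v‖ ≤
      (3 * N) ^ k * (2 * (3 * N * D + (2 * N / l + 3) * (F * (N / R))))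
        + N ^ k / R * (3 * N * F) := by
  have hN1 : (1 : ℝ) ≤ N := by exact_mod_cast hN
  rw [sum_box_slice k N p, ← Finset.sum_filter_add_sum_filter_not (box k N) (BadL p k' Γ ξ N R),
    add_comm]
  refine (norm_add_le _ _).trans (add_le_add ?_ ?_)
  · refine (norm_sum_le _ _).trans ?_
    refine (Finset.sum_le_card_nsmul _ _ (2 * (3 * N * D + (2 * N / l + 3) * (F * (N / R)))) ?_).trans ?_
    · intro v hv
      have hgood := (Finset.mem_filter.1 hv).2
      unfold BadL at hgood
      push Not at hgood
      simp only [term_slice]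
      rw [← Finset.mul_sum]
      refine norm_mul_le_one_right (wRest_norm k' p v) ?_
      refine (line_bound N l hl (fun n => (wOf k' p n : ℂ) * eC ((polyAt p Γ ξ v).eval (n : ℝ)))
        (fun n => norm_mul_le_one_right (admW_abs (wOf_adm _ _) n) (norm_eC _).le)
        (fun n => φ (zEmbed (p.insertNth (α := fun _ => ℤ) n v))) (N / R) F D (by positivity)
        hF0 hD0 ?_ _ _ (line_ordConnected p v Ω hΩ) (line_ordConnected p v Ω' hΩ')
        ?_ ?_).trans ?_
      · intro u v hu hv
        rw [le_div_iff₀ hR, mul_comm]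
        exact (hgood u v hu hv).le
      · intro n hn
        exact hF _ hn
      · intro n hn m hm hnm
        refine hD _ hn _ hm ?_
        rw [zEmbed_dist]
        exact_mod_cast hnm
      · gcongr
        linarith
    · rw [nsmul_eq_mul]
      refine mul_le_mul_of_nonneg_right ?_ (by positivity)
      have h1 : ((((box k N).filter (fun v => ¬ BadL p k' Γ ξ N R v)).card : ℕ) : ℝ)
          ≤ ((box k N).card : ℝ) := by exact_mod_cast Finset.card_filter_le _ _
      refine h1.trans ?_
      rw [card_box]
      gcongr
      linarith
  · refine (norm_sum_le _ _).trans ?_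
    refine (Finset.sum_le_card_nsmul _ _ (3 * N * F) ?_).trans ?_
    · intro v _
      refine (norm_sum_le _ _).trans ?_
      refine (Finset.sum_le_card_nsmul _ _ F fun n _ => term_norm k' Γ ξ Ω Ω' φ _ F hF0 hF).trans ?_
      rw [nsmul_eq_mul]
      gcongr
      exact (card_Icc_le N _ _ le_rfl le_rfl).trans (by linarith)
    · rw [nsmul_eq_mul]
      refine mul_le_mul_of_nonneg_right ?_ (by positivity)
      rw [le_div_iff₀ hR, mul_comm]
      exact hbad

lemma tsum_box {k : ℕ} (k' : ℕ) (Γ : Finset (Fin k → ℕ))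
    (ξ : (Fin k → ℕ) → ℝ) (Ω Ω' : Set (EuclideanSpace ℝ (Fin k)))
    (φ : EuclideanSpace ℝ (Fin k) → ℂ) (N : ℕ) (hb : Ω ⊆ Metric.ball 0 N) :
    ∑' v, term k' Γ ξ Ω Ω' φ v = ∑ v ∈ box k N, term k' Γ ξ Ω Ω' φ v := by
  refine tsum_eq_sum fun v hv => ?_
  unfold term
  rw [Set.indicator_of_notMem]
  · simp
  · intro h
    apply hv
    rw [mem_box]
    intro i
    have h1 := hb h.1
    rw [mem_ball_zero_iff] at h1
    have h2 := PiLp.norm_apply_le (zEmbed v) i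
    have h3 : ‖zEmbed v i‖ = |(v i : ℝ)| := rfl
    rw [h3] at h2
    have h4 : |(v i : ℝ)| ≤ N := by linarith
    exact_mod_cast h4

lemma triv_bound {k : ℕ} (k' : ℕ) (Γ : Finset (Fin k → ℕ))
    (ξ : (Fin k → ℕ) → ℝ) (Ω Ω' : Set (EuclideanSpace ℝ (Fin k)))
    (φ : EuclideanSpace ℝ (Fin k) → ℂ) (N : ℕ) (hN : 1 ≤ N) (F : ℝ) (hF0 : 0 ≤ F)
    (hF : ∀ x ∈ Ω \ Ω', ‖φ x‖ ≤ F) :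
    ‖∑ v ∈ box k N, term k' Γ ξ Ω Ω' φ v‖ ≤ (3 * N) ^ k * F := by
  have hN1 : (1 : ℝ) ≤ N := by exact_mod_cast hN
  refine (norm_sum_le _ _).trans ?_
  refine (Finset.sum_le_card_nsmul _ _ F fun n _ => term_norm k' Γ ξ Ω Ω' φ _ F hF0 hF).trans ?_
  rw [nsmul_eq_mul, card_box]
  gcongr
  linarith

end

section

lemma large_N (α : ℝ) (m : ℕ) : ∃ N0 : ℕ, ∀ N : ℕ, N0 ≤ N →
    3 ≤ Real.log N ∧ (Real.log N) ^ α ≤ (N : ℝ) ∧ (Real.log N) ^ m ≤ (N : ℝ) := by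
  have t : Filter.Tendsto (fun N : ℕ => (N : ℝ)) Filter.atTop Filter.atTop :=
    tendsto_natCast_atTop_atTop
  have h1 := (Real.tendsto_log_atTop.comp t).eventually_ge_atTop 3
  have h2 := t.eventually ((isLittleO_log_rpow_rpow_atTop α one_pos).bound (c := 1) one_pos)
  have h3 := t.eventually ((isLittleO_log_rpow_rpow_atTop (m : ℝ) one_pos).bound (c := 1) one_pos)
  obtain ⟨N0, h⟩ := Filter.eventually_atTop.1 (h1.and (h2.and h3))
  refine ⟨N0, fun N hN => ?_⟩
  obtain ⟨a, b, c⟩ := h N hN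
  simp only [Real.rpow_one, Real.rpow_natCast, one_mul, Real.norm_natCast] at b c
  exact ⟨a, (le_abs_self _).trans b, (le_abs_self _).trans c⟩

set_option maxHeartbeats 1000000 in
lemma mainReal {k : ℕ} (k' : ℕ) (Γ : Finset (Fin (k + 1) → ℕ)) (α : ℝ) (hα : 0 < α)
    (γ₀ : Fin (k + 1) → ℕ) (hγ₀ : γ₀ ∈ Γ) (hne : γ₀ ≠ 0) :
    ∃ β₀ : ℝ, 0 < β₀ ∧ ∀ β : ℝ, β₀ < β →
      ∃ Cw : ℝ, 0 < Cw ∧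
        ∀ (N : ℕ), 2 ≤ N →
        ∀ (Ω Ω' : Set (EuclideanSpace ℝ (Fin (k + 1)))),
          Ω' ⊆ Ω → Ω ⊆ Metric.ball 0 N → Convex ℝ Ω → Convex ℝ Ω' →
        ∀ (φ : EuclideanSpace ℝ (Fin (k + 1)) → ℂ) (ξ : (Fin (k + 1) → ℕ) → ℝ),
        ∀ a q : ℤ,
          IsCoprime a q → 1 ≤ a → a ≤ q →
          (Real.log N) ^ β ≤ (q : ℝ) →
          (q : ℝ) ≤ (N : ℝ) ^ ((∑ i, γ₀ i : ℕ) : ℝ) * (Real.log N) ^ (-β) →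
          |ξ γ₀ - (a : ℝ) / (q : ℝ)| ≤ 1 / (q : ℝ) ^ 2 →
          ∀ F D : ℝ, 0 ≤ F → 0 ≤ D → (∀ x ∈ Ω \ Ω', ‖φ x‖ ≤ F) →
          (∀ x ∈ Ω \ Ω', ∀ y ∈ Ω \ Ω', dist x y ≤ (N : ℝ) * (Real.log N) ^ (-α) →
            ‖φ x - φ y‖ ≤ D) →
          ‖∑' v, term k' Γ ξ Ω Ω' φ v‖ ≤
            Cw * (((N : ℝ) ^ (k + 1) * (Real.log N) ^ (-α)) * F + (N : ℝ) ^ (k + 1) * D) := by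
  classical
  obtain ⟨p, hp⟩ : ∃ p, 1 ≤ γ₀ p := by
    by_contra hcon
    push Not at hcon
    exact hne (funext fun i => by have := hcon i; simp; omega)
  obtain ⟨C, hC⟩ := badFew p Γ γ₀ hγ₀ hp
  set A : ℕ := ⌈2 * α⌉₊ + 1 with hA
  have hA2 : 2 * α ≤ A := by
    rw [hA]; push_cast
    have := Nat.le_ceil (2 * α)
    linarith
  obtain ⟨N0, hN0⟩ := large_N α (A * C)
  refine ⟨((A * C + 1 : ℕ) : ℝ), by positivity, fun β hβ => ?_⟩
  refine ⟨3 ^ (k + 1) * 40 + 3 ^ (k + 1) * ((N0 : ℝ)) ^ α, by positivity, ?_⟩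
  intro N hN Ω Ω' hsub hball hΩ hΩ' φ ξ a q hcop ha haq hq1 hq2 hx F D hF0 hD0 hF hD
  have hN2 : (2 : ℝ) ≤ N := by exact_mod_cast hN
  have hN0' : (0 : ℝ) < N := by linarith
  have hL0 : 0 < Real.log N := Real.log_pos (by linarith)
  rw [tsum_box k' Γ ξ Ω Ω' φ N hball]
  set L := Real.log N with hL
  have hLα : 0 < L ^ α := Real.rpow_pos_of_pos hL0 _
  have hLn : L ^ (-α) = (L ^ α)⁻¹ := Real.rpow_neg hL0.le _
  rcases lt_or_ge N N0 with hsmall | hlarge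
  · refine (triv_bound k' Γ ξ Ω Ω' φ N (by omega) F hF0 hF).trans ?_
    have h1 : L ^ α ≤ (N0 : ℝ) ^ α := by
      refine Real.rpow_le_rpow hL0.le ?_ hα.le
      have h2 : L ≤ N := (Real.log_le_sub_one_of_pos hN0').trans (by linarith)
      exact h2.trans (by exact_mod_cast hsmall.le)
    have h2 : 1 ≤ (N0 : ℝ) ^ α * L ^ (-α) := by
      rw [hLn, ← div_eq_mul_inv, le_div_iff₀ hLα]; linarith
    have hLnp : 0 < L ^ (-α) := Real.rpow_pos_of_pos hL0 _
    calc (3 * (N : ℝ)) ^ (k + 1) * F = 3 ^ (k + 1) * (N ^ (k + 1) * F) * 1 := by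
          rw [mul_pow]; ring
      _ ≤ 3 ^ (k + 1) * (N ^ (k + 1) * F) * ((N0 : ℝ) ^ α * L ^ (-α)) := by gcongr
      _ = 3 ^ (k + 1) * (N0 : ℝ) ^ α * (N ^ (k + 1) * L ^ (-α) * F + 0) := by ring
      _ ≤ _ := by
          gcongr
          · have : (0 : ℝ) ≤ 3 ^ (k + 1) * 40 := by positivity
            linarith
          · positivity
  · obtain ⟨hL3, hLN, hLm⟩ := hN0 N hlarge
    rw [← hL] at hL3 hLN hLm
    have hL1 : 1 ≤ L := by linarith
    set R := L ^ A with hR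
    have hLR : L ≤ R := by
      rw [hR]
      exact le_self_pow₀ hL1 (by omega)
    have hR2 : 2 ≤ R := by linarith
    have hR0 : 0 < R := by linarith
    have hRC : R ^ C = L ^ (A * C) := by rw [hR, ← pow_mul]
    have hRα : L ^ α * L ^ α ≤ R := by
      rw [← Real.rpow_add hL0, hR, ← Real.rpow_natCast]
      exact Real.rpow_le_rpow_of_exponent_le hL1 (by linarith)
    -- the bad lines are few
    have hfew : R * ((box k N).filter (BadL p k' Γ ξ N R)).card ≤ (N : ℝ) ^ k := by
      by_contra hcon
      push Not at hcon
      obtain ⟨q0, hq01, hq02, hq03⟩ := hC R hR2 N hLR (by rw [hRC]; exact hLm) (wOf k' p)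
        (wOf_adm _ _) ξ _ (Finset.filter_subset _ _) hcon.le
        (fun v' hv' => (Finset.mem_filter.1 hv').2)
      have hLβ : L * L ^ (A * C) ≤ L ^ β := by
        rw [← pow_succ', ← Real.rpow_natCast]
        exact Real.rpow_le_rpow_of_exponent_le hL1 hβ.le
      have hAC : 0 < L ^ (A * C) := by positivity
      refine arith_contra (ξ γ₀) (R ^ C) ((N : ℝ) ^ (∑ i, γ₀ i)) (by positivity) a q hcop
        (by omega) hx q0 hq01 hq02 hq03 ?_ ?_
      · rw [hRC]
        have : 3 * L ^ (A * C) ≤ L * L ^ (A * C) := by gcongr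
        linarith
      · rw [hRC]
        rw [Real.rpow_natCast, Real.rpow_neg hL0.le] at hq2
        have hM : 0 < (N : ℝ) ^ (∑ i, γ₀ i) := by positivity
        have hβ0 : 0 < L ^ β := Real.rpow_pos_of_pos hL0 _
        rw [div_lt_iff₀ hM]
        rw [← div_eq_mul_inv, le_div_iff₀ hβ0] at hq2
        have hq0 : (0 : ℝ) < q := by exact_mod_cast (by omega : (0 : ℤ) < q)
        have : (q : ℝ) * (3 * L ^ (A * C)) ≤ q * L ^ β := by
          gcongr
          exact le_trans (by gcongr) hLβ
        nlinarith
    set l := ⌊(N : ℝ) * L ^ (-α)⌋₊ with hl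
    have hge1 : 1 ≤ (N : ℝ) * L ^ (-α) := by
      rw [hLn, ← div_eq_mul_inv, le_div_iff₀ hLα]; linarith
    have hl1 : 1 ≤ l := Nat.le_floor (by exact_mod_cast hge1)
    have hl1r : (1 : ℝ) ≤ l := by exact_mod_cast hl1
    have hlle : (l : ℝ) ≤ (N : ℝ) * L ^ (-α) := Nat.floor_le (by linarith)
    have hlge : (N : ℝ) * L ^ (-α) ≤ 2 * l := by
      have := (Nat.lt_floor_add_one ((N : ℝ) * L ^ (-α))).le
      rw [← hl] at this
      linarith
    have hmain := total_bound p k' Γ ξ Ω Ω' hΩ hΩ' φ N (by omega) R hR0 l hl1 F D hF0 hD0 hF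
      (fun x hx y hy hxy => hD x hx y hy (hxy.trans hlle)) hfew
    refine hmain.trans ?_
    have hLα1 : 1 ≤ L ^ α := Real.one_le_rpow hL1 hα.le
    have hcells : 2 * (N : ℝ) / l + 3 ≤ 7 * L ^ α := by
      have : 2 * (N : ℝ) / l ≤ 4 * L ^ α := by
        rw [div_le_iff₀ (by linarith)]
        rw [hLn, ← div_eq_mul_inv, div_le_iff₀ hLα] at hlge
        linarith
      linarith
    have hinv : L ^ α / R ≤ L ^ (-α) := by
      rw [hLn, div_le_iff₀ hR0, inv_mul_eq_div, le_div_iff₀ hLα]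
      exact hRα
    have hinv2 : 1 / R ≤ L ^ (-α) := by
      refine le_trans ?_ hinv
      gcongr
    have hLnp : 0 < L ^ (-α) := Real.rpow_pos_of_pos hL0 _
    set X := (N : ℝ) ^ (k + 1) * L ^ (-α) * F with hX
    have hX0 : 0 ≤ X := by positivity
    set Y := (N : ℝ) ^ (k + 1) * D with hY
    have hY0 : 0 ≤ Y := by positivity
    have h3k : (1 : ℝ) ≤ 3 ^ k := one_le_pow₀ (by norm_num)
    calc (3 * (N : ℝ)) ^ k * (2 * (3 * N * D + (2 * N / l + 3) * (F * (N / R))))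
        + N ^ k / R * (3 * N * F)
        ≤ (3 * (N : ℝ)) ^ k * (2 * (3 * N * D + (7 * L ^ α) * (F * (N / R))))
        + N ^ k / R * (3 * N * F) := by gcongr
      _ = 3 ^ k * 6 * Y + 3 ^ k * 14 * (N ^ (k + 1) * (L ^ α / R) * F)
          + 3 * (N ^ (k + 1) * (1 / R) * F) := by
          rw [mul_pow, hY]; ring
      _ ≤ 3 ^ k * 6 * Y + 3 ^ k * 14 * X + 3 * X := by rw [hX]; gcongr
      _ ≤ 3 ^ k * 6 * Y + 3 ^ k * 14 * X + 3 ^ k * 3 * X := by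
          gcongr
          linarith
      _ ≤ 3 ^ (k + 1) * 40 * (X + Y) := by
          have a1 : 0 ≤ (3 : ℝ) ^ k * X := by positivity
          have a2 : 0 ≤ (3 : ℝ) ^ k * Y := by positivity
          rw [pow_succ]
          nlinarith
      _ ≤ _ := by
          gcongr
          have : 0 ≤ (3 : ℝ) ^ (k + 1) * (N0 : ℝ) ^ α := by positivity
          linarith

end

/-- Proposition 2.3, Weyl's inequality for exponential sums over integers
and primes: if some frequency `ξ_{γ₀}` admits a rational approximation `a/q` with
`(log N)^β ≤ q ≤ N^{|γ₀|} (log N)^{-β}`, then the exponential sum over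
`(n,p) ∈ (ℤ^{k'} × (±ℙ)^{k''}) ∩ (Ω∖Ω')` with amplitude `φ` is bounded by
`N^k (log N)^{-α} ‖φ‖_{L^∞(Ω∖Ω')}` plus the modulus-of-continuity term, with an implicit
constant independent of `φ, ξ, Ω, Ω', a, q, N`. -/
theorem weyl_inequality
    (k k' k'' : ℕ) (hk : k' + k'' = k)
    (Γ : Finset (Fin k → ℕ)) (hΓ : Γ.Nonempty) (h0 : (0 : Fin k → ℕ) ∉ Γ)
    (α : ℝ) (hα : 0 < α) :
    ∃ β₀ : ℝ, 0 < β₀ ∧ ∀ β : ℝ, β₀ < β →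
      ∃ Cw : ℝ, 0 < Cw ∧
        ∀ (N : ℕ), 2 ≤ N →
        ∀ (Ω Ω' : Set (EuclideanSpace ℝ (Fin k))),
          Ω' ⊆ Ω → Ω ⊆ Metric.ball 0 N → Convex ℝ Ω → Convex ℝ Ω' →
        ∀ (φ : EuclideanSpace ℝ (Fin k) → ℂ) (ξ : (Fin k → ℕ) → ℝ),
        ∀ γ₀ ∈ Γ, ∀ a q : ℤ,
          IsCoprime a q → 1 ≤ a → a ≤ q →
          (Real.log N) ^ β ≤ (q : ℝ) →
          (q : ℝ) ≤ (N : ℝ) ^ ((∑ i, γ₀ i : ℕ) : ℝ) * (Real.log N) ^ (-β) →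
          |ξ γ₀ - (a : ℝ) / (q : ℝ)| ≤ 1 / (q : ℝ) ^ 2 →
          (‖∑' v : Fin k → ℤ,
              eC (qPair Γ ξ v) * φ (zEmbed v) *
                ((primeInd k' v * Set.indicator (Ω \ Ω') (fun _ => 1) (zEmbed v) : ℝ) : ℂ)‖₊
            : ℝ≥0∞)
          ≤ ENNReal.ofReal Cw *
            (ENNReal.ofReal ((N : ℝ) ^ k * (Real.log N) ^ (-α)) *
              (⨆ (x : EuclideanSpace ℝ (Fin k)) (_ : x ∈ Ω \ Ω'), (‖φ x‖₊ : ℝ≥0∞)) +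
            ENNReal.ofReal ((N : ℝ) ^ k) *
              (⨆ (x : EuclideanSpace ℝ (Fin k)) (y : EuclideanSpace ℝ (Fin k))
                (_ : x ∈ Ω \ Ω') (_ : y ∈ Ω \ Ω')
                (_ : dist x y ≤ (N : ℝ) * (Real.log N) ^ (-α)),
                (‖φ x - φ y‖₊ : ℝ≥0∞))) := by
  classical
  obtain ⟨γ1, hγ1⟩ := hΓ
  obtain ⟨m, rfl⟩ : ∃ m, k = m + 1 := by
    rcases k with _ | m
    · exact absurd ((Subsingleton.elim γ1 0) ▸ hγ1) h0
    · exact ⟨m, rfl⟩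
  have hM := fun γ : Γ => mainReal k' Γ α hα γ.1 γ.2 (fun h => h0 (h ▸ γ.2))
  choose b hb0 hb using hM
  refine ⟨∑ γ, b γ, Finset.sum_pos (fun γ _ => hb0 γ) ⟨⟨γ1, hγ1⟩, Finset.mem_univ _⟩, ?_⟩
  intro β hβ
  have hβ' : ∀ γ : Γ, b γ < β := fun γ =>
    (Finset.single_le_sum (f := b) (fun γ _ => (hb0 γ).le) (Finset.mem_univ γ)).trans_lt hβ
  choose c hc0 hc using fun γ : Γ => hb γ β (hβ' γ)
  refine ⟨∑ γ, c γ, Finset.sum_pos (fun γ _ => hc0 γ) ⟨⟨γ1, hγ1⟩, Finset.mem_univ _⟩, ?_⟩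
  intro N hN Ω Ω' hsub hball hΩ hΩ' φ ξ γ₀ hγ₀ a q hcop ha haq hq1 hq2 hx
  have hCpos : 0 < ∑ γ, c γ :=
    Finset.sum_pos (fun γ _ => hc0 γ) ⟨⟨γ1, hγ1⟩, Finset.mem_univ _⟩
  have hcle : c ⟨γ₀, hγ₀⟩ ≤ ∑ γ, c γ :=
    Finset.single_le_sum (f := c) (fun γ _ => (hc0 γ).le) (Finset.mem_univ _)
  have hN2 : (2 : ℝ) ≤ N := by exact_mod_cast hN
  have hN0 : (0 : ℝ) < N := by linarith
  have hL0 : 0 < Real.log N := Real.log_pos (by linarith)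
  have hLn : 0 < (Real.log N) ^ (-α) := Real.rpow_pos_of_pos hL0 _
  have hP1 : 0 < (N : ℝ) ^ (m + 1) * (Real.log N) ^ (-α) := by positivity
  have hP2 : 0 < (N : ℝ) ^ (m + 1) := by positivity
  set SF : ℝ≥0∞ := ⨆ (x : EuclideanSpace ℝ (Fin (m + 1))) (_ : x ∈ Ω \ Ω'), (‖φ x‖₊ : ℝ≥0∞)
    with hSF
  set SD : ℝ≥0∞ := ⨆ (x : EuclideanSpace ℝ (Fin (m + 1))) (y : EuclideanSpace ℝ (Fin (m + 1)))
                (_ : x ∈ Ω \ Ω') (_ : y ∈ Ω \ Ω')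
                (_ : dist x y ≤ (N : ℝ) * (Real.log N) ^ (-α)),
                (‖φ x - φ y‖₊ : ℝ≥0∞) with hSD
  have hC0 : ENNReal.ofReal (∑ γ, c γ) ≠ 0 := by
    rw [Ne, ENNReal.ofReal_eq_zero]; linarith
  by_cases hFt : SF = ⊤
  · have h1 : ENNReal.ofReal ((N : ℝ) ^ (m + 1) * (Real.log N) ^ (-α)) ≠ 0 := by
      rw [Ne, ENNReal.ofReal_eq_zero]; linarith
    rw [hFt, ENNReal.mul_top h1, top_add, ENNReal.mul_top hC0]
    exact le_top
  by_cases hDt : SD = ⊤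
  · have h1 : ENNReal.ofReal ((N : ℝ) ^ (m + 1)) ≠ 0 := by
      rw [Ne, ENNReal.ofReal_eq_zero]; linarith
    rw [hDt, ENNReal.mul_top h1, add_top, ENNReal.mul_top hC0]
    exact le_top
  have hF : ∀ x ∈ Ω \ Ω', ‖φ x‖ ≤ SF.toReal := by
    intro x hx
    have h1 : (‖φ x‖₊ : ℝ≥0∞) ≤ SF := by
      rw [hSF]; exact le_iSup₂_of_le x hx le_rfl
    have h2 := ENNReal.toReal_mono hFt h1
    simpa using h2
  have hD : ∀ x ∈ Ω \ Ω', ∀ y ∈ Ω \ Ω', dist x y ≤ (N : ℝ) * (Real.log N) ^ (-α) →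
      ‖φ x - φ y‖ ≤ SD.toReal := by
    intro x hx y hy hxy
    have h1 : (‖φ x - φ y‖₊ : ℝ≥0∞) ≤ SD := by
      rw [hSD]
      exact le_iSup₂_of_le x y (le_iSup₂_of_le hx hy (le_iSup_of_le hxy le_rfl))
    have h2 := ENNReal.toReal_mono hDt h1
    simpa using h2
  have hmain := hc ⟨γ₀, hγ₀⟩ N hN Ω Ω' hsub hball hΩ hΩ' φ ξ a q hcop ha haq hq1 hq2 hx
    SF.toReal SD.toReal ENNReal.toReal_nonneg ENNReal.toReal_nonneg hF hD
  have hmain2 := hmain.trans (mul_le_mul_of_nonneg_right hcle (by positivity))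
  have e : ENNReal.ofReal (∑ γ, c γ) *
            (ENNReal.ofReal ((N : ℝ) ^ (m + 1) * (Real.log N) ^ (-α)) * SF +
            ENNReal.ofReal ((N : ℝ) ^ (m + 1)) * SD) = ENNReal.ofReal ((∑ γ, c γ) *
      (((N : ℝ) ^ (m + 1) * (Real.log N) ^ (-α)) * SF.toReal
        + (N : ℝ) ^ (m + 1) * SD.toReal)) := by
    rw [ENNReal.ofReal_mul hCpos.le, ENNReal.ofReal_add (by positivity) (by positivity),
      ENNReal.ofReal_mul (q := SF.toReal) hP1.le,
      ENNReal.ofReal_mul (q := SD.toReal) hP2.le, ENNReal.ofReal_toReal hFt,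
      ENNReal.ofReal_toReal hDt]
  rw [e]
  have h3 := ENNReal.ofReal_le_ofReal hmain2
  rw [ofReal_norm] at h3
  exact h3
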